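/- Let α, β ∈ ℝ and let f : ℝ² → ℝ be a smooth function whose 4-jet at the origin is j⁴f(0) = xy² − x³ + αx³y + βy⁴ (a flat umbilic of class Π^f_1 whose cubic part has three real root directions). Let δ = f_xy² − f_xx·f_yy. Then δ(0) = 0, ∇δ(0) = (0,0), and the 2-jet of δ at the origin equals 4y² + 12x², so the Hessian of δ at 0 is positive definite and the origin is an isolated point of the parabolic set of f. Moreover, the asymptotic BDE of f is topologically equivalent at 0 to the star BDE y dy² − 2x dxdy − y dx² = 0, i.e. the BDE with coefficients (a,b,c) = (y, −x, −y). -/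

import Mathlib

open Asymptotics Filter Set

noncomputable section

/-- Partial derivative in the first variable (∂/∂x). -/
def pdx (f : ℝ × ℝ → ℝ) (p : ℝ × ℝ) : ℝ := deriv (fun s => f (s, p.2)) p.1

/-- Partial derivative in the second variable (∂/∂y). -/
def pdy (f : ℝ × ℝ → ℝ) (p : ℝ × ℝ) : ℝ := deriv (fun s => f (p.1, s)) p.2

/-- f_xx -/
def fxx (f : ℝ × ℝ → ℝ) : ℝ × ℝ → ℝ := pdx (pdx f)
/-- f_xy -/
def fxy (f : ℝ × ℝ → ℝ) : ℝ × ℝ → ℝ := pdy (pdx f)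
/-- f_yy -/
def fyy (f : ℝ × ℝ → ℝ) : ℝ × ℝ → ℝ := pdy (pdy f)

/-- The discriminant δ = f_xy² − f_xx·f_yy of the asymptotic BDE of `f`. -/
def bdeDiscr (f : ℝ × ℝ → ℝ) : ℝ × ℝ → ℝ := fun p => (fxy f p) ^ 2 - fxx f p * fyy f p

/-- The BDE `a dy² + 2b dxdy + c dx² = 0`, regarded as the family of quadratic
forms `ω_p(v) = a(p)v₂² + 2b(p)v₁v₂ + c(p)v₁²`. -/
def BDE (a b c : ℝ × ℝ → ℝ) : (ℝ × ℝ) → (ℝ × ℝ) → ℝ :=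
  fun p v => a p * v.2 ^ 2 + 2 * b p * v.1 * v.2 + c p * v.1 ^ 2

/-- The asymptotic BDE `f_yy dy² + 2 f_xy dxdy + f_xx dx² = 0` of the surface `z = f(x,y)`. -/
def asymBDE (f : ℝ × ℝ → ℝ) : (ℝ × ℝ) → (ℝ × ℝ) → ℝ := BDE (fyy f) (fxy f) (fxx f)

/-- `j^k f(0) = P` : the degree-k Taylor polynomial of `f` at the origin is `P`,
i.e. `f − P = o(‖(x,y)‖^k)` as `(x,y) → 0`. -/
def HasJetAt0 (f P : ℝ × ℝ → ℝ) (k : ℕ) : Prop :=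
  (fun p => f p - P p) =o[nhds (0 : ℝ × ℝ)] fun p => ‖p‖ ^ k

/-- `γ` is an integral curve of the BDE `ω` on the open interval `I`:
`γ` is C¹ on `I` with nowhere-vanishing derivative annihilating `ω`. -/
def IsIntegralCurveOnBDE (ω : (ℝ × ℝ) → (ℝ × ℝ) → ℝ) (γ : ℝ → ℝ × ℝ) (I : Set ℝ) : Prop :=
  (∃ a b : ℝ, I = Set.Ioo a b) ∧
  ∃ dγ : ℝ → ℝ × ℝ, ContinuousOn dγ I ∧
    ∀ t ∈ I, HasDerivAt γ (dγ t) t ∧ dγ t ≠ 0 ∧ ω (γ t) (dγ t) = 0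

/-- Topological equivalence of two BDEs at the origin: a local homeomorphism
fixing `0` sending integral curves of one to integral curves of the other. -/
def TopEquivAt0 (ω Ω : (ℝ × ℝ) → (ℝ × ℝ) → ℝ) : Prop :=
  ∃ (U V : Set (ℝ × ℝ)) (h hinv : ℝ × ℝ → ℝ × ℝ),
    IsOpen U ∧ IsOpen V ∧ (0 : ℝ × ℝ) ∈ U ∧ (0 : ℝ × ℝ) ∈ V ∧ h 0 = 0 ∧
    ContinuousOn h U ∧ ContinuousOn hinv V ∧
    Set.BijOn h U V ∧ Set.InvOn hinv h U V ∧
    (∀ γ I, IsIntegralCurveOnBDE ω γ I → Set.MapsTo γ I U →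
      ∃ σ J, IsIntegralCurveOnBDE Ω σ J ∧ h '' (γ '' I) = σ '' J) ∧
    (∀ σ J, IsIntegralCurveOnBDE Ω σ J → Set.MapsTo σ J V →
      ∃ γ I, IsIntegralCurveOnBDE ω γ I ∧ hinv '' (σ '' J) = γ '' I)

/-- Smooth equivalence of two BDEs at the origin: a local C^∞ diffeomorphism `h`
fixing `0` pulling one family of quadratic forms back to a nonvanishing multiple
of the other. -/
def SmoothEquivAt0 (ω Ω : (ℝ × ℝ) → (ℝ × ℝ) → ℝ) : Prop :=
  ∃ (U V : Set (ℝ × ℝ)) (h hinv : ℝ × ℝ → ℝ × ℝ) (ρ : ℝ × ℝ → ℝ),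
    IsOpen U ∧ IsOpen V ∧ (0 : ℝ × ℝ) ∈ U ∧ (0 : ℝ × ℝ) ∈ V ∧ h 0 = 0 ∧
    ContDiffOn ℝ (⊤ : ℕ∞) h U ∧ ContDiffOn ℝ (⊤ : ℕ∞) hinv V ∧
    Set.BijOn h U V ∧ Set.InvOn hinv h U V ∧
    ContDiffOn ℝ (⊤ : ℕ∞) ρ U ∧ (∀ p ∈ U, ρ p ≠ 0) ∧
    (∀ p ∈ U, ∀ v : ℝ × ℝ, Ω (h p) (fderiv ℝ h p v) = ρ p * ω p v)

/-- Fiber topological equivalence at `0` of two 2-parameter families of BDEs: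
a homeomorphism `φ` of parameter spaces (onto its image), fixing `0`, such that
corresponding members of the families are topologically equivalent at `0`. -/
def FiberTopEquivAt0 (ω Ω : (ℝ × ℝ) → (ℝ × ℝ) → (ℝ × ℝ) → ℝ) : Prop :=
  ∃ (W : Set (ℝ × ℝ)) (φ ψ : ℝ × ℝ → ℝ × ℝ),
    W ∈ nhds (0 : ℝ × ℝ) ∧ φ 0 = 0 ∧
    ContinuousOn φ W ∧ ContinuousOn ψ (φ '' W) ∧
    Set.InvOn ψ φ W (φ '' W) ∧
    ∀ q ∈ W, TopEquivAt0 (ω q) (Ω (φ q))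

/-!
Only the cubic part `xy² - x³` matters. In a suitable linear complex coordinate the asymptotic BDE
is `Im (z dz²) = Re (κ dz²) + l |dz|²` with `κ`, `l` vanishing to first order at `0`, while the star
BDE is `Im (z dz²) = 0`. In the chart `w = z ^ (3/2)` of a sector of opening `2π / 3` around a
separatrix, the star becomes the grid of horizontal and vertical lines, and the perturbed BDE a grid
whose two families have slopes `A` and `B` that are Lipschitz in `z` and vanish at `0`. The six
sectors obtained by rotating by `π / 3` overlap, and each rotation exchanges the two families.

The Lipschitz bound makes the leaf through every point unique up to the imaginary axis of the chart,
so the height at which a leaf meets that axis is a first integral. Moving each point to the crossing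
of the lines determined by its two leaves is a bi-Lipschitz perturbation of the identity, hence a
homeomorphism, and it fits together across the sectors because the correction of each sector
vanishes on the sector's boundary. It carries the integral curves of the perturbed BDE to those of
the star.
-/

namespace StarBDE

/-! ### The sixth root of unity and the chart `z ↦ z ^ (3/2)` -/

/-- The primitive sixth root of unity `exp (π i / 3)`; multiplication by it permutes the six
sectors of the star and exchanges the two families of curves. -/
def ζ : ℂ := ⟨1 / 2, √3 / 2⟩

lemma sqrt_three_mul_self : √3 * √3 = 3 := Real.mul_self_sqrt (by norm_num)

lemma ζ_cube : ζ ^ 3 = -1 := by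
  apply Complex.ext <;> simp [ζ, pow_succ]
  · nlinarith [sqrt_three_mul_self]
  · linear_combination (-√3 / 8) * sqrt_three_mul_self

lemma ζ_pow_six : ζ ^ 6 = 1 := by rw [pow_mul ζ 3 2, ζ_cube]; norm_num

lemma ζ_ne_zero : ζ ≠ 0 := fun h => by simpa [h] using ζ_cube

lemma norm_ζ : ‖ζ‖ = 1 := Complex.norm_eq_one_of_pow_eq_one ζ_pow_six (by norm_num)

lemma ζ_inv : ζ⁻¹ = ⟨1 / 2, -(√3 / 2)⟩ := by
  refine inv_eq_of_mul_eq_one_left (Complex.ext ?_ ?_) <;> simp [ζ]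
  · nlinarith [sqrt_three_mul_self]
  · ring

lemma ζ_inv_cube : ζ⁻¹ ^ 3 = -1 := by rw [inv_pow, ζ_cube]; norm_num

lemma ζ_inv_pow_six : ζ⁻¹ ^ 6 = 1 := by rw [inv_pow, ζ_pow_six, inv_one]

lemma norm_ζ_inv : ‖ζ⁻¹‖ = 1 := by rw [norm_inv, norm_ζ, inv_one]

lemma norm_ζ_inv_pow_mul (j : ℕ) (z : ℂ) : ‖ζ⁻¹ ^ j * z‖ = ‖z‖ := by
  rw [norm_mul, norm_pow, norm_ζ_inv, one_pow, one_mul]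

lemma ζ_pow_mul_ζ_inv_pow_mul (j : ℕ) (z : ℂ) : ζ ^ j * (ζ⁻¹ ^ j * z) = z := by
  rw [inv_pow, mul_inv_cancel_left₀ (pow_ne_zero j ζ_ne_zero)]

lemma ζ_mul_ζ_inv_mul (z : ℂ) : ζ * (ζ⁻¹ * z) = z := mul_inv_cancel_left₀ ζ_ne_zero z

lemma ζ_inv_mul_ζ_mul (z : ℂ) : ζ⁻¹ * (ζ * z) = z := inv_mul_cancel_left₀ ζ_ne_zero z

lemma ζ_eq_exp : ζ = Complex.exp ((Real.pi / 3 : ℝ) * Complex.I) := by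
  rw [Complex.exp_mul_I, ← Complex.ofReal_cos, ← Complex.ofReal_sin, Real.cos_pi_div_three,
    Real.sin_pi_div_three]
  apply Complex.ext <;> simp [ζ]

/-- The chart `z ↦ z ^ (3/2)` (principal branch), which maps `sector` onto the closed right
half-plane and turns the quadratic differential `z dz²` into a multiple of `dw²`. -/
def chart (z : ℂ) : ℂ := z ^ ((3 / 2 : ℝ) : ℂ)

/-- The inverse `w ↦ w ^ (2/3)` (principal branch) of `chart`. -/
def chartInv (w : ℂ) : ℂ := w ^ ((2 / 3 : ℝ) : ℂ)

/-- The closed sector `|arg z| ≤ π / 3`. -/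
def sector : Set ℂ := {z | |z.im| ≤ √3 * z.re}

/-- The interior `|arg z| < π / 3` of `sector`, without the origin. -/
def openSector : Set ℂ := {z | |z.im| < √3 * z.re}

@[simp] lemma chart_zero : chart 0 = 0 := by simp [chart]

@[simp] lemma chartInv_zero : chartInv 0 = 0 := by simp [chartInv]

@[simp] lemma chartInv_one : chartInv 1 = 1 := by simp [chartInv]

lemma norm_chart (z : ℂ) : ‖chart z‖ = ‖z‖ ^ (3 / 2 : ℝ) := Complex.norm_cpow_real _ _

lemma norm_chartInv (w : ℂ) : ‖chartInv w‖ = ‖w‖ ^ (2 / 3 : ℝ) := Complex.norm_cpow_real _ _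

lemma chart_sq (z : ℂ) : chart z ^ 2 = z ^ 3 := by
  rw [chart, ← Complex.cpow_nat_mul, ← Complex.cpow_natCast z 3]
  congr 1
  push_cast
  norm_num

lemma chartInv_cube (w : ℂ) : chartInv w ^ 3 = w ^ 2 := by
  rw [chartInv, ← Complex.cpow_nat_mul, ← Complex.cpow_natCast w 2]
  congr 1
  push_cast
  norm_num

lemma norm_chart_sq (z : ℂ) : ‖chart z‖ ^ 2 = ‖z‖ ^ 3 := by rw [← norm_pow, chart_sq, norm_pow]

lemma chart_ne_zero {z : ℂ} (hz : z ≠ 0) : chart z ≠ 0 := fun h => by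
  simpa [h, hz] using (chart_sq z).symm

lemma chartInv_ne_zero {w : ℂ} (hw : w ≠ 0) : chartInv w ≠ 0 := fun h => by
  simpa [h, hw] using (chartInv_cube w).symm

lemma cpow_ofReal_cpow_ofReal {z : ℂ} {s t : ℝ} (hst : s * t = 1)
    (hlo : -Real.pi < z.arg * s) (hhi : z.arg * s ≤ Real.pi) :
    (z ^ (s : ℂ)) ^ (t : ℂ) = z := by
  have im_log : (Complex.log z * (s : ℂ)).im = z.arg * s := by
    rw [Complex.im_mul_ofReal, Complex.log_im]
  rw [← Complex.cpow_mul _ (im_log ▸ hlo) (im_log ▸ hhi), ← Complex.ofReal_mul, hst,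
    Complex.ofReal_one, Complex.cpow_one]

lemma chart_chartInv (w : ℂ) : chart (chartInv w) = w := by
  have hpi := Real.pi_pos
  apply cpow_ofReal_cpow_ofReal <;> linarith [Complex.neg_pi_lt_arg w, Complex.arg_le_pi w]

lemma chartInv_chart {z : ℂ} (hz : |z.arg| < 2 * Real.pi / 3) : chartInv (chart z) = z := by
  rw [abs_lt] at hz
  apply cpow_ofReal_cpow_ofReal <;> linarith

lemma chartInv_eq_exp {w : ℂ} (hw : w ≠ 0) :
    chartInv w = Complex.exp (Complex.log w * (2 / 3)) := by
  rw [chartInv, Complex.cpow_def_of_ne_zero hw]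
  push_cast
  rfl

lemma chartInv_mul {a b : ℂ} (ha : a ≠ 0) (hb : b ≠ 0)
    (harg : a.arg + b.arg ∈ Ioc (-Real.pi) Real.pi) :
    chartInv (a * b) = chartInv a * chartInv b := by
  rw [chartInv_eq_exp ha, chartInv_eq_exp hb, chartInv_eq_exp (mul_ne_zero ha hb),
    Complex.log_mul ha hb harg, ← Complex.exp_add, add_mul]

lemma chartInv_I : chartInv Complex.I = ζ := by
  rw [chartInv_eq_exp Complex.I_ne_zero, Complex.log_I, ζ_eq_exp]
  congr 1
  push_cast
  ring

lemma chartInv_neg_I : chartInv (-Complex.I) = ζ⁻¹ := by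
  rw [chartInv_eq_exp (neg_ne_zero.2 Complex.I_ne_zero), Complex.log_neg_I, ζ_eq_exp,
    ← Complex.exp_neg]
  congr 1
  push_cast
  ring

lemma chartInv_I_mul {w : ℂ} (hw : w.arg ≤ Real.pi / 2) :
    chartInv (Complex.I * w) = ζ * chartInv w := by
  rcases eq_or_ne w 0 with rfl | hne
  · simp
  have hlo := Complex.neg_pi_lt_arg w
  rw [chartInv_mul Complex.I_ne_zero hne, chartInv_I]
  rw [Complex.arg_I]
  constructor <;> linarith [Real.pi_pos]

lemma chartInv_neg_I_mul {w : ℂ} (hw : -(Real.pi / 2) < w.arg) :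
    chartInv (-Complex.I * w) = ζ⁻¹ * chartInv w := by
  rcases eq_or_ne w 0 with rfl | hne
  · simp
  have hhi := Complex.arg_le_pi w
  rw [chartInv_mul (neg_ne_zero.2 Complex.I_ne_zero) hne, chartInv_neg_I]
  rw [Complex.arg_neg_I]
  constructor <;> linarith [Real.pi_pos]

lemma arg_chartInv (w : ℂ) : (chartInv w).arg = 2 / 3 * w.arg := by
  rcases eq_or_ne w 0 with rfl | hw
  · simp
  have im_log : (Complex.log w * (2 / 3)).im = 2 / 3 * w.arg := by
    have cast_eq : (2 / 3 : ℂ) = ((2 / 3 : ℝ) : ℂ) := by push_cast; rfl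
    rw [cast_eq, Complex.im_mul_ofReal, Complex.log_im, mul_comm]
  rw [chartInv_eq_exp hw, Complex.arg_exp, im_log, (toIocMod_eq_self _).2]
  constructor <;> linarith [Complex.neg_pi_lt_arg w, Complex.arg_le_pi w, Real.pi_pos]

lemma mem_sector {z : ℂ} : z ∈ sector ↔ |z.im| ≤ √3 * z.re := Iff.rfl

lemma mem_openSector {z : ℂ} : z ∈ openSector ↔ |z.im| < √3 * z.re := Iff.rfl

lemma openSector_subset_sector : openSector ⊆ sector := fun _ hz =>
  mem_sector.2 (mem_openSector.1 hz).le

lemma isClosed_sector : IsClosed sector := isClosed_le (by fun_prop) (by fun_prop)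

lemma isOpen_openSector : IsOpen openSector := isOpen_lt (by fun_prop) (by fun_prop)

lemma re_nonneg_of_mem_sector {z : ℂ} (hz : z ∈ sector) : 0 ≤ z.re :=
  nonneg_of_mul_nonneg_right ((abs_nonneg _).trans hz) (by positivity)

lemma re_pos_of_mem_openSector {z : ℂ} (hz : z ∈ openSector) : 0 < z.re :=
  pos_of_mul_pos_right ((abs_nonneg _).trans_lt hz) (by positivity)

lemma re_pos_of_mem_sector {z : ℂ} (hz : z ∈ sector) (hz0 : z ≠ 0) : 0 < z.re := by
  refine (re_nonneg_of_mem_sector hz).lt_of_ne' fun hre => hz0 (Complex.ext hre ?_)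
  simpa [mem_sector, hre] using hz

lemma abs_im_cmp_iff_norm_cmp {z : ℂ} (hz : 0 ≤ z.re) :
    (|z.im| ≤ √3 * z.re ↔ ‖z‖ ≤ 2 * z.re) ∧ (|z.im| < √3 * z.re ↔ ‖z‖ < 2 * z.re) := by
  have hnorm : ‖z‖ ^ 2 = z.re ^ 2 + z.im ^ 2 := by rw [Complex.sq_norm, Complex.normSq_apply]; ring
  have hsqrt : (√3 * z.re) ^ 2 = 3 * z.re ^ 2 := by rw [mul_pow, Real.sq_sqrt (by norm_num)]
  have hs : 0 ≤ √3 * z.re := by positivity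
  constructor
  · rw [← sq_le_sq₀ (abs_nonneg _) hs, ← sq_le_sq₀ (norm_nonneg _) (by positivity), sq_abs]
    constructor <;> intro h <;> nlinarith
  · rw [← sq_lt_sq₀ (abs_nonneg _) hs, ← sq_lt_sq₀ (norm_nonneg _) (by positivity), sq_abs]
    constructor <;> intro h <;> nlinarith

lemma mem_sector_iff_norm_le {z : ℂ} : z ∈ sector ↔ ‖z‖ ≤ 2 * z.re :=
  ⟨fun h => (abs_im_cmp_iff_norm_cmp (re_nonneg_of_mem_sector h)).1.1 h,
    fun h => (abs_im_cmp_iff_norm_cmp (by linarith [norm_nonneg z])).1.2 h⟩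

lemma mem_openSector_iff_norm_lt {z : ℂ} : z ∈ openSector ↔ ‖z‖ < 2 * z.re :=
  ⟨fun h => (abs_im_cmp_iff_norm_cmp (re_pos_of_mem_openSector h).le).2.1 h,
    fun h => (abs_im_cmp_iff_norm_cmp (by linarith [norm_nonneg z])).2.2 h⟩

lemma mem_sector_iff_abs_arg_le {z : ℂ} : z ∈ sector ↔ |z.arg| ≤ Real.pi / 3 := by
  rcases eq_or_ne z 0 with rfl | hz0
  · simpa [mem_sector] using (by positivity : 0 ≤ Real.pi / 3)
  have hn : 0 < ‖z‖ := norm_pos_iff.2 hz0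
  calc z ∈ sector ↔ ‖z‖ * (1 / 2) ≤ ‖z‖ * Real.cos z.arg := by
        rw [mem_sector_iff_norm_le, Complex.norm_mul_cos_arg]
        constructor <;> intro h <;> linarith
    _ ↔ Real.cos (Real.pi / 3) ≤ Real.cos |z.arg| := by
        rw [mul_le_mul_iff_right₀ hn, Real.cos_abs, Real.cos_pi_div_three]
    _ ↔ |z.arg| ≤ Real.pi / 3 :=
        Real.strictAntiOn_cos.le_iff_ge ⟨by positivity, by linarith [Real.pi_pos]⟩
          ⟨abs_nonneg _, Complex.abs_arg_le_pi z⟩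

lemma chartInv_chart_of_mem_sector {z : ℂ} (hz : z ∈ sector) : chartInv (chart z) = z :=
  chartInv_chart (by linarith [mem_sector_iff_abs_arg_le.1 hz, Real.pi_pos])

lemma chartInv_mem_sector {w : ℂ} (hw : 0 ≤ w.re) : chartInv w ∈ sector := by
  have harg := Complex.abs_arg_le_pi_div_two_iff.2 hw
  rw [mem_sector_iff_abs_arg_le, arg_chartInv, abs_mul, abs_of_pos (by norm_num : (0 : ℝ) < 2 / 3)]
  linarith

lemma arg_chart_of_mem_sector {z : ℂ} (hz : z ∈ sector) : (chart z).arg = 3 / 2 * z.arg := by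
  have h := arg_chartInv (chart z)
  rw [chartInv_chart_of_mem_sector hz] at h
  linarith

lemma re_chart_nonneg {z : ℂ} (hz : z ∈ sector) : 0 ≤ (chart z).re := by
  rw [← Complex.abs_arg_le_pi_div_two_iff, arg_chart_of_mem_sector hz, abs_mul,
    abs_of_pos (by norm_num : (0 : ℝ) < 3 / 2)]
  linarith [mem_sector_iff_abs_arg_le.1 hz]

lemma ζ_inv_mul_mem_sector {z : ℂ} (hz : z ∈ sector) (him : 0 ≤ z.im) : ζ⁻¹ * z ∈ sector := by
  have h3 := sqrt_three_mul_self
  have hre := re_nonneg_of_mem_sector hz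
  have hs : 0 < √3 := by positivity
  rw [mem_sector, abs_le] at *
  simp only [ζ_inv, Complex.mul_im, Complex.mul_re]
  constructor <;> nlinarith

lemma ζ_mul_mem_sector {z : ℂ} (hz : z ∈ sector) (him : z.im ≤ 0) : ζ * z ∈ sector := by
  have h3 := sqrt_three_mul_self
  have hre := re_nonneg_of_mem_sector hz
  have hs : 0 < √3 := by positivity
  rw [mem_sector, abs_le] at *
  simp only [ζ, Complex.mul_im, Complex.mul_re]
  constructor <;> nlinarith

lemma chart_ζ_inv_mul {z : ℂ} (hz : z ∈ sector) (him : 0 ≤ z.im) :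
    chart (ζ⁻¹ * z) = -Complex.I * chart z := by
  have harg : -(Real.pi / 2) < (chart z).arg := by
    rw [arg_chart_of_mem_sector hz]
    linarith [Complex.arg_nonneg_iff.2 him, Real.pi_pos]
  rw [← chart_chartInv (-Complex.I * chart z), chartInv_neg_I_mul harg,
    chartInv_chart_of_mem_sector hz]

lemma chart_ζ_mul {z : ℂ} (hz : z ∈ sector) (him : z.im ≤ 0) :
    chart (ζ * z) = Complex.I * chart z := by
  have hnonpos : z.arg ≤ 0 := by
    rcases him.lt_or_eq with hlt | heq
    · exact (Complex.arg_neg_iff.2 hlt).le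
    · exact (Complex.arg_eq_zero_iff.2 ⟨re_nonneg_of_mem_sector hz, heq⟩).le
  have harg : (chart z).arg ≤ Real.pi / 2 := by
    rw [arg_chart_of_mem_sector hz]
    linarith [Real.pi_pos]
  rw [← chart_chartInv (Complex.I * chart z), chartInv_I_mul harg,
    chartInv_chart_of_mem_sector hz]

/-- The quantity `2 (Im z ^ (3/2))²`, written without reference to a branch: it is a first
integral of the horizontal family of the model on the whole plane. -/
def chartImSq (z : ℂ) : ℝ := ‖z‖ ^ 3 - (z ^ 3).re

/-- The quantity `2 (Re z ^ (3/2))²`, the counterpart of `chartImSq` for the vertical family. -/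
def chartReSq (z : ℂ) : ℝ := ‖z‖ ^ 3 + (z ^ 3).re

lemma two_mul_re_sq (w : ℂ) : 2 * w.re ^ 2 = ‖w‖ ^ 2 + (w ^ 2).re := by
  rw [Complex.sq_norm, Complex.normSq_apply, pow_two w, Complex.mul_re]
  ring

lemma two_mul_im_sq (w : ℂ) : 2 * w.im ^ 2 = ‖w‖ ^ 2 - (w ^ 2).re := by
  rw [Complex.sq_norm, Complex.normSq_apply, pow_two w, Complex.mul_re]
  ring

lemma two_mul_re_chart_sq (z : ℂ) : 2 * (chart z).re ^ 2 = chartReSq z := by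
  rw [two_mul_re_sq, norm_chart_sq, chart_sq, chartReSq]

lemma two_mul_im_chart_sq (z : ℂ) : 2 * (chart z).im ^ 2 = chartImSq z := by
  rw [two_mul_im_sq, norm_chart_sq, chart_sq, chartImSq]

lemma chartImSq_nonneg (z : ℂ) : 0 ≤ chartImSq z := by rw [← two_mul_im_chart_sq]; positivity

lemma chartImSq_add_chartReSq (z : ℂ) : chartImSq z + chartReSq z = 2 * ‖z‖ ^ 3 := by
  rw [chartImSq, chartReSq]
  ring

lemma chartImSq_ζ_mul (z : ℂ) : chartImSq (ζ * z) = chartReSq z := by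
  simp [chartImSq, chartReSq, mul_pow, ζ_cube, norm_ζ]

lemma chartImSq_ζ_inv_mul (z : ℂ) : chartImSq (ζ⁻¹ * z) = chartReSq z := by
  rw [chartImSq, chartReSq, mul_pow, ζ_inv_cube, norm_mul, norm_ζ_inv]
  simp

lemma chartReSq_ζ_inv_mul (z : ℂ) : chartReSq (ζ⁻¹ * z) = chartImSq z := by
  rw [← chartImSq_ζ_mul, ζ_mul_ζ_inv_mul]

lemma re_chart_eq_zero_of_norm_eq {z : ℂ} (hz : ‖z‖ = 2 * z.re) : (chart z).re = 0 := by
  have him : z.im ^ 2 = 3 * z.re ^ 2 := by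
    have h := Complex.sq_norm z
    rw [hz, Complex.normSq_apply] at h
    linarith
  have hzero : chartReSq z = 0 := by
    rw [chartReSq, hz]
    simp only [pow_succ, pow_zero, one_mul, Complex.mul_re, Complex.mul_im]
    linear_combination (-3 * z.re) * him
  have h := two_mul_re_chart_sq z
  rw [hzero] at h
  exact pow_eq_zero_iff two_ne_zero |>.1 (by linarith)

lemma mem_openSector_of_chartReSq_ne_zero {z : ℂ} (hz : z ∈ sector) (hne : chartReSq z ≠ 0) :
    z ∈ openSector := by
  refine mem_openSector_iff_norm_lt.2 ((mem_sector_iff_norm_le.1 hz).lt_of_ne fun heq => hne ?_)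
  rw [← two_mul_re_chart_sq, re_chart_eq_zero_of_norm_eq heq]
  ring

lemma im_eq_zero_of_chartImSq_eq_zero {z : ℂ} (hz : z ∈ sector) (h0 : chartImSq z = 0) :
    z.im = 0 := by
  have him : (chart z).im = 0 := by
    have h := two_mul_im_chart_sq z
    rw [h0] at h
    exact pow_eq_zero_iff two_ne_zero |>.1 (by linarith)
  have harg : (chart z).arg = 0 := Complex.arg_eq_zero_iff.2 ⟨re_chart_nonneg hz, him⟩
  rw [arg_chart_of_mem_sector hz] at harg
  exact (Complex.arg_eq_zero_iff.1 (by linarith)).2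

lemma hasDerivAt_chart {z : ℂ} (hz : z ∈ Complex.slitPlane) :
    HasDerivAt chart (3 / 2 * z ^ ((1 / 2 : ℝ) : ℂ)) z := by
  convert! (hasDerivAt_id z).cpow_const (c := ((3 / 2 : ℝ) : ℂ)) hz using 1
  push_cast
  norm_num

lemma hasDerivAt_chartInv {w : ℂ} (hw : w ∈ Complex.slitPlane) :
    HasDerivAt chartInv (2 / 3 * w ^ ((-1 / 3 : ℝ) : ℂ)) w := by
  convert! (hasDerivAt_id w).cpow_const (c := ((2 / 3 : ℝ) : ℂ)) hw using 1
  push_cast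
  norm_num

lemma cpow_half_sq (z : ℂ) : (z ^ ((1 / 2 : ℝ) : ℂ)) ^ 2 = z := by
  rw [← Complex.cpow_nat_mul]
  push_cast
  norm_num

lemma chart_deriv_mul_sq (z v : ℂ) :
    (3 / 2 * z ^ ((1 / 2 : ℝ) : ℂ) * v) ^ 2 = ((9 / 4 : ℝ) : ℂ) * (z * v ^ 2) := by
  rw [mul_pow, mul_pow, cpow_half_sq]
  push_cast
  ring

lemma chartInv_mul_cpow_sq {w : ℂ} (hw : w ≠ 0) :
    chartInv w * (w ^ ((-1 / 3 : ℝ) : ℂ)) ^ 2 = 1 := by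
  rw [chartInv, ← Complex.cpow_nat_mul, ← Complex.cpow_add _ _ hw]
  push_cast
  norm_num

lemma continuousAt_cpow_ofReal_zero {s : ℝ} (hs : 0 < s) :
    ContinuousAt (fun z : ℂ => z ^ (s : ℂ)) 0 := by
  have hlim : Tendsto (fun z : ℂ => ‖z‖ ^ s) (nhds 0) (nhds (‖(0 : ℂ)‖ ^ s)) :=
    continuous_norm.continuousAt.rpow_const (Or.inr hs.le)
  rw [ContinuousAt, Complex.zero_cpow (by exact_mod_cast hs.ne'),
    tendsto_zero_iff_norm_tendsto_zero]
  simpa only [Complex.norm_cpow_real, norm_zero, Real.zero_rpow hs.ne'] using hlim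

lemma mem_slitPlane_of_re_nonneg {z : ℂ} (hz : 0 ≤ z.re) (hz0 : z ≠ 0) :
    z ∈ Complex.slitPlane := by
  rw [Complex.mem_slitPlane_iff]
  by_contra! h
  exact hz0 (Complex.ext (h.1.antisymm hz) h.2)

lemma continuousAt_chart {z : ℂ} (hz : 0 ≤ z.re) : ContinuousAt chart z := by
  rcases eq_or_ne z 0 with rfl | hz0
  · exact continuousAt_cpow_ofReal_zero (by norm_num)
  · exact (hasDerivAt_chart (mem_slitPlane_of_re_nonneg hz hz0)).continuousAt

lemma continuousAt_chartInv {w : ℂ} (hw : 0 ≤ w.re) : ContinuousAt chartInv w := by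
  rcases eq_or_ne w 0 with rfl | hw0
  · exact continuousAt_cpow_ofReal_zero (by norm_num)
  · exact (hasDerivAt_chartInv (mem_slitPlane_of_re_nonneg hw hw0)).continuousAt

/-! ### Slope functions and the leaves they define in the chart -/

/-- A slope function: Lipschitz, vanishing at the origin and outside the ball of radius `R`, and
uniformly small. The leaves of the horizontal family have slope `A` in the chart. -/
structure IsSmallSlope (M R : ℝ) (A : ℂ → ℝ) : Prop where
  nonneg : 0 ≤ M
  pos : 0 < R
  small : M * R ≤ 1 / 1000
  lip : ∀ z z', |A z - A z'| ≤ M * ‖z - z'‖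
  zero : A 0 = 0
  out : ∀ z, R ≤ ‖z‖ → A z = 0

section Slope

variable {M R : ℝ} {A : ℂ → ℝ}

namespace IsSmallSlope

lemma mul_nonneg (g : IsSmallSlope M R A) : 0 ≤ M * R := _root_.mul_nonneg g.nonneg g.pos.le

lemma abs_le_mul_norm (g : IsSmallSlope M R A) (z : ℂ) : |A z| ≤ M * ‖z‖ := by
  simpa [g.zero] using g.lip z 0

lemma abs_le_mul (g : IsSmallSlope M R A) (z : ℂ) : |A z| ≤ M * R := by
  rcases le_total R ‖z‖ with h | h
  · rw [g.out z h, abs_zero]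
    exact g.mul_nonneg
  · exact (g.abs_le_mul_norm z).trans (mul_le_mul_of_nonneg_left h g.nonneg)

lemma continuous (g : IsSmallSlope M R A) : Continuous A := by
  have hlip : LipschitzWith (Real.toNNReal M) A := .of_dist_le_mul fun x y => by
    rw [Real.dist_eq, dist_eq_norm, Real.coe_toNNReal _ g.nonneg]
    exact g.lip x y
  exact hlip.continuous

end IsSmallSlope

lemma continuous_complex_mk : Continuous fun p : ℝ × ℝ => (⟨p.1, p.2⟩ : ℂ) :=
  Complex.equivRealProdCLM.symm.continuous

lemma hasDerivAt_complex_mk_const (u v : ℝ) :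
    HasDerivAt (fun v : ℝ => (⟨u, v⟩ : ℂ)) Complex.I v := by
  simpa [← Complex.mk_eq_add_mul_I] using
    ((Complex.ofRealCLM.hasDerivAt (x := v)).mul_const Complex.I).const_add (u : ℂ)

lemma le_norm_complex_mk (u v : ℝ) : u ≤ ‖(⟨u, v⟩ : ℂ)‖ :=
  Complex.re_le_norm (⟨u, v⟩ : ℂ)

lemma norm_chartInv_sub_le {u v v' : ℝ} (hu : 0 < u) :
    ‖chartInv ⟨u, v⟩ - chartInv ⟨u, v'⟩‖ ≤ 2 / 3 * u ^ (-1 / 3 : ℝ) * |v - v'| := by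
  have hderiv (x : ℝ) : HasDerivAt (fun v : ℝ => chartInv ⟨u, v⟩)
      (2 / 3 * (⟨u, x⟩ : ℂ) ^ ((-1 / 3 : ℝ) : ℂ) * Complex.I) x :=
    (hasDerivAt_chartInv (Or.inl hu)).comp x (hasDerivAt_complex_mk_const u x)
  have hbound (x : ℝ) : ‖2 / 3 * (⟨u, x⟩ : ℂ) ^ ((-1 / 3 : ℝ) : ℂ) * Complex.I‖
      ≤ 2 / 3 * u ^ (-1 / 3 : ℝ) := by
    rw [norm_mul, norm_mul, Complex.norm_I, mul_one, Complex.norm_cpow_real, norm_div,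
      Complex.norm_ofNat, Complex.norm_ofNat]
    exact mul_le_mul_of_nonneg_left
      (Real.rpow_le_rpow_of_nonpos hu (le_norm_complex_mk u x) (by norm_num)) (by norm_num)
  exact convex_univ.norm_image_sub_le_of_norm_hasDerivWithin_le
    (fun x _ => (hderiv x).hasDerivWithinAt) (fun x _ => hbound x) (mem_univ v') (mem_univ v)

namespace IsSmallSlope

lemma abs_chartInv_sub_le (g : IsSmallSlope M R A) {u v v' : ℝ} (hu : 0 < u) :
    |A (chartInv ⟨u, v⟩) - A (chartInv ⟨u, v'⟩)|
      ≤ M * (2 / 3 * u ^ (-1 / 3 : ℝ)) * |v - v'| := by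
  rw [mul_assoc]
  exact (g.lip _ _).trans (mul_le_mul_of_nonneg_left (norm_chartInv_sub_le hu) g.nonneg)

lemma chartInv_eq_zero (g : IsSmallSlope M R A) {u v : ℝ} (hu : 0 ≤ u)
    (h : R ≤ u ^ (2 / 3 : ℝ)) : A (chartInv ⟨u, v⟩) = 0 := by
  refine g.out _ (h.trans ?_)
  rw [norm_chartInv]
  exact Real.rpow_le_rpow hu (le_norm_complex_mk u v) (by norm_num)

lemma continuousAt_chartInv (g : IsSmallSlope M R A) {u v : ℝ} (hu : 0 ≤ u) :
    ContinuousAt (fun p : ℝ × ℝ => A (chartInv ⟨p.1, p.2⟩)) (u, v) :=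
  g.continuous.continuousAt.comp
    (ContinuousAt.comp (f := fun p : ℝ × ℝ => (⟨p.1, p.2⟩ : ℂ)) (g := chartInv)
      (StarBDE.continuousAt_chartInv hu) continuous_complex_mk.continuousAt)

end IsSmallSlope

/-- A leaf of the horizontal family, written in the chart as a graph `v = ψ u` over `u ≥ 0`. -/
structure IsLeaf (A : ℂ → ℝ) (ψ : ℝ → ℝ) : Prop where
  cont : ContinuousOn ψ (Ici 0)
  der : ∀ u, 0 < u → HasDerivAt ψ (A (chartInv ⟨u, ψ u⟩)) u

lemma IsLeaf.hasDerivWithinAt (g : IsSmallSlope M R A) {ψ : ℝ → ℝ} (h : IsLeaf A ψ) {u : ℝ}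
    (hu : 0 ≤ u) : HasDerivWithinAt ψ (A (chartInv ⟨u, ψ u⟩)) (Ici 0) u := by
  rcases hu.lt_or_eq with hpos | rfl
  · exact (h.der u hpos).hasDerivWithinAt
  have hψ : ContinuousWithinAt ψ (Ioi 0) 0 := (h.cont 0 self_mem_Ici).mono Ioi_subset_Ici_self
  have hslope : Tendsto (fun x => A (chartInv ⟨x, ψ x⟩)) (nhdsWithin 0 (Ioi 0))
      (nhds (A (chartInv ⟨0, ψ 0⟩))) :=
    (g.continuousAt_chartInv (v := ψ 0) le_rfl).tendsto.comp
      (Tendsto.prodMk_nhds (tendsto_nhdsWithin_of_tendsto_nhds tendsto_id) hψ)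
  refine hasDerivWithinAt_Ici_of_tendsto_deriv (s := Ioi 0)
    (fun x hx => (h.der x hx).differentiableAt.differentiableWithinAt) hψ self_mem_nhdsWithin
    (hslope.congr' ?_)
  filter_upwards [self_mem_nhdsWithin] with x hx
  exact (h.der x hx).deriv.symm

lemma cube_rpow_neg_third {s : ℝ} (hs : 0 ≤ s) : (s ^ 3) ^ (-1 / 3 : ℝ) = s⁻¹ := by
  rw [← Real.rpow_natCast, ← Real.rpow_mul hs, ← Real.rpow_neg_one]
  norm_num

lemma cube_rpow_two_thirds {s : ℝ} (hs : 0 ≤ s) : (s ^ 3) ^ (2 / 3 : ℝ) = s ^ 2 := by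
  rw [← Real.rpow_natCast, ← Real.rpow_mul hs, ← Real.rpow_natCast]
  norm_num

lemma rpow_third_cube {u : ℝ} (hu : 0 ≤ u) : (u ^ (1 / 3 : ℝ)) ^ 3 = u := by
  rw [← Real.rpow_natCast, ← Real.rpow_mul hu]
  norm_num

lemma rpow_third_sq {u : ℝ} (hu : 0 ≤ u) : (u ^ (1 / 3 : ℝ)) ^ 2 = u ^ (2 / 3 : ℝ) := by
  rw [← Real.rpow_natCast, ← Real.rpow_mul hu]
  norm_num

lemma IsSmallSlope.abs_cubed_time_sub_le (g : IsSmallSlope M R A) {s : ℝ} (hs : 0 ≤ s)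
    (x y : ℝ) :
    |3 * s ^ 2 * A (chartInv ⟨s ^ 3, x⟩) - 3 * s ^ 2 * A (chartInv ⟨s ^ 3, y⟩)|
      ≤ 2 * M * s * |x - y| := by
  rcases hs.eq_or_lt with rfl | hpos
  · simp
  have hlip := g.abs_chartInv_sub_le (u := s ^ 3) (v := x) (v' := y) (by positivity)
  rw [cube_rpow_neg_third hs] at hlip
  rw [← mul_sub, abs_mul, abs_of_nonneg (by positivity : 0 ≤ 3 * s ^ 2)]
  calc 3 * s ^ 2 * |A (chartInv ⟨s ^ 3, x⟩) - A (chartInv ⟨s ^ 3, y⟩)|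
      ≤ 3 * s ^ 2 * (M * (2 / 3 * s⁻¹) * |x - y|) := by gcongr
    _ = 2 * M * s * |x - y| := by field_simp

/-- The right-hand side `A (chartInv ⟨u, v⟩)` is Lipschitz in `v` with constant of order
`u ^ (-1/3)`; substituting `u = s ^ 3` makes that constant bounded, so that Picard–Lindelöf
applies up to `u = 0`. -/
lemma exists_leaf_cubed_time (g : IsSmallSlope M R A) {S s₀ : ℝ} (hs₀ : 0 ≤ s₀) (hS : s₀ ≤ S)
    (v₀ : ℝ) :
    ∃ Ψ : ℝ → ℝ, Ψ s₀ = v₀ ∧ ∀ s ∈ Icc 0 S,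
      HasDerivWithinAt Ψ (3 * s ^ 2 * A (chartInv ⟨s ^ 3, Ψ s⟩)) (Icc 0 S) s := by
  have hS0 : 0 ≤ S := hs₀.trans hS
  have hMR := g.mul_nonneg
  have hM := g.nonneg
  let L : NNReal := ⟨3 * S ^ 2 * (M * R), by positivity⟩
  let K : NNReal := ⟨2 * M * S, by positivity⟩
  let a : NNReal := ⟨3 * S ^ 2 * (M * R) * S, by positivity⟩
  have picard : IsPicardLindelof (fun s v => 3 * s ^ 2 * A (chartInv ⟨s ^ 3, v⟩))
      (tmin := 0) (tmax := S) ⟨s₀, hs₀, hS⟩ v₀ a 0 L K :=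
    { lipschitzOnWith := fun s hs => .of_dist_le_mul fun x _ y _ =>
        (g.abs_cubed_time_sub_le hs.1 x y).trans
          (mul_le_mul_of_nonneg_right (mul_le_mul_of_nonneg_left hs.2 (by positivity))
            (abs_nonneg _))
      continuousOn := fun x _ s hs => ContinuousAt.continuousWithinAt <|
        ContinuousAt.mul (by fun_prop) <|
          (g.continuousAt_chartInv (v := x) (pow_nonneg hs.1 3)).comp
            (f := fun s : ℝ => (s ^ 3, x)) (by fun_prop)
      norm_le := fun s hs x _ => by
        have hA := g.abs_le_mul (chartInv ⟨s ^ 3, x⟩)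
        have hs0 := hs.1
        rw [Real.norm_eq_abs, abs_mul, abs_of_nonneg (by positivity : 0 ≤ 3 * s ^ 2)]
        change _ ≤ 3 * S ^ 2 * (M * R)
        gcongr
        exact hs.2
      mul_max_le := by
        change 3 * S ^ 2 * (M * R) * max (S - s₀) (s₀ - 0) ≤ 3 * S ^ 2 * (M * R) * S - 0
        rw [sub_zero, sub_zero]
        gcongr
        exact max_le (by linarith) hS }
  exact picard.exists_eq_forall_mem_Icc_hasDerivWithinAt₀

lemma IsSmallSlope.cubed_time_eq_zero (g : IsSmallSlope M R A) {s : ℝ} (hs : √R ≤ s) (v : ℝ) :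
    A (chartInv ⟨s ^ 3, v⟩) = 0 := by
  have hs0 : 0 ≤ s := (Real.sqrt_nonneg R).trans hs
  refine g.chartInv_eq_zero (by positivity) ?_
  rw [cube_rpow_two_thirds hs0]
  exact (Real.sqrt_le_left hs0).1 hs

lemma cubed_time_eq_const (g : IsSmallSlope M R A) {S : ℝ} {Ψ : ℝ → ℝ}
    (hΨ : ∀ s ∈ Icc 0 S,
      HasDerivWithinAt Ψ (3 * s ^ 2 * A (chartInv ⟨s ^ 3, Ψ s⟩)) (Icc 0 S) s) :
    ∀ s ∈ Icc (√R) S, Ψ s = Ψ (√R) := by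
  have hR := Real.sqrt_nonneg R
  refine constant_of_has_deriv_right_zero
    (fun s hs => ((hΨ s ⟨hR.trans hs.1, hs.2⟩).continuousWithinAt).mono
      (Icc_subset_Icc_left hR)) fun s hs => ?_
  have hderiv := hΨ s ⟨hR.trans hs.1, hs.2.le⟩
  rw [g.cubed_time_eq_zero hs.1, mul_zero] at hderiv
  exact (hderiv.mono (Icc_subset_Icc_left (hR.trans hs.1))).mono_of_mem_nhdsWithin
    (Icc_mem_nhdsGE hs.2)

lemma hasDerivAt_comp_rpow_third {Ψ : ℝ → ℝ} {u c : ℝ} (hu : 0 < u)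
    (hΨ : HasDerivAt Ψ (3 * (u ^ (1 / 3 : ℝ)) ^ 2 * c) (u ^ (1 / 3 : ℝ))) :
    HasDerivAt (fun u => Ψ (u ^ (1 / 3 : ℝ))) c u := by
  have hroot : HasDerivAt (fun u : ℝ => u ^ (1 / 3 : ℝ)) (1 / 3 * u ^ ((1 / 3 : ℝ) - 1)) u :=
    Real.hasDerivAt_rpow_const (Or.inl hu.ne')
  have hcancel : (u ^ (1 / 3 : ℝ)) ^ 2 * u ^ ((1 / 3 : ℝ) - 1) = 1 := by
    rw [rpow_third_sq hu.le, ← Real.rpow_add hu]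
    norm_num
  convert! hΨ.comp u hroot using 1
  linear_combination (-c) * hcancel

lemma exists_isLeaf (g : IsSmallSlope M R A) {u₀ : ℝ} (hu₀ : 0 ≤ u₀) (v₀ : ℝ) :
    ∃ ψ, IsLeaf A ψ ∧ ψ u₀ = v₀ := by
  set s₀ := u₀ ^ (1 / 3 : ℝ)
  set S := max (√R) s₀ + 1
  have hRS : √R < S := (le_max_left _ _).trans_lt (lt_add_one _)
  have hsS : s₀ < S := (le_max_right _ _).trans_lt (lt_add_one _)
  obtain ⟨Ψ, hΨ0, hΨ⟩ := exists_leaf_cubed_time g (by positivity) hsS.le v₀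
  have hroot : Continuous fun u : ℝ => u ^ (1 / 3 : ℝ) :=
    Real.continuous_rpow_const (by norm_num)
  refine ⟨fun u => Ψ (min (u ^ (1 / 3 : ℝ)) S), ⟨?_, fun u hu => ?_⟩, ?_⟩
  · refine ContinuousOn.comp (fun s hs => (hΨ s hs).continuousWithinAt)
      (hroot.min continuous_const).continuousOn fun u hu => ?_
    exact ⟨le_min (Real.rpow_nonneg hu _) ((Real.sqrt_nonneg R).trans hRS.le), min_le_right _ _⟩
  · have hpos : 0 < u ^ (1 / 3 : ℝ) := by positivity
    rcases lt_or_ge (u ^ (1 / 3 : ℝ)) S with hlt | hge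
    · have hderiv := (hΨ _ ⟨hpos.le, hlt.le⟩).hasDerivAt (Icc_mem_nhds hpos hlt)
      rw [rpow_third_cube hu.le] at hderiv
      rw [min_eq_left hlt.le]
      refine (hasDerivAt_comp_rpow_third hu hderiv).congr_of_eventuallyEq ?_
      filter_upwards [hroot.continuousAt.eventually_lt continuousAt_const hlt] with x hx
      rw [min_eq_left (le_of_lt hx)]
    · have hR : √R < u ^ (1 / 3 : ℝ) := hRS.trans_le hge
      have hzero := g.cubed_time_eq_zero hR.le (Ψ (min (u ^ (1 / 3 : ℝ)) S))
      rw [rpow_third_cube hu.le] at hzero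
      rw [hzero]
      refine (hasDerivAt_const u (Ψ (√R))).congr_of_eventuallyEq ?_
      filter_upwards [continuousAt_const.eventually_lt hroot.continuousAt hR] with x hx
      exact cubed_time_eq_const g hΨ _ ⟨le_min (le_of_lt hx) hRS.le, min_le_right _ _⟩
  · change Ψ (min s₀ S) = v₀
    rw [min_eq_left hsS.le, hΨ0]

lemma antitoneOn_sub_rpow_two_thirds {f f' : ℝ → ℝ} {C U : ℝ} (hf : ContinuousOn f (Ici 0))
    (hd : ∀ u, 0 < u → HasDerivAt f (f' u) u)
    (hb : ∀ u, 0 < u → u < U → f' u ≤ C * (2 / 3 * u ^ (-1 / 3 : ℝ))) :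
    AntitoneOn (fun u => f u - C * u ^ (2 / 3 : ℝ)) (Icc 0 U) := by
  have hder (u : ℝ) (hu : 0 < u) : HasDerivAt (fun u => f u - C * u ^ (2 / 3 : ℝ))
      (f' u - C * (2 / 3 * u ^ (-1 / 3 : ℝ))) u := by
    have hpow := Real.hasDerivAt_rpow_const (x := u) (p := 2 / 3) (Or.inl hu.ne')
    rw [show (2 / 3 : ℝ) - 1 = -1 / 3 by norm_num] at hpow
    exact (hd u hu).sub (hpow.const_mul C)
  refine antitoneOn_of_deriv_nonpos (convex_Icc 0 U) ?_ ?_ ?_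
  · exact (hf.mono fun x hx => hx.1).sub
      (continuous_const.mul (Real.continuous_rpow_const (by norm_num))).continuousOn
  · intro u hu
    rw [interior_Icc] at hu
    exact (hder u hu.1).differentiableAt.differentiableWithinAt
  · intro u hu
    rw [interior_Icc] at hu
    rw [(hder u hu.1).deriv]
    linarith [hb u hu.1 hu.2]

lemma rpow_three_halves_rpow_two_thirds {R : ℝ} (hR : 0 ≤ R) :
    (R ^ (3 / 2 : ℝ)) ^ (2 / 3 : ℝ) = R := by
  rw [← Real.rpow_mul hR]
  norm_num

lemma abs_sub_le_of_abs_deriv_le {f f' : ℝ → ℝ} {C : ℝ} (hR : 0 ≤ R) (hC : 0 ≤ C)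
    (hf : ContinuousOn f (Ici 0)) (hd : ∀ u, 0 < u → HasDerivAt f (f' u) u)
    (hb : ∀ u, 0 < u → u < R ^ (3 / 2 : ℝ) → |f' u| ≤ C * (2 / 3 * u ^ (-1 / 3 : ℝ)))
    {u u' : ℝ} (hu : u ∈ Icc 0 (R ^ (3 / 2 : ℝ))) (hu' : u' ∈ Icc 0 (R ^ (3 / 2 : ℝ))) :
    |f u - f u'| ≤ C * R := by
  wlog h : u ≤ u' generalizing u u'
  · rw [abs_sub_comm]
    exact this hu' hu (le_of_not_ge h)
  have hupper : f u' - C * u' ^ (2 / 3 : ℝ) ≤ f u - C * u ^ (2 / 3 : ℝ) :=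
    antitoneOn_sub_rpow_two_thirds hf hd (fun u hu hlt => (le_abs_self _).trans (hb u hu hlt))
      hu hu' h
  have hlower : -f u' - C * u' ^ (2 / 3 : ℝ) ≤ -f u - C * u ^ (2 / 3 : ℝ) :=
    antitoneOn_sub_rpow_two_thirds hf.neg (fun u hu => (hd u hu).neg)
      (fun u hu hlt => (neg_le_abs _).trans (hb u hu hlt)) hu hu' h
  have hu'R : u' ^ (2 / 3 : ℝ) ≤ R := by
    rw [← rpow_three_halves_rpow_two_thirds hR]
    exact Real.rpow_le_rpow hu'.1 hu'.2 (by norm_num)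
  have hCu' : C * u' ^ (2 / 3 : ℝ) ≤ C * R := mul_le_mul_of_nonneg_left hu'R hC
  have hCu : 0 ≤ C * u ^ (2 / 3 : ℝ) := mul_nonneg hC (Real.rpow_nonneg hu.1 _)
  rw [abs_le]
  constructor <;> linarith

lemma eq_apply_min_of_deriv_eq_zero {f f' : ℝ → ℝ} {U : ℝ} (hU : 0 < U)
    (hd : ∀ u, 0 < u → HasDerivAt f (f' u) u) (hb : ∀ u, U ≤ u → f' u = 0) (u : ℝ) :
    f u = f (min u U) := by
  rcases le_total u U with h | h
  · rw [min_eq_left h]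
  rw [min_eq_right h]
  refine constant_of_has_deriv_right_zero (a := U) (b := u)
    (fun x hx => (hd x (hU.trans_le hx.1)).continuousAt.continuousWithinAt)
    (fun x hx => ?_) u ⟨h, le_rfl⟩
  simpa only [hb x hx.1] using (hd x (hU.trans_le hx.1)).hasDerivWithinAt

namespace IsLeaf

variable {ψ χ : ℝ → ℝ} {u u' : ℝ}

lemma hasDerivAt_sub (hψ : IsLeaf A ψ) (hχ : IsLeaf A χ) {u : ℝ} (hu : 0 < u) :
    HasDerivAt (ψ - χ) (A (chartInv ⟨u, ψ u⟩) - A (chartInv ⟨u, χ u⟩)) u :=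
  (hψ.der u hu).sub (hχ.der u hu)

lemma sub_eq_apply_min (g : IsSmallSlope M R A) (hψ : IsLeaf A ψ) (hχ : IsLeaf A χ) (u : ℝ) :
    (ψ - χ) u = (ψ - χ) (min u (R ^ (3 / 2 : ℝ))) := by
  have hU : 0 < R ^ (3 / 2 : ℝ) := Real.rpow_pos_of_pos g.pos _
  refine eq_apply_min_of_deriv_eq_zero hU (fun u => hψ.hasDerivAt_sub hχ) (fun u hu => ?_) u
  have hR : R ≤ u ^ (2 / 3 : ℝ) := by
    rw [← rpow_three_halves_rpow_two_thirds g.pos.le]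
    exact Real.rpow_le_rpow hU.le hu (by norm_num)
  rw [g.chartInv_eq_zero (hU.le.trans hu) hR, g.chartInv_eq_zero (hU.le.trans hu) hR, sub_zero]

lemma abs_sub_sub_le_of_bound (g : IsSmallSlope M R A) (hψ : IsLeaf A ψ) (hχ : IsLeaf A χ)
    {D : ℝ} (hD : ∀ x ∈ Icc 0 (R ^ (3 / 2 : ℝ)), |(ψ - χ) x| ≤ D)
    (hu : u ∈ Icc 0 (R ^ (3 / 2 : ℝ))) (hu' : u' ∈ Icc 0 (R ^ (3 / 2 : ℝ))) :
    |(ψ - χ) u - (ψ - χ) u'| ≤ M * R * D := by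
  have hM := g.nonneg
  have hD0 : 0 ≤ D := (abs_nonneg _).trans (hD u hu)
  rw [mul_right_comm]
  refine abs_sub_le_of_abs_deriv_le g.pos.le (mul_nonneg hM hD0) (hψ.cont.sub hχ.cont)
    (fun x => hψ.hasDerivAt_sub hχ) (fun x hx hlt => ?_) hu hu'
  calc |A (chartInv ⟨x, ψ x⟩) - A (chartInv ⟨x, χ x⟩)|
      ≤ M * (2 / 3 * x ^ (-1 / 3 : ℝ)) * |ψ x - χ x| := g.abs_chartInv_sub_le hx
    _ ≤ M * (2 / 3 * x ^ (-1 / 3 : ℝ)) * D := by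
        gcongr
        exact hD x ⟨hx.le, hlt.le⟩
    _ = M * D * (2 / 3 * x ^ (-1 / 3 : ℝ)) := by ring

lemma abs_sub_sub_le (g : IsSmallSlope M R A) (hψ : IsLeaf A ψ) (hχ : IsLeaf A χ)
    (hu : 0 ≤ u) (hu' : 0 ≤ u') :
    |(ψ u - χ u) - (ψ u' - χ u')| ≤ 2 * (M * R) * |ψ u' - χ u'| := by
  set U := R ^ (3 / 2 : ℝ)
  have hU : 0 ≤ U := Real.rpow_nonneg g.pos.le _
  change |(ψ - χ) u - (ψ - χ) u'| ≤ 2 * (M * R) * |(ψ - χ) u'|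
  rw [hψ.sub_eq_apply_min g hχ u, hψ.sub_eq_apply_min g hχ u']
  set d := ψ - χ
  obtain ⟨m, hm, hmax⟩ := isCompact_Icc.exists_isMaxOn (nonempty_Icc.2 hU)
    (((hψ.cont.sub hχ.cont).mono Icc_subset_Ici_self).abs)
  have hvar {x y : ℝ} (hx : x ∈ Icc 0 U) (hy : y ∈ Icc 0 U) : |d x - d y| ≤ M * R * |d m| :=
    hψ.abs_sub_sub_le_of_bound g hχ (fun x hx => hmax hx) hx hy
  have hmem {x : ℝ} (hx : 0 ≤ x) : min x U ∈ Icc 0 U := ⟨le_min hx hU, min_le_right _ _⟩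
  have hdm : |d m| ≤ 2 * |d (min u' U)| := by
    have htri := abs_add_le (d (min u' U)) (d m - d (min u' U))
    rw [add_sub_cancel] at htri
    nlinarith [hvar hm (hmem hu'), g.small, abs_nonneg (d m)]
  calc |d (min u U) - d (min u' U)| ≤ M * R * |d m| := hvar (hmem hu) (hmem hu')
    _ ≤ M * R * (2 * |d (min u' U)|) := mul_le_mul_of_nonneg_left hdm g.mul_nonneg
    _ = 2 * (M * R) * |d (min u' U)| := by ring

lemma eq_of_eq (g : IsSmallSlope M R A) (hψ : IsLeaf A ψ) (hχ : IsLeaf A χ)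
    (hu : 0 ≤ u) (hu' : 0 ≤ u') (h : ψ u' = χ u') : ψ u = χ u := by
  have hdiff := hψ.abs_sub_sub_le g hχ hu hu'
  rw [h, sub_self, abs_zero, mul_zero, sub_zero] at hdiff
  exact sub_eq_zero.1 (abs_eq_zero.1 (le_antisymm hdiff (abs_nonneg _)))

lemma abs_sub_le_of_bound (hψ : IsLeaf A ψ) {C b : ℝ}
    (hC : ∀ u, 0 < u → u < b → |A (chartInv ⟨u, ψ u⟩)| ≤ C)
    (hu : u ∈ Icc 0 b) (hu' : u' ∈ Icc 0 b) : |ψ u - ψ u'| ≤ C * |u - u'| := by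
  wlog h : u' ≤ u generalizing u u'
  · rw [abs_sub_comm, abs_sub_comm u]
    exact this hu' hu (le_of_not_ge h)
  rcases h.lt_or_eq with hlt | rfl
  · obtain ⟨c, hc, hslope⟩ := exists_hasDerivAt_eq_slope ψ (fun u => A (chartInv ⟨u, ψ u⟩)) hlt
      (hψ.cont.mono fun x hx => hu'.1.trans hx.1) (fun x hx => hψ.der x (hu'.1.trans_lt hx.1))
    have hbound := hC c (hu'.1.trans_lt hc.1) (hc.2.trans_le hu.2)
    rwa [hslope, abs_div, div_le_iff₀ (abs_pos.2 (sub_pos.2 hlt).ne')] at hbound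
  · simp

lemma abs_sub_le (g : IsSmallSlope M R A) (hψ : IsLeaf A ψ) (hu : 0 ≤ u) (hu' : 0 ≤ u') :
    |ψ u - ψ u'| ≤ M * R * |u - u'| :=
  hψ.abs_sub_le_of_bound (b := max u u') (fun _ _ _ => g.abs_le_mul _)
    ⟨hu, le_max_left _ _⟩ ⟨hu', le_max_right _ _⟩

end IsLeaf

open Classical in
/-- The leaf through the point `w` of the closed right half-plane (the zero function if there is
none). -/
def leafThrough (A : ℂ → ℝ) (w : ℂ) : ℝ → ℝ :=
  if h : ∃ ψ, IsLeaf A ψ ∧ ψ w.re = w.im then h.choose else fun _ => 0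

/-- The height at which the leaf through `w` meets the imaginary axis: a first integral of the
horizontal family. -/
def leafHeight (A : ℂ → ℝ) (w : ℂ) : ℝ := leafThrough A w 0

/-- The vertical displacement that takes `w` to the height of its leaf. -/
def leafShift (A : ℂ → ℝ) (w : ℂ) : ℝ := leafHeight A w - w.im

lemma leafThrough_spec (g : IsSmallSlope M R A) {w : ℂ} (hw : 0 ≤ w.re) :
    IsLeaf A (leafThrough A w) ∧ leafThrough A w w.re = w.im := by
  have h := exists_isLeaf g hw w.im
  rw [leafThrough, dif_pos h]
  exact h.choose_spec

lemma IsLeaf.leafHeight_eq (g : IsSmallSlope M R A) {ψ : ℝ → ℝ} (h : IsLeaf A ψ) {u : ℝ}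
    (hu : 0 ≤ u) : leafHeight A ⟨u, ψ u⟩ = ψ 0 :=
  have hleaf := leafThrough_spec g (w := ⟨u, ψ u⟩) hu
  hleaf.1.eq_of_eq g h le_rfl hu hleaf.2

lemma leafHeight_of_re_eq_zero (g : IsSmallSlope M R A) {w : ℂ} (h : w.re = 0) :
    leafHeight A w = w.im := by
  have hleaf := (leafThrough_spec g (w := w) h.ge).2
  rwa [h] at hleaf

lemma IsLeaf.abs_leafHeight_sub_le (g : IsSmallSlope M R A) {ψ : ℝ → ℝ} (h : IsLeaf A ψ) {w : ℂ}
    (hw : 0 ≤ w.re) : |leafHeight A w - ψ 0| ≤ 2 * |w.im - ψ w.re| := by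
  obtain ⟨hleaf, heq⟩ := leafThrough_spec g hw
  have hdiff := hleaf.abs_sub_sub_le g h le_rfl hw
  rw [heq] at hdiff
  have htri := abs_add_le (w.im - ψ w.re) ((leafThrough A w 0 - ψ 0) - (w.im - ψ w.re))
  rw [add_sub_cancel] at htri
  rw [leafHeight]
  nlinarith [abs_nonneg (w.im - ψ w.re), g.small]

lemma abs_leafShift_le (g : IsSmallSlope M R A) {w : ℂ} (hw : 0 ≤ w.re) :
    |leafShift A w| ≤ M * R * w.re := by
  obtain ⟨hleaf, heq⟩ := leafThrough_spec g hw
  simpa [leafShift, leafHeight, heq, abs_of_nonneg hw] using hleaf.abs_sub_le g le_rfl hw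

lemma abs_leafShift_sub_le (g : IsSmallSlope M R A) {w w' : ℂ} (hw : 0 ≤ w.re)
    (hw' : 0 ≤ w'.re) : |leafShift A w - leafShift A w'| ≤ 4 * (M * R) * ‖w - w'‖ := by
  obtain ⟨hleaf, heq⟩ := leafThrough_spec g hw
  obtain ⟨hleaf', heq'⟩ := leafThrough_spec g hw'
  set ψ' := leafThrough A w'
  have hMR := g.mul_nonneg
  have hre : |w.re - w'.re| ≤ ‖w - w'‖ := by simpa using Complex.abs_re_le_norm (w - w')
  have him : |w.im - w'.im| ≤ ‖w - w'‖ := by simpa using Complex.abs_im_le_norm (w - w')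
  have hdiff := hleaf.abs_sub_sub_le g hleaf' le_rfl hw
  rw [heq] at hdiff
  have hrise' : |w'.im - ψ' w.re| ≤ M * R * ‖w - w'‖ := by
    rw [← heq', abs_sub_comm]
    exact (hleaf'.abs_sub_le g hw hw').trans (by gcongr)
  have hgap : |w.im - ψ' w.re| ≤ (1 + M * R) * ‖w - w'‖ := by
    have htri := abs_sub_le w.im w'.im (ψ' w.re)
    linarith
  calc |leafShift A w - leafShift A w'|
      = |((leafThrough A w 0 - ψ' 0) - (w.im - ψ' w.re)) + (w'.im - ψ' w.re)| := by
        simp only [leafShift, leafHeight, ψ']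
        ring_nf
    _ ≤ 2 * (M * R) * |w.im - ψ' w.re| + M * R * ‖w - w'‖ :=
        (abs_add_le _ _).trans (add_le_add hdiff hrise')
    _ ≤ 2 * (M * R) * ((1 + M * R) * ‖w - w'‖) + M * R * ‖w - w'‖ := by gcongr
    _ ≤ 4 * (M * R) * ‖w - w'‖ := by
        nlinarith [mul_nonneg hMR (norm_nonneg (w - w')), g.small]

lemma norm_leafThrough_le (g : IsSmallSlope M R A) {w : ℂ} {u : ℝ} (hu : 0 ≤ u)
    (huw : u ≤ w.re) : ‖(⟨u, leafThrough A w u⟩ : ℂ)‖ ≤ 3 * ‖w‖ := by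
  have hw : 0 ≤ w.re := hu.trans huw
  obtain ⟨hleaf, heq⟩ := leafThrough_spec g hw
  have hre := Complex.re_le_norm w
  have him := Complex.abs_im_le_norm w
  have hrise := hleaf.abs_sub_le g hu hw
  rw [heq] at hrise
  have hdist : |u - w.re| ≤ ‖w‖ := by
    rw [abs_le]
    constructor <;> linarith
  have htri := abs_add_le (leafThrough A w u - w.im) w.im
  rw [sub_add_cancel] at htri
  have hnorm := Complex.norm_le_abs_re_add_abs_im (⟨u, leafThrough A w u⟩ : ℂ)
  simp only [abs_of_nonneg hu] at hnorm
  nlinarith [norm_nonneg w, g.small, g.mul_nonneg]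

lemma abs_leafShift_le_rpow (g : IsSmallSlope M R A) {w : ℂ} (hw : 0 ≤ w.re) :
    |leafShift A w| ≤ M * (3 * ‖w‖) ^ (2 / 3 : ℝ) * ‖w‖ := by
  obtain ⟨hleaf, heq⟩ := leafThrough_spec g hw
  have hM := g.nonneg
  have hslope (u : ℝ) (hu : 0 < u) (huw : u < w.re) :
      |A (chartInv ⟨u, leafThrough A w u⟩)| ≤ M * (3 * ‖w‖) ^ (2 / 3 : ℝ) := by
    refine (g.abs_le_mul_norm _).trans ?_
    rw [norm_chartInv]
    gcongr
    exact norm_leafThrough_le g hu.le huw.le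
  have hrise := hleaf.abs_sub_le_of_bound hslope ⟨le_rfl, hw⟩ ⟨hw, le_rfl⟩
  rw [heq, zero_sub, abs_neg, abs_of_nonneg hw] at hrise
  exact hrise.trans (mul_le_mul_of_nonneg_left (Complex.re_le_norm w) (by positivity))

end Slope

/-! ### The straightening homeomorphism -/

section Straighten

variable {M R : ℝ} {A B : ℂ → ℝ}

open Classical in
/-- The relative correction `i · leafShift / chart`, supported in `sector`, that moves a point of
the sector along the vertical of the chart to the height of its leaf. -/
def sectorCorrection (A : ℂ → ℝ) (z : ℂ) : ℂ :=
  if z ∈ sector then Complex.I * (leafShift A (chart z) : ℂ) / chart z else 0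

@[simp] lemma sectorCorrection_zero (A : ℂ → ℝ) : sectorCorrection A 0 = 0 := by
  simp [sectorCorrection]

lemma sectorCorrection_of_notMem {z : ℂ} (h : z ∉ sector) : sectorCorrection A z = 0 := if_neg h

lemma sectorCorrection_of_mem {z : ℂ} (h : z ∈ sector) :
    sectorCorrection A z = Complex.I * (leafShift A (chart z) : ℂ) / chart z := if_pos h

lemma norm_sectorCorrection_of_mem {z : ℂ} (h : z ∈ sector) :
    ‖sectorCorrection A z‖ = |leafShift A (chart z)| / ‖chart z‖ := by
  rw [sectorCorrection_of_mem h]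
  simp

lemma norm_sectorCorrection_le (g : IsSmallSlope M R A) (z : ℂ) :
    ‖sectorCorrection A z‖ ≤ M * R := by
  by_cases h : z ∈ sector
  · rw [norm_sectorCorrection_of_mem h]
    refine div_le_of_le_mul₀ (norm_nonneg _) g.mul_nonneg ?_
    exact (abs_leafShift_le g (re_chart_nonneg h)).trans
      (mul_le_mul_of_nonneg_left (Complex.re_le_norm _) g.mul_nonneg)
  · rw [sectorCorrection_of_notMem h, norm_zero]
    exact g.mul_nonneg

lemma norm_sectorCorrection_le_mul_norm (g : IsSmallSlope M R A) (z : ℂ) :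
    ‖sectorCorrection A z‖ ≤ 3 * M * ‖z‖ := by
  have hM := g.nonneg
  by_cases h : z ∈ sector
  · rw [norm_sectorCorrection_of_mem h]
    refine div_le_of_le_mul₀ (norm_nonneg _) (by positivity) ?_
    have hthree : (3 : ℝ) ^ (2 / 3 : ℝ) ≤ 3 :=
      Real.rpow_le_self_of_one_le (by norm_num) (by norm_num)
    calc |leafShift A (chart z)| ≤ M * (3 * ‖chart z‖) ^ (2 / 3 : ℝ) * ‖chart z‖ :=
          abs_leafShift_le_rpow g (re_chart_nonneg h)
      _ = M * (3 ^ (2 / 3 : ℝ) * ‖z‖) * ‖chart z‖ := by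
          rw [Real.mul_rpow (by norm_num) (norm_nonneg _), norm_chart,
            rpow_three_halves_rpow_two_thirds (norm_nonneg _)]
      _ ≤ M * (3 * ‖z‖) * ‖chart z‖ := by gcongr
      _ = 3 * M * ‖z‖ * ‖chart z‖ := by ring
  · rw [sectorCorrection_of_notMem h, norm_zero]
    positivity

lemma sectorCorrection_of_norm_eq (g : IsSmallSlope M R A) {z : ℂ} (h : ‖z‖ = 2 * z.re) :
    sectorCorrection A z = 0 := by
  have hre := re_chart_eq_zero_of_norm_eq h
  rw [sectorCorrection_of_mem (mem_sector_iff_norm_le.2 h.le), leafShift,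
    leafHeight_of_re_eq_zero g hre]
  simp

lemma norm_chart_sub_le {r : ℝ} {z z' : ℂ} (h : 0 < z.re) (h' : 0 < z'.re) (hz : ‖z‖ ≤ r)
    (hz' : ‖z'‖ ≤ r) : ‖chart z - chart z'‖ ≤ 3 / 2 * r ^ (1 / 2 : ℝ) * ‖z - z'‖ := by
  have hconv : Convex ℝ ({z : ℂ | 0 < z.re} ∩ Metric.closedBall 0 r) :=
    (convex_halfSpace_re_gt 0).inter (convex_closedBall _ _)
  refine hconv.norm_image_sub_le_of_norm_hasDerivWithin_le
    (fun x hx => (hasDerivAt_chart (Or.inl hx.1)).hasDerivWithinAt) (fun x hx => ?_)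
    ⟨h', by simpa using hz'⟩ ⟨h, by simpa using hz⟩
  rw [norm_mul, Complex.norm_cpow_real, norm_div, Complex.norm_ofNat, Complex.norm_ofNat]
  exact mul_le_mul_of_nonneg_left (Real.rpow_le_rpow (norm_nonneg _)
    (mem_closedBall_zero_iff.1 hx.2) (by norm_num)) (by norm_num)

lemma norm_sectorCorrection_sub_le_chart (g : IsSmallSlope M R A) {z z' : ℂ} (h : z ∈ sector)
    (h' : z' ∈ sector) (h0 : z ≠ 0) (h0' : z' ≠ 0) :
    ‖sectorCorrection A z - sectorCorrection A z'‖
      ≤ 5 * (M * R) * ‖chart z - chart z'‖ / ‖chart z‖ := by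
  have hw := chart_ne_zero h0
  have hw' := chart_ne_zero h0'
  have hsplit : sectorCorrection A z - sectorCorrection A z'
      = Complex.I * ((leafShift A (chart z) - leafShift A (chart z') : ℝ) : ℂ) / chart z
        + sectorCorrection A z' * ((chart z' - chart z) / chart z) := by
    rw [sectorCorrection_of_mem h, sectorCorrection_of_mem h']
    push_cast
    field_simp
    ring
  have hshift := abs_leafShift_sub_le g (re_chart_nonneg h) (re_chart_nonneg h')
  have hcorr := norm_sectorCorrection_le g z'
  calc ‖sectorCorrection A z - sectorCorrection A z'‖
      ≤ |leafShift A (chart z) - leafShift A (chart z')| / ‖chart z‖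
        + ‖sectorCorrection A z'‖ * (‖chart z - chart z'‖ / ‖chart z‖) := by
        rw [hsplit]
        refine (norm_add_le _ _).trans_eq ?_
        rw [norm_mul (sectorCorrection A z'), norm_div, norm_div, norm_mul, Complex.norm_I, one_mul,
          Complex.norm_real, Real.norm_eq_abs, norm_sub_rev (chart z')]
    _ ≤ 4 * (M * R) * ‖chart z - chart z'‖ / ‖chart z‖
        + M * R * (‖chart z - chart z'‖ / ‖chart z‖) := by gcongr
    _ = 5 * (M * R) * ‖chart z - chart z'‖ / ‖chart z‖ := by ring

lemma norm_sectorCorrection_sub_mul_le_of_norm_le (g : IsSmallSlope M R A) {z z' : ℂ}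
    (h : z ∈ sector) (h' : z' ∈ sector) (h0 : z ≠ 0) (h0' : z' ≠ 0) (hle : ‖z'‖ ≤ ‖z‖) :
    ‖sectorCorrection A z - sectorCorrection A z'‖ * ‖z‖ ≤ 15 / 2 * (M * R) * ‖z - z'‖ := by
  have hMR := g.mul_nonneg
  have hz : 0 < ‖z‖ := norm_pos_iff.2 h0
  have hchart : ‖chart z‖ = ‖z‖ ^ (1 / 2 : ℝ) * ‖z‖ := by
    rw [norm_chart, ← Real.rpow_add_one hz.ne']
    norm_num
  have hlip := norm_chart_sub_le (re_pos_of_mem_sector h h0) (re_pos_of_mem_sector h' h0')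
    le_rfl hle
  calc ‖sectorCorrection A z - sectorCorrection A z'‖ * ‖z‖
      ≤ 5 * (M * R) * ‖chart z - chart z'‖ / ‖chart z‖ * ‖z‖ := by
        gcongr
        exact norm_sectorCorrection_sub_le_chart g h h' h0 h0'
    _ ≤ 5 * (M * R) * (3 / 2 * ‖z‖ ^ (1 / 2 : ℝ) * ‖z - z'‖) / ‖chart z‖ * ‖z‖ := by gcongr
    _ = 15 / 2 * (M * R) * ‖z - z'‖ := by
        rw [hchart]
        field_simp
        ring

lemma norm_sectorCorrection_sub_mul_le_of_mem (g : IsSmallSlope M R A) {z z' : ℂ}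
    (h : z ∈ sector) (h' : z' ∈ sector) :
    ‖sectorCorrection A z - sectorCorrection A z'‖ * ‖z‖ ≤ 15 / 2 * (M * R) * ‖z - z'‖ := by
  have hMR := g.mul_nonneg
  rcases eq_or_ne z 0 with rfl | h0
  · rw [norm_zero, mul_zero]
    positivity
  rcases eq_or_ne z' 0 with rfl | h0'
  · rw [sectorCorrection_zero, sub_zero, sub_zero]
    nlinarith [norm_nonneg z, norm_sectorCorrection_le g z]
  rcases le_total ‖z'‖ ‖z‖ with hle | hle
  · exact norm_sectorCorrection_sub_mul_le_of_norm_le g h h' h0 h0' hle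
  · rw [norm_sub_rev, norm_sub_rev z]
    exact (mul_le_mul_of_nonneg_left hle (norm_nonneg _)).trans
      (norm_sectorCorrection_sub_mul_le_of_norm_le g h' h h0' h0 hle)

lemma exists_norm_eq_two_mul_re {z z' : ℂ} (h : z ∈ sector) (h' : z' ∉ sector) :
    ∃ p : ℂ, ‖p‖ = 2 * p.re ∧ ‖z - p‖ ≤ ‖z - z'‖ := by
  have hline : Continuous fun t : ℝ => (AffineMap.lineMap z z' t : ℂ) :=
    AffineMap.lineMap_continuous
  have hcont : ContinuousOn (fun t : ℝ => ‖(AffineMap.lineMap z z' t : ℂ)‖ -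
      2 * (AffineMap.lineMap z z' t : ℂ).re) (Icc 0 1) := by fun_prop
  rw [mem_sector_iff_norm_le] at h h'
  obtain ⟨t, ht, hzero⟩ := intermediate_value_Icc zero_le_one hcont
    (show (0 : ℝ) ∈ _ by constructor <;> simp <;> linarith)
  refine ⟨AffineMap.lineMap z z' t, sub_eq_zero.1 hzero, ?_⟩
  rw [← dist_eq_norm, ← dist_eq_norm, dist_comm, dist_lineMap_left, Real.norm_eq_abs,
    abs_of_nonneg ht.1]
  exact mul_le_of_le_one_left dist_nonneg ht.2

lemma norm_sectorCorrection_mul_le_of_notMem (g : IsSmallSlope M R A) {z z' : ℂ}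
    (h : z ∈ sector) (h' : z' ∉ sector) :
    ‖sectorCorrection A z‖ * ‖z‖ ≤ 15 / 2 * (M * R) * ‖z - z'‖ := by
  have hMR := g.mul_nonneg
  obtain ⟨p, hp, hdist⟩ := exists_norm_eq_two_mul_re h h'
  have hlip := norm_sectorCorrection_sub_mul_le_of_mem g h (mem_sector_iff_norm_le.2 hp.le)
  rw [sectorCorrection_of_norm_eq g hp, sub_zero] at hlip
  exact hlip.trans (by gcongr)

lemma norm_sectorCorrection_sub_mul_le (g : IsSmallSlope M R A) (z z' : ℂ) :
    ‖sectorCorrection A z - sectorCorrection A z'‖ * ‖z‖ ≤ 9 * (M * R) * ‖z - z'‖ := by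
  have hnonneg := mul_nonneg g.mul_nonneg (norm_nonneg (z - z'))
  by_cases h : z ∈ sector <;> by_cases h' : z' ∈ sector
  · linarith [norm_sectorCorrection_sub_mul_le_of_mem g h h']
  · rw [sectorCorrection_of_notMem h', sub_zero]
    linarith [norm_sectorCorrection_mul_le_of_notMem g h h']
  · rw [sectorCorrection_of_notMem h, zero_sub, norm_neg]
    have hcross := norm_sectorCorrection_mul_le_of_notMem g h' h
    have hcorr := norm_sectorCorrection_le g z'
    rw [norm_sub_rev] at hcross
    calc ‖sectorCorrection A z'‖ * ‖z‖
        ≤ ‖sectorCorrection A z'‖ * (‖z'‖ + ‖z - z'‖) := by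
          gcongr
          simpa using norm_add_le z' (z - z')
      _ = ‖sectorCorrection A z'‖ * ‖z'‖ + ‖sectorCorrection A z'‖ * ‖z - z'‖ := by ring
      _ ≤ 15 / 2 * (M * R) * ‖z - z'‖ + M * R * ‖z - z'‖ := by gcongr
      _ ≤ 9 * (M * R) * ‖z - z'‖ := by linarith
  · rw [sectorCorrection_of_notMem h, sectorCorrection_of_notMem h', sub_zero, norm_zero, zero_mul]
    linarith

/-- The slopes of the horizontal and of the vertical family of a perturbed web. -/
structure IsSmallSlopePair (M R : ℝ) (A B : ℂ → ℝ) : Prop where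
  horiz : IsSmallSlope M R A
  vert : IsSmallSlope M R B

/-- A slope function after the rotation by `ζ`; rotating exchanges the two families, so that the
web with slopes `(A, B)` rotates to the one with slopes `(rotateSlope B, rotateSlope A)`. -/
def rotateSlope (A : ℂ → ℝ) : ℂ → ℝ := fun z => A (ζ * z)

/-- The slope of the horizontal family of the web `(A, B)` after `j` rotations by `ζ`. -/
def slopeAt (A B : ℂ → ℝ) (j : ℕ) : ℂ → ℝ :=
  fun z => if Even j then A (ζ ^ j * z) else B (ζ ^ j * z)

lemma IsSmallSlope.comp_mul (g : IsSmallSlope M R A) {c : ℂ} (hc : ‖c‖ = 1) :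
    IsSmallSlope M R fun z => A (c * z) where
  nonneg := g.nonneg
  pos := g.pos
  small := g.small
  lip z z' := by simpa [← mul_sub, hc] using g.lip (c * z) (c * z')
  zero := by simp [g.zero]
  out z h := g.out _ (by rwa [norm_mul, hc, one_mul])

namespace IsSmallSlopePair

lemma rotate (g : IsSmallSlopePair M R A B) :
    IsSmallSlopePair M R (rotateSlope B) (rotateSlope A) :=
  ⟨g.vert.comp_mul norm_ζ, g.horiz.comp_mul norm_ζ⟩

lemma slopeAt (g : IsSmallSlopePair M R A B) (j : ℕ) : IsSmallSlope M R (slopeAt A B j) := by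
  have hζ : ‖ζ ^ j‖ = 1 := by rw [norm_pow, norm_ζ, one_pow]
  unfold StarBDE.slopeAt
  split_ifs
  exacts [g.horiz.comp_mul hζ, g.vert.comp_mul hζ]

end IsSmallSlopePair

lemma slopeAt_zero : slopeAt A B 0 = A := by
  funext z
  simp [slopeAt]

lemma slopeAt_six : slopeAt A B 6 = A := by
  funext z
  simp [slopeAt, ζ_pow_six, show Even 6 by decide]

lemma slopeAt_rotateSlope (j : ℕ) :
    slopeAt (rotateSlope B) (rotateSlope A) j = slopeAt A B (j + 1) := by
  funext z
  by_cases h : Even j <;> simp [slopeAt, rotateSlope, Nat.even_add_one, h, pow_succ', mul_assoc]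

/-- The sum of the corrections of the six rotated sectors. -/
def correction (A B : ℂ → ℝ) (z : ℂ) : ℂ :=
  ∑ j ∈ Finset.range 6, sectorCorrection (slopeAt A B j) (ζ⁻¹ ^ j * z)

lemma correction_rotateSlope (z : ℂ) :
    correction (rotateSlope B) (rotateSlope A) z = correction A B (ζ * z) := by
  have hterm (j : ℕ) :
      sectorCorrection (slopeAt (rotateSlope B) (rotateSlope A) j) (ζ⁻¹ ^ j * z)
        = sectorCorrection (slopeAt A B (j + 1)) (ζ⁻¹ ^ (j + 1) * (ζ * z)) := by
    rw [slopeAt_rotateSlope, pow_succ, mul_assoc (ζ⁻¹ ^ j), ζ_inv_mul_ζ_mul]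
  simp only [correction, hterm]
  rw [Finset.sum_range_succ, Finset.sum_range_succ' _ 5, show 5 + 1 = 6 from rfl, slopeAt_six,
    ζ_inv_pow_six, slopeAt_zero, pow_zero]

lemma norm_correction_le (g : IsSmallSlopePair M R A B) (z : ℂ) :
    ‖correction A B z‖ ≤ 6 * (M * R) := by
  refine (norm_sum_le_of_le _ fun j _ => norm_sectorCorrection_le (g.slopeAt j) _).trans_eq ?_
  simp

lemma norm_correction_le_mul_norm (g : IsSmallSlopePair M R A B) (z : ℂ) :
    ‖correction A B z‖ ≤ 18 * M * ‖z‖ := by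
  refine (norm_sum_le_of_le _ fun j _ =>
    norm_sectorCorrection_le_mul_norm (g.slopeAt j) _).trans_eq ?_
  simp only [norm_ζ_inv_pow_mul, Finset.sum_const, Finset.card_range, nsmul_eq_mul]
  push_cast
  ring

lemma norm_correction_sub_mul_le (g : IsSmallSlopePair M R A B) (z z' : ℂ) :
    ‖correction A B z - correction A B z'‖ * ‖z‖ ≤ 54 * (M * R) * ‖z - z'‖ := by
  have hterm (j : ℕ) : ‖sectorCorrection (slopeAt A B j) (ζ⁻¹ ^ j * z)
      - sectorCorrection (slopeAt A B j) (ζ⁻¹ ^ j * z')‖ * ‖z‖ ≤ 9 * (M * R) * ‖z - z'‖ := by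
    have h := norm_sectorCorrection_sub_mul_le (g.slopeAt j) (ζ⁻¹ ^ j * z) (ζ⁻¹ ^ j * z')
    rwa [← mul_sub, norm_ζ_inv_pow_mul, norm_ζ_inv_pow_mul] at h
  rw [correction, correction, ← Finset.sum_sub_distrib]
  refine (mul_le_mul_of_nonneg_right (norm_sum_le _ _) (norm_nonneg _)).trans ?_
  rw [Finset.sum_mul]
  refine (Finset.sum_le_sum fun j _ => hterm j).trans_eq ?_
  simp only [Finset.sum_const, Finset.card_range, nsmul_eq_mul]
  push_cast
  ring

lemma norm_correction_le_half (g : IsSmallSlopePair M R A B) (z : ℂ) :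
    ‖correction A B z‖ ≤ 1 / 2 := by
  linarith [norm_correction_le g z, g.horiz.small]

lemma half_rpow_neg_third_le : (1 / 2 : ℝ) ^ (-1 / 3 : ℝ) ≤ 3 / 2 := by
  have hcube : ((1 / 2 : ℝ) ^ (-1 / 3 : ℝ)) ^ 3 = 2 := by
    rw [← Real.rpow_natCast, ← Real.rpow_mul (by norm_num)]
    norm_num
  rw [← pow_le_pow_iff_left₀ (by positivity) (by norm_num) three_ne_zero, hcube]
  norm_num

lemma norm_chartInv_one_add_sub_le {s s' : ℂ} (hs : ‖s‖ ≤ 1 / 2) (hs' : ‖s'‖ ≤ 1 / 2) :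
    ‖chartInv (1 + s) - chartInv (1 + s')‖ ≤ ‖s - s'‖ := by
  have hre {x : ℂ} (hx : x ∈ Metric.closedBall (1 : ℂ) (1 / 2)) : 1 / 2 ≤ x.re := by
    have h := (Complex.abs_re_le_norm (x - 1)).trans (mem_closedBall_iff_norm.1 hx)
    rw [Complex.sub_re, Complex.one_re, abs_le] at h
    linarith
  have hbound (x : ℂ) (hx : x ∈ Metric.closedBall (1 : ℂ) (1 / 2)) :
      ‖2 / 3 * x ^ ((-1 / 3 : ℝ) : ℂ)‖ ≤ 1 := by
    have hpow : ‖x‖ ^ (-1 / 3 : ℝ) ≤ (1 / 2 : ℝ) ^ (-1 / 3 : ℝ) :=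
      Real.rpow_le_rpow_of_nonpos (by norm_num) ((hre hx).trans (Complex.re_le_norm x))
        (by norm_num)
    rw [norm_mul, Complex.norm_cpow_real, norm_div, Complex.norm_ofNat, Complex.norm_ofNat]
    linarith [half_rpow_neg_third_le]
  simpa using (convex_closedBall (1 : ℂ) (1 / 2)).norm_image_sub_le_of_norm_hasDerivWithin_le
    (fun x hx => (hasDerivAt_chartInv
      (Or.inl (one_half_pos.trans_le (hre hx)))).hasDerivWithinAt) hbound
    (show 1 + s' ∈ _ by simpa using hs') (show 1 + s ∈ _ by simpa using hs)

lemma norm_chartInv_one_add_sub_one_le {s : ℂ} (hs : ‖s‖ ≤ 1 / 2) :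
    ‖chartInv (1 + s) - 1‖ ≤ ‖s‖ := by
  simpa using norm_chartInv_one_add_sub_le hs (s' := 0) (by simp)

/-- The map that straightens the web with slopes `(A, B)`; in the chart of each sector it moves
points vertically to the height of their horizontal leaf and horizontally to the abscissa of their
vertical leaf. -/
def straighten (A B : ℂ → ℝ) (z : ℂ) : ℂ := z * chartInv (1 + correction A B z)

@[simp] lemma straighten_zero : straighten A B 0 = 0 := zero_mul _

lemma norm_straighten_sub_le_sq (g : IsSmallSlopePair M R A B) (z : ℂ) :
    ‖straighten A B z - z‖ ≤ 18 * M * ‖z‖ ^ 2 := by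
  have hfactor : straighten A B z - z = z * (chartInv (1 + correction A B z) - 1) := by
    rw [straighten]
    ring
  rw [hfactor, norm_mul]
  calc ‖z‖ * ‖chartInv (1 + correction A B z) - 1‖ ≤ ‖z‖ * (18 * M * ‖z‖) := by
        gcongr
        exact (norm_chartInv_one_add_sub_one_le (norm_correction_le_half g z)).trans
          (norm_correction_le_mul_norm g z)
    _ = 18 * M * ‖z‖ ^ 2 := by ring

lemma norm_straighten_sub_sub_le (g : IsSmallSlopePair M R A B) (z z' : ℂ) :
    ‖(straighten A B z - z) - (straighten A B z' - z')‖ ≤ 1 / 10 * ‖z - z'‖ := by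
  have hsplit : (straighten A B z - z) - (straighten A B z' - z')
      = (chartInv (1 + correction A B z) - chartInv (1 + correction A B z')) * z
        + (z - z') * (chartInv (1 + correction A B z') - 1) := by
    rw [straighten, straighten]
    ring
  have hdiff := norm_chartInv_one_add_sub_le (norm_correction_le_half g z)
    (norm_correction_le_half g z')
  have hone := (norm_chartInv_one_add_sub_one_le (norm_correction_le_half g z')).trans
    (norm_correction_le g z')
  calc ‖(straighten A B z - z) - (straighten A B z' - z')‖
      ≤ ‖correction A B z - correction A B z'‖ * ‖z‖ + ‖z - z'‖ * (6 * (M * R)) := by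
        rw [hsplit]
        refine (norm_add_le _ _).trans ?_
        rw [norm_mul, norm_mul]
        gcongr
    _ ≤ 54 * (M * R) * ‖z - z'‖ + ‖z - z'‖ * (6 * (M * R)) := by
        linarith [norm_correction_sub_mul_le g z z']
    _ ≤ 1 / 10 * ‖z - z'‖ := by nlinarith [norm_nonneg (z - z'), g.horiz.small]

lemma norm_straighten_sub_le (g : IsSmallSlopePair M R A B) (z : ℂ) :
    ‖straighten A B z - z‖ ≤ 1 / 10 * ‖z‖ := by
  simpa using norm_straighten_sub_sub_le g z 0

lemma exists_homeomorph_eq_straighten (g : IsSmallSlopePair M R A B) :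
    ∃ H : ℂ ≃ₜ ℂ, ∀ z, H z = straighten A B z := by
  have happrox : ApproximatesLinearOn (straighten A B)
      (ContinuousLinearEquiv.refl ℝ ℂ : ℂ →L[ℝ] ℂ) univ (1 / 10 : NNReal) := by
    intro x _ y _
    convert! norm_straighten_sub_sub_le g x y using 2
    simp
    ring
  have hnorm : ‖((ContinuousLinearEquiv.refl ℝ ℂ).symm : ℂ →L[ℝ] ℂ)‖₊ = 1 := by
    ext
    simp
  refine ⟨happrox.toHomeomorph (straighten A B) (Or.inr ?_), fun z => rfl⟩
  rw [hnorm, ← NNReal.coe_lt_coe]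
  norm_num

lemma straighten_rotateSlope (z : ℂ) :
    straighten (rotateSlope B) (rotateSlope A) z = ζ⁻¹ * straighten A B (ζ * z) := by
  rw [straighten, straighten, correction_rotateSlope, ← mul_assoc, ζ_inv_mul_ζ_mul]

lemma straighten_ζ_mul (z : ℂ) :
    straighten A B (ζ * z) = ζ * straighten (rotateSlope B) (rotateSlope A) z := by
  rw [straighten_rotateSlope, ζ_mul_ζ_inv_mul]

/-- The sectors around the directions `1` and `c⁻¹` meet at most along a common boundary ray, where
the correction vanishes. -/
lemma sectorCorrection_mul_eq_zero (g : IsSmallSlope M R A) {c z : ℂ} (hc : ‖c‖ = 1)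
    (hc1 : ‖1 + c‖ ≤ 1) (h : z ∈ sector) : sectorCorrection A (c * z) = 0 := by
  by_cases hcz : c * z ∈ sector
  · refine sectorCorrection_of_norm_eq g ?_
    have hnorm : ‖c * z‖ = ‖z‖ := by rw [norm_mul, hc, one_mul]
    have hsum : z.re + (c * z).re ≤ ‖z‖ := by
      calc z.re + (c * z).re = ((1 + c) * z).re := by rw [add_mul, one_mul, Complex.add_re]
        _ ≤ ‖1 + c‖ * ‖z‖ := (Complex.re_le_norm _).trans_eq (norm_mul _ _)
        _ ≤ ‖z‖ := mul_le_of_le_one_left (norm_nonneg z) hc1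
    rw [mem_sector_iff_norm_le] at h hcz
    linarith
  · exact sectorCorrection_of_notMem hcz

lemma ζ_inv_sq : ζ⁻¹ ^ 2 = ζ⁻¹ - 1 := by
  rw [ζ_inv]
  apply Complex.ext <;> simp [pow_two]
  · nlinarith [sqrt_three_mul_self]
  · ring

lemma ζ_inv_pow_five : ζ⁻¹ ^ 5 = ζ :=
  eq_inv_of_mul_eq_one_left (by rw [← pow_succ, ζ_inv_pow_six]) |>.trans (inv_inv ζ)

lemma sectorCorrection_opposite_eq_zero (g : IsSmallSlope M R A) {z : ℂ} (h : z ∈ sector) {j : ℕ}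
    (hj : j ∈ Icc 2 4) : sectorCorrection A (ζ⁻¹ ^ j * z) = 0 := by
  refine sectorCorrection_mul_eq_zero g (by rw [norm_pow, norm_ζ_inv, one_pow]) ?_ h
  obtain ⟨h2, h4⟩ := hj
  interval_cases j
  · rw [ζ_inv_sq, add_sub_cancel, norm_ζ_inv]
  · rw [ζ_inv_cube, add_neg_cancel, norm_zero]
    exact zero_le_one
  · have hfour : 1 + ζ⁻¹ ^ 4 = -ζ⁻¹ ^ 2 := by
      rw [pow_succ ζ⁻¹ 3, ζ_inv_cube, ζ_inv_sq]
      ring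
    rw [hfour, norm_neg, norm_pow, norm_ζ_inv, one_pow]

lemma im_chart_mul_sectorCorrection_ζ_inv_mul (A : ℂ → ℝ) {z : ℂ} (h : z ∈ sector) :
    (chart z * sectorCorrection A (ζ⁻¹ * z)).im = 0 := by
  rcases eq_or_ne z 0 with rfl | h0
  · simp
  by_cases him : 0 ≤ z.im
  · have hne := chart_ne_zero h0
    have hreal : chart z * (Complex.I * (leafShift A (-Complex.I * chart z) : ℂ)
        / (-Complex.I * chart z)) = ((-leafShift A (-Complex.I * chart z) : ℝ) : ℂ) := by
      have hI := Complex.I_ne_zero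
      push_cast
      field_simp
    rw [sectorCorrection_of_mem (ζ_inv_mul_mem_sector h him), chart_ζ_inv_mul h him, hreal,
      Complex.ofReal_im]
  · rw [sectorCorrection_of_notMem, mul_zero, Complex.zero_im]
    intro hmem
    rw [mem_sector_iff_norm_le, norm_mul, norm_ζ_inv, ζ_inv, Complex.mul_re] at hmem
    nlinarith [Complex.re_le_norm z, (by positivity : 0 < √3)]

lemma im_chart_mul_sectorCorrection_ζ_mul (A : ℂ → ℝ) {z : ℂ} (h : z ∈ sector) :
    (chart z * sectorCorrection A (ζ * z)).im = 0 := by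
  rcases eq_or_ne z 0 with rfl | h0
  · simp
  by_cases him : z.im ≤ 0
  · have hne := chart_ne_zero h0
    have hreal : chart z * (Complex.I * (leafShift A (Complex.I * chart z) : ℂ)
        / (Complex.I * chart z)) = (leafShift A (Complex.I * chart z) : ℂ) := by
      have hI := Complex.I_ne_zero
      field_simp
    rw [sectorCorrection_of_mem (ζ_mul_mem_sector h him), chart_ζ_mul h him, hreal,
      Complex.ofReal_im]
  · rw [sectorCorrection_of_notMem, mul_zero, Complex.zero_im]
    intro hmem
    rw [mem_sector_iff_norm_le, norm_mul, norm_ζ, ζ, Complex.mul_re] at hmem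
    nlinarith [Complex.re_le_norm z, (by positivity : 0 < √3)]

lemma im_chart_mul_sectorCorrection (g : IsSmallSlope M R A) {z : ℂ} (h : z ∈ sector) :
    (chart z * sectorCorrection A z).im = leafShift A (chart z) := by
  rcases eq_or_ne z 0 with rfl | h0
  · simp [leafShift, leafHeight_of_re_eq_zero g (w := 0) rfl]
  · rw [sectorCorrection_of_mem h, mul_div_cancel₀ _ (chart_ne_zero h0)]
    simp

/-- Of the six corrections only those of the sector itself and of its two neighbours survive, and
the neighbours only move points horizontally in the chart. -/
lemma im_chart_mul_one_add_correction (g : IsSmallSlopePair M R A B) {z : ℂ} (h : z ∈ sector) :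
    (chart z * (1 + correction A B z)).im = leafHeight A (chart z) := by
  have hsum : chart z * (1 + correction A B z) = chart z + chart z * sectorCorrection A z
      + chart z * sectorCorrection (slopeAt A B 1) (ζ⁻¹ * z)
      + chart z * sectorCorrection (slopeAt A B 5) (ζ * z) := by
    simp only [correction, Finset.sum_range_succ, Finset.sum_range_zero, ζ_inv_pow_five, pow_zero,
      pow_one, one_mul, slopeAt_zero,
      sectorCorrection_opposite_eq_zero (g.slopeAt 2) h (j := 2) (by simp),
      sectorCorrection_opposite_eq_zero (g.slopeAt 3) h (j := 3) (by simp),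
      sectorCorrection_opposite_eq_zero (g.slopeAt 4) h (j := 4) (by simp)]
    ring
  rw [hsum, Complex.add_im, Complex.add_im, Complex.add_im,
    im_chart_mul_sectorCorrection g.horiz h, im_chart_mul_sectorCorrection_ζ_inv_mul _ h,
    im_chart_mul_sectorCorrection_ζ_mul _ h, leafShift]
  ring

lemma chartImSq_straighten (g : IsSmallSlopePair M R A B) {z : ℂ} (h : z ∈ sector) :
    chartImSq (straighten A B z) = 2 * leafHeight A (chart z) ^ 2 := by
  rw [← im_chart_mul_one_add_correction g h, two_mul_im_sq, norm_mul, mul_pow, norm_chart_sq,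
    mul_pow, chart_sq, chartImSq, straighten, mul_pow, norm_mul, mul_pow, chartInv_cube,
    ← norm_pow (chartInv _), chartInv_cube, norm_pow]

end Straighten

/-! ### The two direction fields and their first integrals -/

section Directions

variable {M R : ℝ} {A B : ℂ → ℝ} {z v : ℂ}

/-- `v` is tangent at `z` to the horizontal family with slope `A`: in the chart, where
`dw² = (9 / 4) z dz²`, it is a multiple of `1 + A z * I`. -/
def IsHorizDir (A : ℂ → ℝ) (z v : ℂ) : Prop :=
  ∃ k : ℝ, 0 < k ∧ z * v ^ 2 = k * (1 + (A z : ℂ) * Complex.I) ^ 2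

/-- `v` is tangent at `z` to the vertical family with slope `B`: in the chart it is a multiple of
`I * (1 + B z * I)`. -/
def IsVertDir (B : ℂ → ℝ) (z v : ℂ) : Prop :=
  ∃ k : ℝ, 0 < k ∧ z * v ^ 2 = -(k * (1 + (B z : ℂ) * Complex.I) ^ 2)

lemma IsHorizDir.rotate (h : IsHorizDir A z v) :
    IsVertDir (rotateSlope A) (ζ⁻¹ * z) (ζ⁻¹ * v) := by
  obtain ⟨k, hk, e⟩ := h
  refine ⟨k, hk, ?_⟩
  rw [rotateSlope, ζ_mul_ζ_inv_mul, ← e]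
  linear_combination (z * v ^ 2) * ζ_inv_cube

lemma IsVertDir.rotate (h : IsVertDir B z v) :
    IsHorizDir (rotateSlope B) (ζ⁻¹ * z) (ζ⁻¹ * v) := by
  obtain ⟨k, hk, e⟩ := h
  refine ⟨k, hk, ?_⟩
  rw [rotateSlope, ζ_mul_ζ_inv_mul, ← neg_eq_iff_eq_neg.2 e]
  linear_combination (z * v ^ 2) * ζ_inv_cube

lemma IsSmallSlope.re_mul_one_add_sq_pos (g : IsSmallSlope M R A) (z : ℂ) {k : ℝ} (hk : 0 < k) :
    0 < ((k : ℂ) * (1 + (A z : ℂ) * Complex.I) ^ 2).re := by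
  have hre : ((k : ℂ) * (1 + (A z : ℂ) * Complex.I) ^ 2).re = k * (1 - A z ^ 2) := by
    simp [pow_two]
  have hA : A z ^ 2 < 1 :=
    (sq_lt_one_iff_abs_lt_one _).2 (by linarith [g.abs_le_mul z, g.small])
  rw [hre]
  exact mul_pos hk (sub_pos.2 hA)

lemma IsHorizDir.re_pos (g : IsSmallSlope M R A) (h : IsHorizDir A z v) :
    0 < (z * v ^ 2).re := by
  obtain ⟨k, hk, e⟩ := h
  rw [e]
  exact g.re_mul_one_add_sq_pos z hk

lemma IsVertDir.re_neg (g : IsSmallSlope M R B) (h : IsVertDir B z v) :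
    (z * v ^ 2).re < 0 := by
  obtain ⟨k, hk, e⟩ := h
  rw [e, Complex.neg_re, neg_lt_zero]
  exact g.re_mul_one_add_sq_pos z hk

lemma IsHorizDir.im_chart_deriv (h : IsHorizDir A z v) :
    (3 / 2 * z ^ ((1 / 2 : ℝ) : ℂ) * v).im = A z * (3 / 2 * z ^ ((1 / 2 : ℝ) : ℂ) * v).re := by
  obtain ⟨k, hk, e⟩ := h
  set x := √(9 / 4 * k) with hx
  have hxsq : (x : ℂ) ^ 2 = ((9 / 4 * k : ℝ) : ℂ) := by
    rw [hx, ← Complex.ofReal_pow, Real.sq_sqrt (by positivity)]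
  have hsq : (3 / 2 * z ^ ((1 / 2 : ℝ) : ℂ) * v) ^ 2
      = (x * (1 + (A z : ℂ) * Complex.I)) ^ 2 := by
    rw [chart_deriv_mul_sq, e, mul_pow, hxsq]
    push_cast
    ring
  rcases sq_eq_sq_iff_eq_or_eq_neg.1 hsq with heq | heq <;> rw [heq] <;> simp <;> ring

/-- The leaf through `chart (γ t₀)` is tangent to `chart ∘ γ` at `t₀`, and the leaf height varies
at most twice as fast as the vertical distance to that leaf. -/
lemma IsHorizDir.hasDerivWithinAt_leafHeight (g : IsSmallSlope M R A) {γ : ℝ → ℂ} {t₀ : ℝ}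
    (hγ : HasDerivAt γ v t₀) (h0 : γ t₀ ≠ 0) (hdir : IsHorizDir A (γ t₀) v)
    (hmem : γ t₀ ∈ sector) :
    HasDerivWithinAt (fun t => leafHeight A (chart (γ t))) 0 {t | γ t ∈ sector} t₀ := by
  set ψ := leafThrough A (chart (γ t₀)) with hψ
  set D := 3 / 2 * γ t₀ ^ ((1 / 2 : ℝ) : ℂ) * v
  obtain ⟨hleaf, heq⟩ := leafThrough_spec g (re_chart_nonneg hmem)
  rw [← hψ] at hleaf heq
  have hchart : HasDerivAt (fun t => chart (γ t)) D t₀ :=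
    (hasDerivAt_chart (mem_slitPlane_of_re_nonneg (re_nonneg_of_mem_sector hmem) h0)).comp t₀ hγ
  have hre : HasDerivAt (fun t => (chart (γ t)).re) D.re t₀ :=
    Complex.reCLM.hasFDerivAt.comp_hasDerivAt t₀ hchart
  have him : HasDerivAt (fun t => (chart (γ t)).im) D.im t₀ :=
    Complex.imCLM.hasFDerivAt.comp_hasDerivAt t₀ hchart
  have hψder := hleaf.hasDerivWithinAt g (re_chart_nonneg hmem)
  rw [heq, Complex.eta, chartInv_chart_of_mem_sector hmem] at hψder
  have hcomp : HasDerivWithinAt (fun t => ψ (chart (γ t)).re) (A (γ t₀) * D.re)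
      {t | γ t ∈ sector} t₀ :=
    HasDerivWithinAt.comp t₀ (h := fun t => (chart (γ t)).re) hψder hre.hasDerivWithinAt
      fun t ht => re_chart_nonneg ht
  have hgap := him.hasDerivWithinAt.sub hcomp
  rw [sub_eq_zero.2 hdir.im_chart_deriv, hasDerivWithinAt_iff_isLittleO] at hgap
  rw [hasDerivWithinAt_iff_isLittleO]
  refine IsBigO.trans_isLittleO (IsBigO.of_bound 2 ?_) hgap
  filter_upwards [self_mem_nhdsWithin] with t ht
  have hheight : leafHeight A (chart (γ t₀)) = ψ 0 := rfl
  simp only [smul_zero, sub_zero, Real.norm_eq_abs, Pi.sub_apply, hheight, ← heq, sub_self]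
  exact hleaf.abs_leafHeight_sub_le g (re_chart_nonneg ht)

lemma chartImSq_straighten_rotateSlope (z : ℂ) :
    chartImSq (straighten (rotateSlope B) (rotateSlope A) (ζ⁻¹ * z))
      = chartReSq (straighten A B z) := by
  rw [straighten_rotateSlope, ζ_mul_ζ_inv_mul, chartImSq_ζ_inv_mul]

lemma chartReSq_straighten_rotateSlope (z : ℂ) :
    chartReSq (straighten (rotateSlope B) (rotateSlope A) (ζ⁻¹ * z))
      = chartImSq (straighten A B z) := by
  rw [straighten_rotateSlope, ζ_mul_ζ_inv_mul, chartReSq_ζ_inv_mul]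

lemma hasDerivWithinAt_chartImSq_straighten_sector (g : IsSmallSlopePair M R A B) {γ : ℝ → ℂ}
    {t₀ : ℝ} (hγ : HasDerivAt γ v t₀) (h0 : γ t₀ ≠ 0) (hdir : IsHorizDir A (γ t₀) v) :
    HasDerivWithinAt (fun t => chartImSq (straighten A B (γ t))) 0 {t | γ t ∈ sector} t₀ := by
  by_cases hmem : γ t₀ ∈ sector
  · have hsq := ((hdir.hasDerivWithinAt_leafHeight g.horiz hγ h0 hmem).pow 2).const_mul 2
    simp only [Nat.cast_ofNat, mul_zero] at hsq
    exact hsq.congr (fun t ht => chartImSq_straighten g ht) (chartImSq_straighten g hmem)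
  · refine HasFDerivWithinAt.of_notMem_closure fun hcl => ?_
    obtain ⟨t, ht, ht'⟩ := mem_closure_iff_nhds.1 hcl _
      (hγ.continuousAt.preimage_mem_nhds (isClosed_sector.isOpen_compl.mem_nhds hmem))
    exact ht ht'

lemma ζ_inv_pow_mul_ζ_inv_mul_ζ_inv_mul (k : ℕ) (z : ℂ) :
    ζ⁻¹ ^ (2 * k) * (ζ⁻¹ * (ζ⁻¹ * z)) = ζ⁻¹ ^ (2 * (k + 1)) * z := by ring

lemma hasDerivWithinAt_chartImSq_straighten (k : ℕ) (g : IsSmallSlopePair M R A B) {γ : ℝ → ℂ}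
    {t₀ : ℝ} (hγ : HasDerivAt γ v t₀) (h0 : γ t₀ ≠ 0) (hdir : IsHorizDir A (γ t₀) v) :
    HasDerivWithinAt (fun t => chartImSq (straighten A B (γ t))) 0
      {t | ζ⁻¹ ^ (2 * k) * γ t ∈ sector} t₀ := by
  induction k generalizing A B γ v with
  | zero => simpa using hasDerivWithinAt_chartImSq_straighten_sector g hγ h0 hdir
  | succ k ih =>
    have hζ := inv_ne_zero ζ_ne_zero
    have hrot := ih g.rotate.rotate ((hγ.const_mul ζ⁻¹).const_mul ζ⁻¹)
      (mul_ne_zero hζ (mul_ne_zero hζ h0)) hdir.rotate.rotate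
    simpa only [chartImSq_straighten_rotateSlope, chartReSq_straighten_rotateSlope,
      ζ_inv_pow_mul_ζ_inv_mul_ζ_inv_mul] using hrot

lemma ζ_inv_sq_eq_neg : ζ⁻¹ ^ 2 = -ζ := by
  rw [← mul_left_inj' (inv_ne_zero ζ_ne_zero), ← pow_succ, ζ_inv_cube, neg_mul,
    mul_inv_cancel₀ ζ_ne_zero]

lemma ζ_inv_pow_four : ζ⁻¹ ^ 4 = -ζ⁻¹ := by
  rw [pow_succ, ζ_inv_cube, neg_one_mul]

lemma exists_ζ_inv_pow_mul_mem_sector (z : ℂ) :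
    z ∈ sector ∨ ζ⁻¹ ^ 2 * z ∈ sector ∨ ζ⁻¹ ^ 4 * z ∈ sector := by
  by_cases h : z ∈ sector
  · exact Or.inl h
  have h3 := sqrt_three_mul_self
  have hs : 0 < √3 := by positivity
  rw [mem_sector, not_le, lt_abs] at h
  rw [ζ_inv_sq_eq_neg, ζ_inv_pow_four, ζ_inv]
  simp only [mem_sector, ζ, abs_le, Complex.mul_re, Complex.mul_im, Complex.neg_re,
    Complex.neg_im]
  rcases le_total 0 z.im with him | him
  · have hre : √3 * z.re ≤ z.im := by rcases h with h | h <;> linarith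
    exact Or.inr (Or.inl ⟨by nlinarith, by nlinarith⟩)
  · have hre : √3 * z.re ≤ -z.im := by rcases h with h | h <;> linarith
    exact Or.inr (Or.inr ⟨by nlinarith, by nlinarith⟩)

lemma hasDerivAt_chartImSq_straighten (g : IsSmallSlopePair M R A B) {γ : ℝ → ℂ} {t₀ : ℝ}
    (hγ : HasDerivAt γ v t₀) (h0 : γ t₀ ≠ 0) (hdir : IsHorizDir A (γ t₀) v) :
    HasDerivAt (fun t => chartImSq (straighten A B (γ t))) 0 t₀ := by
  have hk (k : ℕ) := hasDerivWithinAt_chartImSq_straighten k g hγ h0 hdir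
  rw [← hasDerivWithinAt_univ]
  refine (((hk 0).union (hk 1)).union (hk 2)).mono fun t _ => ?_
  rcases exists_ζ_inv_pow_mul_mem_sector (γ t) with h | h | h
  · exact Or.inl (Or.inl (by simpa using h))
  · exact Or.inl (Or.inr h)
  · exact Or.inr h

lemma hasDerivAt_chartReSq_straighten (g : IsSmallSlopePair M R A B) {γ : ℝ → ℂ} {t₀ : ℝ}
    (hγ : HasDerivAt γ v t₀) (h0 : γ t₀ ≠ 0) (hdir : IsVertDir B (γ t₀) v) :
    HasDerivAt (fun t => chartReSq (straighten A B (γ t))) 0 t₀ := by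
  simpa only [chartImSq_straighten_rotateSlope] using
    hasDerivAt_chartImSq_straighten g.rotate (hγ.const_mul ζ⁻¹)
      (mul_ne_zero (inv_ne_zero ζ_ne_zero) h0) hdir.rotate

lemma re_pos_of_straighten_mem_openSector (g : IsSmallSlopePair M R A B)
    (h : straighten A B z ∈ openSector) : 0 < z.re := by
  have hz : 0 < ‖z‖ := norm_pos_iff.2 <| by
    rintro rfl
    simpa using re_pos_of_mem_openSector h
  have hre := Complex.re_le_norm (straighten A B z - z)
  have htri := norm_sub_le (straighten A B z) (straighten A B z - z)
  rw [sub_sub_cancel] at htri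
  rw [Complex.sub_re] at hre
  linarith [mem_openSector_iff_norm_lt.1 h, norm_straighten_sub_le g z]

lemma chartReSq_ζ_inv_pow_mul (k : ℕ) (z : ℂ) :
    chartReSq (ζ⁻¹ ^ (2 * k) * z) = chartReSq z := by
  induction k generalizing z with
  | zero => simp
  | succ k ih =>
    rw [← ζ_inv_pow_mul_ζ_inv_mul_ζ_inv_mul, ih, chartReSq_ζ_inv_mul, chartImSq_ζ_inv_mul]

lemma exists_ζ_inv_pow_mul_mem_openSector (h : chartReSq z ≠ 0) :
    z ∈ openSector ∨ ζ⁻¹ ^ 2 * z ∈ openSector ∨ ζ⁻¹ ^ 4 * z ∈ openSector := by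
  refine (exists_ζ_inv_pow_mul_mem_sector z).imp (mem_openSector_of_chartReSq_ne_zero · h)
    (Or.imp (mem_openSector_of_chartReSq_ne_zero · ?_)
      (mem_openSector_of_chartReSq_ne_zero · ?_))
  · rwa [chartReSq_ζ_inv_pow_mul 1]
  · rwa [chartReSq_ζ_inv_pow_mul 2]

lemma mul_notMem_openSector {c : ℂ} (hc : ‖c‖ = 1) (hc1 : ‖1 + c‖ ≤ 1) (h : z ∈ openSector) :
    c * z ∉ openSector := by
  intro hcz
  have hnorm : ‖c * z‖ = ‖z‖ := by rw [norm_mul, hc, one_mul]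
  have hre : z.re + (c * z).re ≤ ‖z‖ := calc
    z.re + (c * z).re = ((1 + c) * z).re := by rw [add_mul, one_mul, Complex.add_re]
    _ ≤ ‖1 + c‖ * ‖z‖ := (Complex.re_le_norm _).trans (norm_mul _ _).le
    _ ≤ ‖z‖ := mul_le_of_le_one_left (norm_nonneg z) hc1
  rw [mem_openSector_iff_norm_lt] at h hcz
  linarith

lemma ζ_inv_sq_mul_notMem_openSector (h : z ∈ openSector) : ζ⁻¹ ^ 2 * z ∉ openSector := by
  refine mul_notMem_openSector (by rw [norm_pow, norm_ζ_inv, one_pow]) ?_ h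
  rw [ζ_inv_sq, add_sub_cancel, norm_ζ_inv]

lemma ζ_inv_pow_four_mul_notMem_openSector (h : z ∈ openSector) : ζ⁻¹ ^ 4 * z ∉ openSector := by
  refine mul_notMem_openSector (by rw [norm_pow, norm_ζ_inv, one_pow]) ?_ h
  rw [ζ_inv_pow_four, ← sub_eq_add_neg, ← norm_neg, neg_sub, ← ζ_inv_sq, norm_pow, norm_ζ_inv,
    one_pow]

lemma mem_openSector_of_isPreconnected {I : Set ℝ} (hI : IsPreconnected I) {y : ℝ → ℂ}
    (hy : ContinuousOn y I) (h : ∀ t ∈ I, chartReSq (y t) ≠ 0) {t₁ : ℝ} (ht₁ : t₁ ∈ I)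
    (hmem : y t₁ ∈ openSector) {t : ℝ} (ht : t ∈ I) : y t ∈ openSector := by
  have hopen (j : ℕ) : IsOpen {z | ζ⁻¹ ^ j * z ∈ openSector} :=
    isOpen_openSector.preimage (continuous_const_mul _)
  refine (hI.image y hy).subset_left_of_subset_union isOpen_openSector
    ((hopen 2).union (hopen 4)) ?_ ?_ ⟨_, mem_image_of_mem y ht₁, hmem⟩ (mem_image_of_mem y ht)
  · rw [disjoint_left]
    rintro z hz (hz2 | hz4)
    · exact ζ_inv_sq_mul_notMem_openSector hz hz2
    · exact ζ_inv_pow_four_mul_notMem_openSector hz hz4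
  · rintro _ ⟨s, hs, rfl⟩
    exact exists_ζ_inv_pow_mul_mem_openSector (h s hs)

lemma exists_forall_ζ_inv_pow_mul_mem_openSector {I : Set ℝ} (hI : IsPreconnected I) {y : ℝ → ℂ}
    (hy : ContinuousOn y I) (h : ∀ t ∈ I, chartReSq (y t) ≠ 0) :
    ∃ k : ℕ, ∀ t ∈ I, ζ⁻¹ ^ (2 * k) * y t ∈ openSector := by
  rcases I.eq_empty_or_nonempty with rfl | ⟨t₁, ht₁⟩
  · exact ⟨0, by simp⟩
  obtain ⟨k, hk⟩ : ∃ k : ℕ, ζ⁻¹ ^ (2 * k) * y t₁ ∈ openSector := by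
    rcases exists_ζ_inv_pow_mul_mem_openSector (h t₁ ht₁) with hk | hk | hk
    exacts [⟨0, by simpa using hk⟩, ⟨1, hk⟩, ⟨2, hk⟩]
  refine ⟨k, fun t ht => mem_openSector_of_isPreconnected hI (y := fun t => ζ⁻¹ ^ (2 * k) * y t)
    (by fun_prop) (fun t ht => ?_) ht₁ hk ht⟩
  rw [chartReSq_ζ_inv_pow_mul]
  exact h t ht

end Directions

/-! ### Web curves -/

section WebCurves

variable {M R : ℝ} {A B : ℂ → ℝ} {γ γ' : ℝ → ℂ} {I : Set ℝ}

lemma continuous_straighten (g : IsSmallSlopePair M R A B) : Continuous (straighten A B) := by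
  obtain ⟨H, hH⟩ := exists_homeomorph_eq_straighten g
  exact H.continuous.congr hH

lemma injective_straighten (g : IsSmallSlopePair M R A B) :
    Function.Injective (straighten A B) := by
  obtain ⟨H, hH⟩ := exists_homeomorph_eq_straighten g
  exact funext hH ▸ H.injective

/-- A `C¹` curve with derivative `γ'` that is tangent to one of the two families away from `0`. -/
structure IsWebCurve (A B : ℂ → ℝ) (γ γ' : ℝ → ℂ) (I : Set ℝ) : Prop where
  der : ∀ t ∈ I, HasDerivAt γ (γ' t) t
  cont : ContinuousOn γ' I
  ne : ∀ t ∈ I, γ' t ≠ 0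
  dir : ∀ t ∈ I, γ t = 0 ∨ IsHorizDir A (γ t) (γ' t) ∨ IsVertDir B (γ t) (γ' t)

/-- A curve of the horizontal family, away from the origin. -/
def IsHorizCurve (A : ℂ → ℝ) (γ : ℝ → ℂ) (I : Set ℝ) : Prop :=
  ∀ t ∈ I, ∃ v, HasDerivAt γ v t ∧ γ t ≠ 0 ∧ IsHorizDir A (γ t) v

/-- A curve of the vertical family, away from the origin. -/
def IsVertCurve (B : ℂ → ℝ) (γ : ℝ → ℂ) (I : Set ℝ) : Prop :=
  ∀ t ∈ I, ∃ v, HasDerivAt γ v t ∧ γ t ≠ 0 ∧ IsVertDir B (γ t) v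

lemma IsHorizCurve.rotate (h : IsHorizCurve A γ I) :
    IsVertCurve (rotateSlope A) (fun t => ζ⁻¹ * γ t) I := by
  intro t ht
  obtain ⟨v, hder, hne, hdir⟩ := h t ht
  exact ⟨ζ⁻¹ * v, hder.const_mul _, mul_ne_zero (inv_ne_zero ζ_ne_zero) hne, hdir.rotate⟩

lemma IsVertCurve.rotate (h : IsVertCurve B γ I) :
    IsHorizCurve (rotateSlope B) (fun t => ζ⁻¹ * γ t) I := by
  intro t ht
  obtain ⟨v, hder, hne, hdir⟩ := h t ht
  exact ⟨ζ⁻¹ * v, hder.const_mul _, mul_ne_zero (inv_ne_zero ζ_ne_zero) hne, hdir.rotate⟩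

/-- After some rotation, `straighten A B` takes `γ` into the open sector, where in the chart it
becomes either a vertical segment or a segment of the positive real axis; moreover the coordinate
of `chart ∘ γ` along that segment has non-zero derivative. -/
def IsStraightened (A B : ℂ → ℝ) (γ : ℝ → ℂ) (I : Set ℝ) : Prop :=
  ∃ j : ℕ, (∀ t ∈ I, ζ⁻¹ ^ j * straighten A B (γ t) ∈ openSector) ∧
    ((∃ c : ℝ, 0 < c ∧ ∀ t ∈ I, (chart (ζ⁻¹ ^ j * straighten A B (γ t))).re = c ∧
        ∃ d : ℝ, d ≠ 0 ∧ HasDerivAt (fun t => (chart (ζ⁻¹ ^ j * γ t)).im) d t) ∨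
     (∀ t ∈ I, (ζ⁻¹ ^ j * straighten A B (γ t)).im = 0 ∧
        ∃ d : ℝ, d ≠ 0 ∧ HasDerivAt (fun t => (chart (ζ⁻¹ ^ j * γ t)).re) d t))

lemma straighten_rotateSlope_ζ_inv_mul (z : ℂ) :
    straighten (rotateSlope B) (rotateSlope A) (ζ⁻¹ * z) = ζ⁻¹ * straighten A B z := by
  rw [straighten_rotateSlope, ζ_mul_ζ_inv_mul]

lemma IsStraightened.of_rotate
    (h : IsStraightened (rotateSlope B) (rotateSlope A) (fun t => ζ⁻¹ * γ t) I) :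
    IsStraightened A B γ I := by
  obtain ⟨j, hmem, hseg⟩ := h
  have hpow (z : ℂ) : ζ⁻¹ ^ j * (ζ⁻¹ * z) = ζ⁻¹ ^ (j + 1) * z := by ring
  simp only [straighten_rotateSlope_ζ_inv_mul, hpow] at hmem hseg
  exact ⟨j + 1, hmem, hseg⟩

lemma hasDerivAt_chart_comp (g : IsSmallSlopePair M R A B) {v : ℂ} {t : ℝ}
    (hγ : HasDerivAt γ v t) (h0 : γ t ≠ 0) (hmem : straighten A B (γ t) ∈ openSector) :
    HasDerivAt (fun t => chart (γ t)) (3 / 2 * γ t ^ ((1 / 2 : ℝ) : ℂ) * v) t :=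
  (hasDerivAt_chart (mem_slitPlane_of_re_nonneg
    (re_pos_of_straighten_mem_openSector g hmem).le h0)).comp t hγ

lemma re_chart_deriv_sq (z v : ℂ) :
    (3 / 2 * z ^ ((1 / 2 : ℝ) : ℂ) * v).re ^ 2 - (3 / 2 * z ^ ((1 / 2 : ℝ) : ℂ) * v).im ^ 2
      = 9 / 4 * (z * v ^ 2).re := by
  have hre (w : ℂ) : w.re ^ 2 - w.im ^ 2 = (w ^ 2).re := by
    rw [pow_two w, Complex.mul_re]
    ring
  rw [hre, chart_deriv_mul_sq, ← Complex.re_ofReal_mul]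

lemma IsHorizCurve.isStraightened_of_mem (g : IsSmallSlopePair M R A B) (h : IsHorizCurve A γ I)
    (hmem : ∀ t ∈ I, straighten A B (γ t) ∈ openSector)
    (hzero : ∀ t ∈ I, chartImSq (straighten A B (γ t)) = 0) : IsStraightened A B γ I := by
  refine ⟨0, by simpa using hmem, Or.inr fun t ht => ?_⟩
  simp only [pow_zero, one_mul]
  refine ⟨im_eq_zero_of_chartImSq_eq_zero (openSector_subset_sector (hmem t ht)) (hzero t ht), ?_⟩
  obtain ⟨v, hder, hne, hdir⟩ := h t ht
  refine ⟨_, fun hre => ?_, Complex.reCLM.hasFDerivAt.comp_hasDerivAt t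
    (hasDerivAt_chart_comp g hder hne (hmem t ht))⟩
  have hsq := re_chart_deriv_sq (γ t) v
  rw [Complex.reCLM_apply] at hre
  rw [hre] at hsq
  nlinarith [hdir.re_pos g.horiz]

lemma IsVertCurve.isStraightened_of_mem (g : IsSmallSlopePair M R A B) (h : IsVertCurve B γ I)
    (hmem : ∀ t ∈ I, straighten A B (γ t) ∈ openSector) {c : ℝ} (hc : 0 < c)
    (hconst : ∀ t ∈ I, chartReSq (straighten A B (γ t)) = c) : IsStraightened A B γ I := by
  refine ⟨0, by simpa using hmem, Or.inl ⟨√(c / 2), by positivity, fun t ht => ?_⟩⟩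
  simp only [pow_zero, one_mul]
  constructor
  · rw [← hconst t ht, ← two_mul_re_chart_sq, mul_div_cancel_left₀ _ two_ne_zero,
      Real.sqrt_sq (re_chart_nonneg (openSector_subset_sector (hmem t ht)))]
  obtain ⟨v, hder, hne, hdir⟩ := h t ht
  refine ⟨_, fun him => ?_, Complex.imCLM.hasFDerivAt.comp_hasDerivAt t
    (hasDerivAt_chart_comp g hder hne (hmem t ht))⟩
  have hsq := re_chart_deriv_sq (γ t) v
  rw [Complex.imCLM_apply] at him
  rw [him] at hsq
  nlinarith [hdir.re_neg g.vert]

lemma IsHorizCurve.isStraightened_of_pow_mem (k : ℕ) (g : IsSmallSlopePair M R A B)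
    (h : IsHorizCurve A γ I) (hmem : ∀ t ∈ I, ζ⁻¹ ^ (2 * k) * straighten A B (γ t) ∈ openSector)
    (hzero : ∀ t ∈ I, chartImSq (straighten A B (γ t)) = 0) : IsStraightened A B γ I := by
  induction k generalizing A B γ with
  | zero => exact h.isStraightened_of_mem g (by simpa using hmem) hzero
  | succ k ih =>
    refine .of_rotate (.of_rotate (ih g.rotate.rotate h.rotate.rotate ?_ ?_))
    · simpa only [straighten_rotateSlope_ζ_inv_mul, ζ_inv_pow_mul_ζ_inv_mul_ζ_inv_mul] using hmem
    · simpa only [chartImSq_straighten_rotateSlope, chartReSq_straighten_rotateSlope] using hzero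

lemma IsVertCurve.isStraightened_of_pow_mem (k : ℕ) (g : IsSmallSlopePair M R A B)
    (h : IsVertCurve B γ I) (hmem : ∀ t ∈ I, ζ⁻¹ ^ (2 * k) * straighten A B (γ t) ∈ openSector)
    {c : ℝ} (hc : 0 < c) (hconst : ∀ t ∈ I, chartReSq (straighten A B (γ t)) = c) :
    IsStraightened A B γ I := by
  induction k generalizing A B γ with
  | zero => exact h.isStraightened_of_mem g (by simpa using hmem) hc hconst
  | succ k ih =>
    refine .of_rotate (.of_rotate (ih g.rotate.rotate h.rotate.rotate ?_ ?_))
    · simpa only [straighten_rotateSlope_ζ_inv_mul, ζ_inv_pow_mul_ζ_inv_mul_ζ_inv_mul] using hmem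
    · simpa only [chartImSq_straighten_rotateSlope, chartReSq_straighten_rotateSlope] using hconst

section Interval

variable {a b : ℝ}

lemma IsHorizCurve.exists_chartImSq_eq (g : IsSmallSlopePair M R A B) (hab : a < b)
    (h : IsHorizCurve A γ (Ioo a b)) :
    ∃ c, 0 ≤ c ∧ ∀ t ∈ Ioo a b, chartImSq (straighten A B (γ t)) = c := by
  have hder : ∀ t ∈ Ioo a b, HasDerivAt (fun t => chartImSq (straighten A B (γ t))) 0 t := by
    intro t ht
    obtain ⟨v, hder, hne, hdir⟩ := h t ht
    exact hasDerivAt_chartImSq_straighten g hder hne hdir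
  obtain ⟨c, hc⟩ := isOpen_Ioo.exists_is_const_of_deriv_eq_zero isPreconnected_Ioo
    (fun t ht => (hder t ht).differentiableAt.differentiableWithinAt) fun t ht => (hder t ht).deriv
  obtain ⟨t₀, ht₀⟩ := nonempty_Ioo.2 hab
  exact ⟨c, (chartImSq_nonneg _).trans_eq (hc t₀ ht₀), hc⟩

lemma IsHorizCurve.isStraightened (g : IsSmallSlopePair M R A B) (hab : a < b)
    (h : IsHorizCurve A γ (Ioo a b)) : IsStraightened A B γ (Ioo a b) := by
  have hcont : ContinuousOn (fun t => straighten A B (γ t)) (Ioo a b) :=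
    (continuous_straighten g).comp_continuousOn fun t ht =>
      (h t ht).choose_spec.1.continuousAt.continuousWithinAt
  have hne : ∀ t ∈ Ioo a b, straighten A B (γ t) ≠ 0 := fun t ht =>
    straighten_zero (A := A) (B := B) ▸ (injective_straighten g).ne (h t ht).choose_spec.2.1
  obtain ⟨c, hc, hconst⟩ := h.exists_chartImSq_eq g hab
  rcases hc.eq_or_lt with rfl | hc
  · obtain ⟨k, hk⟩ := exists_forall_ζ_inv_pow_mul_mem_openSector isPreconnected_Ioo hcont
      fun t ht hre => by
        have hadd := chartImSq_add_chartReSq (straighten A B (γ t))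
        rw [hconst t ht, hre, add_zero] at hadd
        simp [hne t ht] at hadd
    exact h.isStraightened_of_pow_mem k g hk hconst
  · have hrot : ∀ t ∈ Ioo a b, chartReSq (ζ⁻¹ * straighten A B (γ t)) = c := fun t ht => by
      rw [chartReSq_ζ_inv_mul, hconst t ht]
    obtain ⟨k, hk⟩ := exists_forall_ζ_inv_pow_mul_mem_openSector isPreconnected_Ioo
      (y := fun t => ζ⁻¹ * straighten A B (γ t)) (by fun_prop)
      fun t ht => (hrot t ht).trans_ne hc.ne'
    refine .of_rotate (h.rotate.isStraightened_of_pow_mem k g.rotate ?_ hc ?_)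
    · simpa only [straighten_rotateSlope_ζ_inv_mul] using hk
    · simpa only [straighten_rotateSlope_ζ_inv_mul] using hrot

namespace IsWebCurve

lemma re_pos_or_re_neg (g : IsSmallSlopePair M R A B) (h : IsWebCurve A B γ γ' (Ioo a b))
    (h0 : ∀ t ∈ Ioo a b, γ t ≠ 0) : (∀ t ∈ Ioo a b, 0 < (γ t * γ' t ^ 2).re) ∨
      (∀ t ∈ Ioo a b, (γ t * γ' t ^ 2).re < 0) := by
  have hγ : ContinuousOn γ (Ioo a b) := fun t ht => (h.der t ht).continuousAt.continuousWithinAt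
  have hγ' := h.cont
  have hcont : ContinuousOn (fun t => (γ t * γ' t ^ 2).re) (Ioo a b) := by fun_prop
  by_contra! hcon
  obtain ⟨⟨s, hs, hs'⟩, t, ht, ht'⟩ := hcon
  obtain ⟨u, hu, hu0⟩ := isPreconnected_Ioo.intermediate_value hs ht hcont ⟨hs', ht'⟩
  rcases h.dir u hu with hzero | hdir | hdir
  · exact h0 u hu hzero
  · exact (hdir.re_pos g.horiz).ne' hu0
  · exact (hdir.re_neg g.vert).ne hu0

lemma isHorizCurve_or_isVertCurve (g : IsSmallSlopePair M R A B)
    (h : IsWebCurve A B γ γ' (Ioo a b)) (h0 : ∀ t ∈ Ioo a b, γ t ≠ 0) :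
    IsHorizCurve A γ (Ioo a b) ∨ IsVertCurve B γ (Ioo a b) := by
  refine (h.re_pos_or_re_neg g h0).imp (fun hsgn t ht => ?_) fun hsgn t ht => ?_
  all_goals
    refine ⟨γ' t, h.der t ht, h0 t ht, ?_⟩
    rcases h.dir t ht with hzero | hdir | hdir
  · exact absurd hzero (h0 t ht)
  · exact hdir
  · exact absurd (hdir.re_neg g.vert) (hsgn t ht).not_gt
  · exact absurd hzero (h0 t ht)
  · exact absurd (hdir.re_pos g.horiz) (hsgn t ht).not_gt
  · exact hdir

lemma isStraightened (g : IsSmallSlopePair M R A B) (hab : a < b)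
    (h : IsWebCurve A B γ γ' (Ioo a b)) (h0 : ∀ t ∈ Ioo a b, γ t ≠ 0) :
    IsStraightened A B γ (Ioo a b) := by
  rcases h.isHorizCurve_or_isVertCurve g h0 with hhoriz | hvert
  · exact hhoriz.isStraightened g hab
  · exact .of_rotate (hvert.rotate.isStraightened g.rotate hab)

end IsWebCurve

lemma exists_lt_and_exists_gt_of_injOn_Ioo {θ : ℝ → ℝ} (hcont : ContinuousOn θ (Ioo a b))
    (hinj : InjOn θ (Ioo a b)) {t : ℝ} (ht : t ∈ Ioo a b) :
    (∃ s ∈ Ioo a b, θ s < θ t) ∧ ∃ s ∈ Ioo a b, θ t < θ s := by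
  obtain ⟨s, has, hst⟩ := exists_between ht.1
  obtain ⟨u, htu, hub⟩ := exists_between ht.2
  have hs : s ∈ Ioo a b := ⟨has, hst.trans ht.2⟩
  have hu : u ∈ Ioo a b := ⟨ht.1.trans htu, hub⟩
  rcases hcont.strictMonoOn_of_injOn_Ioo (ht.1.trans ht.2) hinj with hmono | hanti
  · exact ⟨⟨s, hs, hmono hs ht hst⟩, u, hu, hmono ht hu htu⟩
  · exact ⟨⟨u, hu, hanti ht hu htu⟩, s, hs, hanti hs ht hst⟩

lemma exists_image_Ioo_eq_Ioo {θ : ℝ → ℝ} {C : ℝ} (hab : a < b) (hcont : ContinuousOn θ (Ioo a b))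
    (hinj : InjOn θ (Ioo a b)) (hbound : ∀ t ∈ Ioo a b, |θ t| ≤ C) :
    ∃ a' b', a' < b' ∧ θ '' Ioo a b = Ioo a' b' := by
  set s := θ '' Ioo a b
  have hconn : IsConnected s := (isConnected_Ioo hab).image θ hcont
  have habove : BddAbove s := ⟨C, forall_mem_image.2 fun t ht => (abs_le.1 (hbound t ht)).2⟩
  have hbelow : BddBelow s := ⟨-C, forall_mem_image.2 fun t ht => (abs_le.1 (hbound t ht)).1⟩
  have heq : s = Ioo (sInf s) (sSup s) := by
    refine Subset.antisymm (image_subset_iff.2 fun t ht => ?_)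
      (hconn.Ioo_csInf_csSup_subset hbelow habove)
    obtain ⟨⟨u, hu, hut⟩, w, hw, htw⟩ := exists_lt_and_exists_gt_of_injOn_Ioo hcont hinj ht
    exact ⟨(csInf_le hbelow (mem_image_of_mem θ hu)).trans_lt hut,
      htw.trans_le (le_csSup habove (mem_image_of_mem θ hw))⟩
  refine ⟨sInf s, sSup s, ?_, heq⟩
  obtain ⟨x, hx⟩ := hconn.nonempty
  rw [heq] at hx
  exact hx.1.trans hx.2

end Interval

end WebCurves

/-! ### Web curves are straightened to model arcs -/

section Rolle

variable {F : ℝ → ℝ} {a b : ℝ}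

lemma ne_of_hasDerivAt_ne_zero (hab : a < b) (hcont : ContinuousOn F (Icc a b))
    (hder : ∀ t ∈ Ioo a b, ∃ d ≠ 0, HasDerivAt F d t) : F a ≠ F b := by
  choose! d hd0 hd using hder
  intro heq
  obtain ⟨c, hc, hdc⟩ := exists_hasDerivAt_eq_zero hab hcont heq hd
  exact hd0 c hc hdc

lemma injOn_Ioo_of_hasDerivAt_ne_zero (hder : ∀ t ∈ Ioo a b, ∃ d ≠ 0, HasDerivAt F d t) :
    InjOn F (Ioo a b) := by
  intro s hs t ht heq
  by_contra hne
  wlog hst : s < t generalizing s t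
  · exact this ht hs heq.symm (Ne.symm hne) (lt_of_le_of_ne (not_lt.1 hst) (Ne.symm hne))
  have hsub : Icc s t ⊆ Ioo a b := Icc_subset_Ioo hs.1 ht.2
  refine ne_of_hasDerivAt_ne_zero hst (fun u hu => ?_)
    (fun u hu => hder u (hsub (Ioo_subset_Icc_self hu))) heq
  obtain ⟨d, -, hd⟩ := hder u (hsub hu)
  exact hd.continuousAt.continuousWithinAt

end Rolle

lemma exists_first_zero {E : Type*} [TopologicalSpace E] [T1Space E] [Zero E] {γ : ℝ → E}
    {s t : ℝ} (hst : s < t) (hcont : ContinuousOn γ (Icc s t))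
    (hnear : ∀ᶠ u in nhdsWithin s (Ioi s), γ u ≠ 0) (ht : γ t = 0) :
    ∃ t₁ ∈ Ioc s t, γ t₁ = 0 ∧ ∀ u ∈ Ioo s t₁, γ u ≠ 0 := by
  obtain ⟨r, hsr, hr⟩ := mem_nhdsGT_iff_exists_Ioo_subset.1 hnear
  have hrt : r ≤ t := not_lt.1 fun htr => hr ⟨hst, htr⟩ ht
  have hcompact : IsCompact (Icc r t ∩ γ ⁻¹' {0}) :=
    isCompact_Icc.of_isClosed_subset
      ((hcont.mono (Icc_subset_Icc_left (le_of_lt hsr))).preimage_isClosed_of_isClosed isClosed_Icc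
        isClosed_singleton) inter_subset_left
  obtain ⟨t₁, ⟨ht₁, hzero⟩, hmin⟩ := hcompact.exists_isLeast ⟨t, ⟨hrt, le_rfl⟩, ht⟩
  refine ⟨t₁, ⟨lt_of_lt_of_le hsr ht₁.1, ht₁.2⟩, hzero, fun u hu hu0 => ?_⟩
  rcases lt_or_ge u r with hur | hru
  · exact hr ⟨hu.1, hur⟩ hu0
  · exact hu.2.not_ge (hmin ⟨⟨hru, hu.2.le.trans ht₁.2⟩, hu0⟩)

open scoped ComplexOrder in
lemma eq_norm_of_hasDerivAt_of_nonneg_right {y : ℝ → ℂ} {v : ℂ} {t₀ : ℝ} (hy : HasDerivAt y v t₀)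
    (h0 : y t₀ = 0) (hnonneg : ∀ᶠ t in nhdsWithin t₀ (Ioi t₀), 0 ≤ y t) : v = ‖v‖ := by
  have hslope : Tendsto (slope y t₀) (nhdsWithin t₀ (Ioi t₀)) (nhds v) :=
    hy.tendsto_slope.mono_left (nhdsWithin_mono _ fun _ ht => ne_of_gt ht)
  refine Complex.eq_coe_norm_of_nonneg (ge_of_tendsto hslope ?_)
  filter_upwards [hnonneg, self_mem_nhdsWithin] with t ht htt
  rw [slope_def_module, h0, sub_zero]
  exact smul_nonneg (inv_nonneg.2 (sub_nonneg.2 (le_of_lt htt))) ht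

open scoped ComplexOrder in
lemma eq_neg_norm_of_hasDerivAt_of_nonneg_left {y : ℝ → ℂ} {v : ℂ} {t₀ : ℝ}
    (hy : HasDerivAt y v t₀) (h0 : y t₀ = 0)
    (hnonneg : ∀ᶠ t in nhdsWithin t₀ (Iio t₀), 0 ≤ y t) : v = -‖v‖ := by
  have hreflect : HasDerivAt (fun t => y (-t)) (-v) (-t₀) := by
    have hneg : HasDerivAt (fun t : ℝ => -t) (-1) (-t₀) := hasDerivAt_neg _
    simpa [Function.comp_def] using HasDerivAt.scomp (-t₀) (by rwa [neg_neg]) hneg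
  have htendsto : Tendsto (fun t : ℝ => -t) (nhdsWithin (-t₀) (Ioi (-t₀)))
      (nhdsWithin t₀ (Iio t₀)) := by
    simpa using tendsto_neg_nhdsGT (a := -t₀)
  have hnorm := eq_norm_of_hasDerivAt_of_nonneg_right hreflect (by rwa [neg_neg])
    (htendsto.eventually hnonneg)
  rw [norm_neg] at hnorm
  rw [← hnorm, neg_neg]

lemma injOn_Ioo_of_sign {α : Type*} {y : ℝ → α} {θ : α → ℝ} {a b t₀ : ℝ}
    (hleft : InjOn y (Ioo a t₀)) (hright : InjOn y (Ioo t₀ b)) (h0 : θ (y t₀) = 0)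
    (hneg : ∀ t ∈ Ioo a t₀, θ (y t) < 0) (hpos : ∀ t ∈ Ioo t₀ b, 0 < θ (y t)) :
    InjOn y (Ioo a b) := by
  intro s hs t ht heq
  have hθ := congrArg θ heq
  rcases lt_trichotomy s t₀ with hs₀ | hs₀ | hs₀ <;> rcases lt_trichotomy t t₀ with ht₀ | ht₀ | ht₀
  all_goals grind [InjOn]

lemma eq_ofReal_re_of_im_eq_zero {w : ℂ} (h : w.im = 0) : w = w.re :=
  Complex.ext (Complex.ofReal_re _).symm (h.trans (Complex.ofReal_im _).symm)

/-- A curve of the model web `z dz² ∈ ℝ`: up to a rotation by a multiple of `π / 3`, either an open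
arc that is a vertical segment in the chart, or an open segment of the real axis. -/
def IsModelArc (X : Set ℂ) : Prop :=
  ∃ (j : ℕ) (a b : ℝ), a < b ∧
    ((∃ c : ℝ, 0 < c ∧ X = (fun s : ℝ => ζ ^ j * chartInv ⟨c, s⟩) '' Ioo a b) ∨
      X = (fun s : ℝ => ζ ^ j * s) '' Ioo a b)

section ModelArc

variable {y : ℝ → ℂ} {a b C : ℝ} {k : ℕ}

lemma isModelArc_of_im_eq_zero (hab : a < b) (hcont : ContinuousOn y (Ioo a b))
    (hinj : InjOn y (Ioo a b)) (hbound : ∀ t ∈ Ioo a b, ‖y t‖ ≤ C)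
    (hreal : ∀ t ∈ Ioo a b, (ζ⁻¹ ^ k * y t).im = 0) : IsModelArc (y '' Ioo a b) := by
  set θ := fun t => (ζ⁻¹ ^ k * y t).re
  have hy : ∀ t ∈ Ioo a b, y t = ζ ^ k * (θ t : ℂ) := fun t ht => by
    rw [← eq_ofReal_re_of_im_eq_zero (hreal t ht), ζ_pow_mul_ζ_inv_pow_mul]
  have hθcont : ContinuousOn θ (Ioo a b) :=
    Complex.continuous_re.comp_continuousOn (continuousOn_const.mul hcont)
  have hθinj : InjOn θ (Ioo a b) := fun s hs t ht heq =>
    hinj hs ht (by rw [hy s hs, hy t ht, heq])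
  have hθbound : ∀ t ∈ Ioo a b, |θ t| ≤ C := fun t ht =>
    (Complex.abs_re_le_norm _).trans ((norm_ζ_inv_pow_mul _ _).trans_le (hbound t ht))
  obtain ⟨a', b', hab', himage⟩ := exists_image_Ioo_eq_Ioo hab hθcont hθinj hθbound
  refine ⟨k, a', b', hab', Or.inr ?_⟩
  rw [← himage, image_image]
  exact image_congr hy

lemma isModelArc_of_re_chart_eq (hab : a < b) (hcont : ContinuousOn y (Ioo a b))
    (hinj : InjOn y (Ioo a b)) (hbound : ∀ t ∈ Ioo a b, ‖y t‖ ≤ C)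
    (hmem : ∀ t ∈ Ioo a b, ζ⁻¹ ^ k * y t ∈ sector) {c : ℝ} (hc : 0 < c)
    (hre : ∀ t ∈ Ioo a b, (chart (ζ⁻¹ ^ k * y t)).re = c) : IsModelArc (y '' Ioo a b) := by
  set θ := fun t => (chart (ζ⁻¹ ^ k * y t)).im
  have hy : ∀ t ∈ Ioo a b, y t = ζ ^ k * chartInv ⟨c, θ t⟩ := fun t ht => by
    have hchart : chart (ζ⁻¹ ^ k * y t) = ⟨c, θ t⟩ := Complex.ext (hre t ht) rfl
    rw [← hchart, chartInv_chart_of_mem_sector (hmem t ht), ζ_pow_mul_ζ_inv_pow_mul]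
  have hθcont : ContinuousOn θ (Ioo a b) := fun t ht =>
    Complex.continuous_im.continuousAt.comp_continuousWithinAt <|
      (continuousAt_chart (re_nonneg_of_mem_sector (hmem t ht))).comp_continuousWithinAt
        (f := fun t => ζ⁻¹ ^ k * y t) ((hcont t ht).const_mul (ζ⁻¹ ^ k))
  have hθinj : InjOn θ (Ioo a b) := fun s hs t ht heq =>
    hinj hs ht (by rw [hy s hs, hy t ht, heq])
  have hθbound : ∀ t ∈ Ioo a b, |θ t| ≤ C ^ (3 / 2 : ℝ) := fun t ht => by
    refine (Complex.abs_im_le_norm _).trans ?_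
    rw [norm_chart, norm_ζ_inv_pow_mul]
    exact Real.rpow_le_rpow (norm_nonneg _) (hbound t ht) (by norm_num)
  obtain ⟨a', b', hab', himage⟩ := exists_image_Ioo_eq_Ioo hab hθcont hθinj hθbound
  refine ⟨k, a', b', hab', Or.inl ⟨c, hc, ?_⟩⟩
  rw [← himage, image_image]
  exact image_congr hy

end ModelArc

section Straightening

variable {M R : ℝ} {A B : ℂ → ℝ} {γ γ' : ℝ → ℂ} {a b : ℝ}

namespace IsStraightened

lemma injOn (h : IsStraightened A B γ (Ioo a b)) : InjOn γ (Ioo a b) := by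
  obtain ⟨j, -, ⟨c, -, hseg⟩ | hseg⟩ := h
  · exact InjOn.of_comp (g := fun z => (chart (ζ⁻¹ ^ j * z)).im)
      (injOn_Ioo_of_hasDerivAt_ne_zero fun t ht => (hseg t ht).2)
  · exact InjOn.of_comp (g := fun z => (chart (ζ⁻¹ ^ j * z)).re)
      (injOn_Ioo_of_hasDerivAt_ne_zero fun t ht => (hseg t ht).2)

/-- Vertical segments of the chart stay away from `0`. -/
lemma exists_im_eq_zero_of_tendsto (g : IsSmallSlopePair M R A B)
    (h : IsStraightened A B γ (Ioo a b)) {l : Filter ℝ} [l.NeBot] (hl : Ioo a b ∈ l)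
    (h0 : Tendsto γ l (nhds 0)) :
    ∃ j : ℕ, (∀ t ∈ Ioo a b, ζ⁻¹ ^ j * straighten A B (γ t) ∈ openSector) ∧
      ∀ t ∈ Ioo a b, (ζ⁻¹ ^ j * straighten A B (γ t)).im = 0 ∧
        ∃ d : ℝ, d ≠ 0 ∧ HasDerivAt (fun t => (chart (ζ⁻¹ ^ j * γ t)).re) d t := by
  obtain ⟨j, hmem, ⟨c, hc, hseg⟩ | hseg⟩ := h
  · have hcont : ContinuousAt (fun z => (chart (ζ⁻¹ ^ j * straighten A B z)).re) 0 :=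
      Complex.continuous_re.continuousAt.comp <|
        (continuousAt_chart (by simp)).comp (f := fun z => ζ⁻¹ ^ j * straighten A B z)
          ((continuous_straighten g).continuousAt.const_mul (ζ⁻¹ ^ j))
    have hzero : Tendsto (fun t => (chart (ζ⁻¹ ^ j * straighten A B (γ t))).re) l (nhds 0) := by
      simpa [Function.comp_def] using hcont.tendsto.comp h0
    have hconst : Tendsto (fun t => (chart (ζ⁻¹ ^ j * straighten A B (γ t))).re) l (nhds c) :=
      tendsto_const_nhds.congr' (eventually_of_mem hl fun t ht => (hseg t ht).1.symm)
    exact absurd (tendsto_nhds_unique hzero hconst) hc.ne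
  · exact ⟨j, hmem, hseg⟩

end IsStraightened

lemma hasDerivAt_straighten_of_eq_zero (g : IsSmallSlopePair M R A B) {v : ℂ} {t : ℝ}
    (hγ : HasDerivAt γ v t) (h0 : γ t = 0) : HasDerivAt (fun t => straighten A B (γ t)) v t := by
  have hdiff : HasFDerivAt (fun z => straighten A B z - z) (0 : ℂ →L[ℝ] ℂ) 0 := by
    refine (IsBigO.of_bound (18 * M) (.of_forall fun z => ?_) :
      (fun z => straighten A B z - z - (straighten A B 0 - 0) - (0 : ℂ →L[ℝ] ℂ) (z - 0))
        =O[nhds 0] fun z => ‖z - 0‖ ^ 2).trans_isLittleO ?_ |> .of_isLittleO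
    · simpa using norm_straighten_sub_le_sq g z
    · simpa using (isLittleO_norm_pow_id (E' := ℂ) one_lt_two)
  rw [← h0] at hdiff
  simpa using (hdiff.comp_hasDerivAt t hγ).fun_add hγ

namespace IsWebCurve

lemma mono {I J : Set ℝ} (h : IsWebCurve A B γ γ' I) (hJ : J ⊆ I) : IsWebCurve A B γ γ' J :=
  ⟨fun t ht => h.der t (hJ ht), h.cont.mono hJ, fun t ht => h.ne t (hJ ht),
    fun t ht => h.dir t (hJ ht)⟩

lemma continuousOn {I : Set ℝ} (h : IsWebCurve A B γ γ' I) : ContinuousOn γ I := fun t ht =>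
  (h.der t ht).continuousAt.continuousWithinAt

lemma tendsto_zero {I : Set ℝ} (h : IsWebCurve A B γ γ' I) {t : ℝ} (ht : t ∈ I) (h0 : γ t = 0)
    (s : Set ℝ) : Tendsto γ (nhdsWithin t s) (nhds 0) :=
  (h0 ▸ (h.der t ht).continuousAt.tendsto).mono_left nhdsWithin_le_nhds

lemma isModelArc_of_ne_zero (g : IsSmallSlopePair M R A B) (hab : a < b)
    (h : IsWebCurve A B γ γ' (Ioo a b)) (h0 : ∀ t ∈ Ioo a b, γ t ≠ 0) {C : ℝ}
    (hbound : ∀ t ∈ Ioo a b, ‖straighten A B (γ t)‖ ≤ C) :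
    IsModelArc ((fun t => straighten A B (γ t)) '' Ioo a b) := by
  have hstr := h.isStraightened g hab h0
  have hinj := (injective_straighten g).comp_injOn hstr.injOn
  have hcont := (continuous_straighten g).comp_continuousOn h.continuousOn
  obtain ⟨j, hmem, ⟨c, hc, hseg⟩ | hseg⟩ := hstr
  · exact isModelArc_of_re_chart_eq hab hcont hinj hbound
      (fun t ht => openSector_subset_sector (hmem t ht)) hc fun t ht => (hseg t ht).1
  · exact isModelArc_of_im_eq_zero hab hcont hinj hbound fun t ht => (hseg t ht).1

lemma ne_zero_of_lt (g : IsSmallSlopePair M R A B) (h : IsWebCurve A B γ γ' (Ioo a b)) {s t : ℝ}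
    (hs : s ∈ Ioo a b) (ht : t ∈ Ioo a b) (hst : s < t) (hs0 : γ s = 0) : γ t ≠ 0 := by
  intro ht0
  have hnear : ∀ᶠ u in nhdsWithin s (Ioi s), γ u ≠ 0 :=
    ((h.der s hs).eventually_ne (h.ne s hs)).filter_mono
      (nhdsWithin_mono _ fun _ hu => ne_of_gt hu)
  obtain ⟨t₁, ht₁, hzero, hne⟩ := exists_first_zero hst
    (h.continuousOn.mono (Icc_subset_Ioo hs.1 ht.2)) hnear ht0
  have ht₁' : t₁ ∈ Ioo a b := ⟨hs.1.trans ht₁.1, ht₁.2.trans_lt ht.2⟩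
  obtain ⟨j, -, hseg⟩ := ((h.mono (Ioo_subset_Ioo hs.1.le ht₁'.2.le)).isStraightened g ht₁.1
    hne).exists_im_eq_zero_of_tendsto g (Ioo_mem_nhdsGT ht₁.1) (h.tendsto_zero hs hs0 _)
  have hcont : ∀ u ∈ Ioo a b, γ u = 0 → ContinuousAt (fun t => (chart (ζ⁻¹ ^ j * γ t)).re) u :=
    fun u hu hu0 => Complex.continuous_re.continuousAt.comp <|
      (continuousAt_chart (by simp [hu0])).comp (f := fun t => ζ⁻¹ ^ j * γ t)
        ((h.der u hu).continuousAt.const_mul (ζ⁻¹ ^ j))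
  refine ne_of_hasDerivAt_ne_zero (F := fun t => (chart (ζ⁻¹ ^ j * γ t)).re) ht₁.1
    (fun u hu => ?_) (fun u hu => (hseg u hu).2) (by simp [hs0, hzero])
  rcases hu.1.eq_or_lt with rfl | hsu
  · exact (hcont _ hs hs0).continuousWithinAt
  rcases hu.2.eq_or_lt with rfl | hut
  · exact (hcont _ ht₁' hzero).continuousWithinAt
  obtain ⟨d, -, hd⟩ := (hseg u ⟨hsu, hut⟩).2
  exact hd.continuousAt.continuousWithinAt

/-- A web curve crosses the origin along a line: its two halves are straightened to opposite
rays, because each half is tangent to the ray it is straightened to. -/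
lemma exists_opposite_rays (g : IsSmallSlopePair M R A B) (h : IsWebCurve A B γ γ' (Ioo a b))
    {t₀ : ℝ} (ht₀ : t₀ ∈ Ioo a b) (h0 : γ t₀ = 0)
    (hleft : IsStraightened A B γ (Ioo a t₀)) (hright : IsStraightened A B γ (Ioo t₀ b)) :
    ∃ k : ℕ, (∀ t ∈ Ioo a t₀, (ζ⁻¹ ^ k * straighten A B (γ t)).re < 0 ∧
        (ζ⁻¹ ^ k * straighten A B (γ t)).im = 0) ∧
      ∀ t ∈ Ioo t₀ b, 0 < (ζ⁻¹ ^ k * straighten A B (γ t)).re ∧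
        (ζ⁻¹ ^ k * straighten A B (γ t)).im = 0 := by
  obtain ⟨j, hjmem, hj⟩ := hleft.exists_im_eq_zero_of_tendsto g (Ioo_mem_nhdsLT ht₀.1)
    (h.tendsto_zero ht₀ h0 _)
  obtain ⟨k, hkmem, hk⟩ := hright.exists_im_eq_zero_of_tendsto g (Ioo_mem_nhdsGT ht₀.2)
    (h.tendsto_zero ht₀ h0 _)
  have hder := hasDerivAt_straighten_of_eq_zero g (h.der t₀ ht₀) h0
  have hjv : ζ⁻¹ ^ j * γ' t₀ = -‖γ' t₀‖ := by
    rw [← norm_ζ_inv_pow_mul j]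
    refine eq_neg_norm_of_hasDerivAt_of_nonneg_left (hder.const_mul _) (by simp [h0])
      (eventually_of_mem (Ioo_mem_nhdsLT ht₀.1) fun t ht => Complex.nonneg_iff.2 ?_)
    exact ⟨(re_pos_of_mem_openSector (hjmem t ht)).le, (hj t ht).1.symm⟩
  have hkv : ζ⁻¹ ^ k * γ' t₀ = ‖γ' t₀‖ := by
    rw [← norm_ζ_inv_pow_mul k]
    refine eq_norm_of_hasDerivAt_of_nonneg_right (hder.const_mul _) (by simp [h0])
      (eventually_of_mem (Ioo_mem_nhdsGT ht₀.2) fun t ht => Complex.nonneg_iff.2 ?_)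
    exact ⟨(re_pos_of_mem_openSector (hkmem t ht)).le, (hk t ht).1.symm⟩
  have hjk : ζ⁻¹ ^ j = -ζ⁻¹ ^ k := mul_right_cancel₀ (h.ne t₀ ht₀) (by rw [hjv, neg_mul, hkv])
  simp only [hjk, neg_mul, Complex.neg_im, neg_eq_zero] at hj hjmem
  refine ⟨k, fun t ht => ⟨?_, (hj t ht).1⟩, fun t ht =>
    ⟨re_pos_of_mem_openSector (hkmem t ht), (hk t ht).1⟩⟩
  simpa using re_pos_of_mem_openSector (hjmem t ht)

lemma exists_im_eq_zero_and_injOn (g : IsSmallSlopePair M R A B)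
    (h : IsWebCurve A B γ γ' (Ioo a b)) {t₀ : ℝ} (ht₀ : t₀ ∈ Ioo a b) (h0 : γ t₀ = 0) :
    ∃ k : ℕ, (∀ t ∈ Ioo a b, (ζ⁻¹ ^ k * straighten A B (γ t)).im = 0) ∧ InjOn γ (Ioo a b) := by
  have hsubL : Ioo a t₀ ⊆ Ioo a b := Ioo_subset_Ioo_right ht₀.2.le
  have hsubR : Ioo t₀ b ⊆ Ioo a b := Ioo_subset_Ioo_left ht₀.1.le
  have hleft := (h.mono hsubL).isStraightened g ht₀.1 fun t ht hzero =>
    h.ne_zero_of_lt g (hsubL ht) ht₀ ht.2 hzero h0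
  have hright := (h.mono hsubR).isStraightened g ht₀.2 fun t ht =>
    h.ne_zero_of_lt g ht₀ (hsubR ht) ht.1 h0
  obtain ⟨k, hneg, hpos⟩ := h.exists_opposite_rays g ht₀ h0 hleft hright
  refine ⟨k, fun t ht => ?_, injOn_Ioo_of_sign (θ := fun z => (ζ⁻¹ ^ k * straighten A B z).re)
    hleft.injOn hright.injOn (by simp [h0]) (fun t ht => (hneg t ht).1) fun t ht => (hpos t ht).1⟩
  rcases lt_trichotomy t t₀ with hlt | rfl | hgt
  · exact (hneg t ⟨ht.1, hlt⟩).2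
  · simp [h0]
  · exact (hpos t ⟨hgt, ht.2⟩).2

lemma isModelArc_of_eq_zero (g : IsSmallSlopePair M R A B) (hab : a < b)
    (h : IsWebCurve A B γ γ' (Ioo a b)) {t₀ : ℝ} (ht₀ : t₀ ∈ Ioo a b) (h0 : γ t₀ = 0) {C : ℝ}
    (hbound : ∀ t ∈ Ioo a b, ‖straighten A B (γ t)‖ ≤ C) :
    IsModelArc ((fun t => straighten A B (γ t)) '' Ioo a b) := by
  obtain ⟨k, hreal, hinj⟩ := h.exists_im_eq_zero_and_injOn g ht₀ h0
  exact isModelArc_of_im_eq_zero hab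
    ((continuous_straighten g).comp_continuousOn h.continuousOn)
    ((injective_straighten g).comp_injOn hinj) hbound hreal

lemma isModelArc_image (g : IsSmallSlopePair M R A B) (hab : a < b)
    (h : IsWebCurve A B γ γ' (Ioo a b)) {C : ℝ} (hC : ∀ t ∈ Ioo a b, ‖γ t‖ ≤ C) :
    IsModelArc (straighten A B '' (γ '' Ioo a b)) := by
  have hbound : ∀ t ∈ Ioo a b, ‖straighten A B (γ t)‖ ≤ 11 / 10 * C := fun t ht => by
    linarith [norm_le_norm_add_norm_sub' (straighten A B (γ t)) (γ t),
      norm_straighten_sub_le g (γ t), hC t ht]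
  rw [image_image]
  by_cases hzero : ∃ t₀ ∈ Ioo a b, γ t₀ = 0
  · obtain ⟨t₀, ht₀, h0⟩ := hzero
    exact h.isModelArc_of_eq_zero g hab ht₀ h0 hbound
  · push Not at hzero
    exact h.isModelArc_of_ne_zero g hab hzero hbound

end IsWebCurve

end Straightening

/-! ### The leaf through the origin -/

section ChordSlope

/-- The slope of the chord from `0` to the point over `u = r ^ (3/2)` of the graph of `ψ`; it is
`0` at `r = 0`. -/
def chordSlope (ψ : ℝ → ℝ) (r : ℝ) : ℝ := ψ (r ^ (3 / 2 : ℝ)) / r ^ (3 / 2 : ℝ)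

/-- The direction `1 + σ I` of the chord of slope `σ = chordSlope ψ r`. -/
def chordDir (ψ : ℝ → ℝ) (r : ℝ) : ℂ := 1 + (chordSlope ψ r : ℂ) * Complex.I

/-- The point `chartInv ⟨u, ψ u⟩` over `u = r ^ (3/2)`, in a form that is `C¹` up to `r = 0`. -/
def leafCurve (ψ : ℝ → ℝ) (r : ℝ) : ℂ := r * chartInv (chordDir ψ r)

/-- The derivative of `leafCurve ψ` when `ψ` is a leaf with slope `A`. -/
def leafCurveDeriv (A : ℂ → ℝ) (ψ : ℝ → ℝ) (r : ℝ) : ℂ :=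
  chordDir ψ r ^ ((-1 / 3 : ℝ) : ℂ) * (1 + (A (leafCurve ψ r) : ℂ) * Complex.I)

variable {M R : ℝ} {A : ℂ → ℝ} {ψ : ℝ → ℝ} {r : ℝ}

@[simp] lemma chordSlope_zero : chordSlope ψ 0 = 0 := by simp [chordSlope]

@[simp] lemma chordDir_zero : chordDir ψ 0 = 1 := by simp [chordDir]

@[simp] lemma leafCurve_zero : leafCurve ψ 0 = 0 := by simp [leafCurve]

@[simp] lemma re_chordDir : (chordDir ψ r).re = 1 := by simp [chordDir]

lemma chordDir_ne_zero : chordDir ψ r ≠ 0 := fun h => by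
  simpa [h] using re_chordDir (ψ := ψ) (r := r)

lemma chordDir_mem_slitPlane : chordDir ψ r ∈ Complex.slitPlane :=
  mem_slitPlane_of_re_nonneg (by simp) chordDir_ne_zero

lemma leafCurve_eq_chartInv (hr : 0 < r) :
    leafCurve ψ r = chartInv ⟨r ^ (3 / 2 : ℝ), ψ (r ^ (3 / 2 : ℝ))⟩ := by
  have hu : 0 < r ^ (3 / 2 : ℝ) := by positivity
  have hu' : ((r ^ (3 / 2 : ℝ) : ℝ) : ℂ) ≠ 0 := Complex.ofReal_ne_zero.2 hu.ne'
  have hpoint : (⟨r ^ (3 / 2 : ℝ), ψ (r ^ (3 / 2 : ℝ))⟩ : ℂ)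
      = ((r ^ (3 / 2 : ℝ) : ℝ) : ℂ) * chordDir ψ r := by
    apply Complex.ext
    · simp
    · simp [chordDir, chordSlope, mul_div_cancel₀ _ hu.ne']
  have hradius : chartInv ((r ^ (3 / 2 : ℝ) : ℝ) : ℂ) = r := by
    rw [chartInv, ← Complex.ofReal_cpow hu.le, ← Real.rpow_mul hr.le]
    norm_num
  rw [hpoint, chartInv_mul hu' chordDir_ne_zero ?_, hradius, leafCurve]
  rw [Complex.arg_ofReal_of_nonneg hu.le, zero_add]
  exact ⟨Complex.neg_pi_lt_arg _, Complex.arg_le_pi _⟩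

lemma abs_chordSlope_le (g : IsSmallSlope M R A) (hψ : IsLeaf A ψ) (hψ0 : ψ 0 = 0) (hr : 0 ≤ r) :
    |chordSlope ψ r| ≤ 1 / 1000 := by
  have hu : 0 ≤ r ^ (3 / 2 : ℝ) := by positivity
  have hle := hψ.abs_sub_le g hu le_rfl
  rw [hψ0, sub_zero, sub_zero, abs_of_nonneg hu] at hle
  rw [chordSlope, abs_div, abs_of_nonneg hu]
  exact div_le_of_le_mul₀ hu (by norm_num) (hle.trans (mul_le_mul_of_nonneg_right g.small hu))

lemma continuousWithinAt_chordSlope_zero (g : IsSmallSlope M R A) (hψ : IsLeaf A ψ)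
    (hψ0 : ψ 0 = 0) : ContinuousWithinAt (chordSlope ψ) (Ici 0) 0 := by
  have hder : HasDerivWithinAt ψ 0 (Ici 0) 0 := by
    have horigin : (⟨0, 0⟩ : ℂ) = 0 := rfl
    simpa [hψ0, horigin, g.zero] using hψ.hasDerivWithinAt g le_rfl
  have hquot : ContinuousWithinAt (fun u => ψ u / u) (Ici 0) 0 := by
    rw [← continuousWithinAt_sdiff_self, ContinuousWithinAt, div_zero]
    refine (hasDerivWithinAt_iff_tendsto_slope.1 hder).congr fun u => ?_
    rw [slope_def_field, hψ0, sub_zero, sub_zero]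
  have hpow : ContinuousWithinAt (fun r : ℝ => r ^ (3 / 2 : ℝ)) (Ici 0) 0 :=
    (Real.continuousAt_rpow_const _ _ (Or.inr (by norm_num))).continuousWithinAt
  have hzero : (0 : ℝ) ^ (3 / 2 : ℝ) = 0 := Real.zero_rpow (by norm_num)
  exact ContinuousWithinAt.comp (t := Ici 0) (g := fun u => ψ u / u) (by rwa [hzero]) hpow
    fun r hr => Real.rpow_nonneg hr _

lemma hasDerivAt_chordSlope (hψ : IsLeaf A ψ) (hr : 0 < r) :
    HasDerivAt (chordSlope ψ) (3 / 2 * (A (leafCurve ψ r) - chordSlope ψ r) / r) r := by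
  have hu : 0 < r ^ (3 / 2 : ℝ) := by positivity
  have hpow : HasDerivAt (fun r : ℝ => r ^ (3 / 2 : ℝ)) (3 / 2 * r ^ ((3 / 2 : ℝ) - 1)) r :=
    Real.hasDerivAt_rpow_const (Or.inl hr.ne')
  rw [leafCurve_eq_chartInv hr]
  convert! ((hψ.der _ hu).comp r hpow).div hpow hu.ne' using 1
  simp only [chordSlope, Function.comp_apply]
  rw [Real.rpow_sub hr, Real.rpow_one]
  field_simp

lemma continuousOn_chordDir (g : IsSmallSlope M R A) (hψ : IsLeaf A ψ) (hψ0 : ψ 0 = 0) :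
    ContinuousOn (chordDir ψ) (Ici 0) := by
  have hslope : ContinuousOn (chordSlope ψ) (Ici 0) := by
    intro r hr
    rcases (mem_Ici.1 hr).eq_or_lt with rfl | hpos
    · exact continuousWithinAt_chordSlope_zero g hψ hψ0
    · exact (hasDerivAt_chordSlope hψ hpos).continuousAt.continuousWithinAt
  exact continuousOn_const.add
    ((Complex.continuous_ofReal.comp_continuousOn hslope).mul continuousOn_const)

lemma continuousOn_chartInv_chordDir (g : IsSmallSlope M R A) (hψ : IsLeaf A ψ) (hψ0 : ψ 0 = 0) :
    ContinuousOn (fun r => chartInv (chordDir ψ r)) (Ici 0) := fun r hr =>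
  (continuousAt_chartInv (by simp)).comp_continuousWithinAt (continuousOn_chordDir g hψ hψ0 r hr)

lemma continuousOn_leafCurveDeriv (g : IsSmallSlope M R A) (hψ : IsLeaf A ψ) (hψ0 : ψ 0 = 0) :
    ContinuousOn (leafCurveDeriv A ψ) (Ici 0) := by
  have hcurve : ContinuousOn (leafCurve ψ) (Ici 0) :=
    Complex.continuous_ofReal.continuousOn.mul (continuousOn_chartInv_chordDir g hψ hψ0)
  have hpow : ContinuousOn (fun r => chordDir ψ r ^ ((-1 / 3 : ℝ) : ℂ)) (Ici 0) := fun r hr =>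
    (continuousOn_chordDir g hψ hψ0 r hr).cpow continuousWithinAt_const chordDir_mem_slitPlane
  exact hpow.mul (continuousOn_const.add
    ((Complex.continuous_ofReal.comp_continuousOn (g.continuous.comp_continuousOn hcurve)).mul
      continuousOn_const))

lemma hasDerivAt_leafCurve (hψ : IsLeaf A ψ) (hr : 0 < r) :
    HasDerivAt (leafCurve ψ) (leafCurveDeriv A ψ r) r := by
  have hdir : HasDerivAt (chordDir ψ)
      (((3 / 2 * (A (leafCurve ψ r) - chordSlope ψ r) / r : ℝ) : ℂ) * Complex.I) r :=
    ((hasDerivAt_chordSlope hψ hr).ofReal_comp.mul_const Complex.I).const_add 1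
  have hr' : (r : ℂ) ≠ 0 := Complex.ofReal_ne_zero.2 hr.ne'
  have hfactor : chartInv (chordDir ψ r) = chordDir ψ r * chordDir ψ r ^ ((-1 / 3 : ℝ) : ℂ) := by
    have hexp : ((2 / 3 : ℝ) : ℂ) = 1 + ((-1 / 3 : ℝ) : ℂ) := by push_cast; ring
    rw [chartInv, hexp, Complex.cpow_add _ _ chordDir_ne_zero, Complex.cpow_one]
  convert! (Complex.ofRealCLM.hasDerivAt (x := r)).mul
    ((hasDerivAt_chartInv chordDir_mem_slitPlane).comp r hdir) using 1
  simp only [leafCurveDeriv, Function.comp_apply, Complex.ofRealCLM_apply, hfactor]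
  generalize chordDir ψ r ^ ((-1 / 3 : ℝ) : ℂ) = p
  push_cast [chordDir]
  field_simp
  ring

lemma hasDerivWithinAt_leafCurve_zero (g : IsSmallSlope M R A) (hψ : IsLeaf A ψ) (hψ0 : ψ 0 = 0) :
    HasDerivWithinAt (leafCurve ψ) 1 (Ici 0) 0 := by
  rw [hasDerivWithinAt_iff_tendsto_slope]
  have hlim : Tendsto (fun r => chartInv (chordDir ψ r)) (nhdsWithin 0 (Ici 0 \ {0})) (nhds 1) := by
    simpa [ContinuousWithinAt] using
      (continuousOn_chartInv_chordDir g hψ hψ0 0 self_mem_Ici).mono (sdiff_subset (t := {0}))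
  refine hlim.congr' (eventually_of_mem self_mem_nhdsWithin fun r hr => ?_)
  have hr' : (r : ℂ) ≠ 0 := Complex.ofReal_ne_zero.2 hr.2
  simp [slope_def_module, leafCurve, hr']

lemma norm_leafCurve_sub_le (g : IsSmallSlope M R A) (hψ : IsLeaf A ψ) (hψ0 : ψ 0 = 0)
    (hr : 0 ≤ r) : ‖leafCurve ψ r - r‖ ≤ r / 1000 := by
  have hσ : ‖(chordSlope ψ r : ℂ) * Complex.I‖ ≤ 1 / 1000 := by
    simpa using abs_chordSlope_le g hψ hψ0 hr
  have hdist := (norm_chartInv_one_add_sub_one_le (by linarith)).trans hσ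
  calc ‖leafCurve ψ r - r‖ = r * ‖chartInv (chordDir ψ r) - 1‖ := by
        rw [leafCurve, ← mul_sub_one, norm_mul, Complex.norm_real, Real.norm_of_nonneg hr]
    _ ≤ r * (1 / 1000) := mul_le_mul_of_nonneg_left hdist hr
    _ = r / 1000 := by ring

lemma isHorizDir_leafCurve (hr : 0 < r) :
    IsHorizDir A (leafCurve ψ r) (leafCurveDeriv A ψ r) := by
  refine ⟨r, hr, ?_⟩
  rw [leafCurveDeriv]
  set a := (1 + (A (leafCurve ψ r) : ℂ) * Complex.I)
  rw [leafCurve]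
  linear_combination (r * a ^ 2) * chartInv_mul_cpow_sq (chordDir_ne_zero (ψ := ψ) (r := r))

end ChordSlope

/-- A `C¹` parametrization on `[0, ∞)`, with derivative `G'`, of the leaf of the horizontal family
that emanates from `0` in the direction `1`. -/
structure IsHalfLeaf (A : ℂ → ℝ) (G G' : ℝ → ℂ) : Prop where
  zero : G 0 = 0
  deriv_zero : G' 0 = 1
  hasDerivWithinAt : ∀ r, 0 ≤ r → HasDerivWithinAt G (G' r) (Ici 0) r
  cont : ContinuousOn G' (Ici 0)
  isHorizDir : ∀ r, 0 < r → IsHorizDir A (G r) (G' r)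
  mem_sector : ∀ r, 0 < r → G r ∈ sector
  leafHeight_eq : ∀ r, 0 < r → leafHeight A (chart (G r)) = 0
  norm_sub_le : ∀ r, 0 ≤ r → ‖G r - r‖ ≤ r / 1000

lemma exists_isHalfLeaf {M R : ℝ} {A : ℂ → ℝ} (g : IsSmallSlope M R A) :
    ∃ G G', IsHalfLeaf A G G' := by
  obtain ⟨ψ, hψ, hψ0⟩ := exists_isLeaf g le_rfl 0
  have hderiv0 : leafCurveDeriv A ψ 0 = 1 := by simp [leafCurveDeriv, g.zero]
  refine ⟨leafCurve ψ, leafCurveDeriv A ψ, leafCurve_zero, hderiv0, fun r hr => ?_,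
    continuousOn_leafCurveDeriv g hψ hψ0, fun r hr => isHorizDir_leafCurve hr, fun r hr => ?_,
    fun r hr => ?_, fun r hr => norm_leafCurve_sub_le g hψ hψ0 hr⟩
  · rcases hr.eq_or_lt with rfl | hpos
    · rw [hderiv0]
      exact hasDerivWithinAt_leafCurve_zero g hψ hψ0
    · exact (hasDerivAt_leafCurve hψ hpos).hasDerivWithinAt
  · rw [leafCurve_eq_chartInv hr]
    exact chartInv_mem_sector (Real.rpow_nonneg hr.le _)
  · rw [leafCurve_eq_chartInv hr, chart_chartInv, hψ.leafHeight_eq g (Real.rpow_nonneg hr.le _),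
      hψ0]

/-! ### Realizing the model arcs: lines through the origin -/

section GlueAtZero

variable {E : Type*}

/-- The function equal to `p` on `[0, ∞)` and to the reflection of `q` on `(-∞, 0)`. -/
def glueAtZero (p q : ℝ → E) (x : ℝ) : E := if 0 ≤ x then p x else q (-x)

variable {p q p' q' : ℝ → E}

lemma glueAtZero_of_nonneg {x : ℝ} (hx : 0 ≤ x) : glueAtZero p q x = p x := if_pos hx

lemma glueAtZero_of_nonpos (h0 : p 0 = q 0) {x : ℝ} (hx : x ≤ 0) : glueAtZero p q x = q (-x) := by
  rcases hx.lt_or_eq with h | rfl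
  · exact if_neg h.not_ge
  · rw [glueAtZero_of_nonneg le_rfl, neg_zero, h0]

lemma continuous_glueAtZero [TopologicalSpace E] (h0 : p 0 = q 0) (hp : ContinuousOn p (Ici 0))
    (hq : ContinuousOn q (Ici 0)) : Continuous (glueAtZero p q) := by
  rw [← continuousOn_univ, ← Ici_union_Iic (a := (0 : ℝ))]
  refine ContinuousOn.union_of_isClosed ?_ ?_ isClosed_Ici isClosed_Iic
  · exact hp.congr fun x hx => glueAtZero_of_nonneg hx
  · exact (hq.comp continuous_neg.continuousOn fun x hx => neg_nonneg.2 (mem_Iic.1 hx)).congr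
      fun x hx => glueAtZero_of_nonpos h0 (mem_Iic.1 hx)

lemma hasDerivAt_glueAtZero [NormedAddCommGroup E] [NormedSpace ℝ E] (h0 : p 0 = q 0)
    (h0' : p' 0 = -q' 0) (hp : ∀ r, 0 ≤ r → HasDerivWithinAt p (p' r) (Ici 0) r)
    (hq : ∀ r, 0 ≤ r → HasDerivWithinAt q (q' r) (Ici 0) r) (x : ℝ) :
    HasDerivAt (glueAtZero p q) (glueAtZero p' (-q') x) x := by
  have hright : ∀ x, 0 ≤ x →
      HasDerivWithinAt (glueAtZero p q) (glueAtZero p' (-q') x) (Ici 0) x := fun x hx => by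
    rw [glueAtZero_of_nonneg hx]
    exact (hp x hx).congr (fun r hr => glueAtZero_of_nonneg hr) (glueAtZero_of_nonneg hx)
  have hleft : ∀ x, x ≤ 0 →
      HasDerivWithinAt (glueAtZero p q) (glueAtZero p' (-q') x) (Iic 0) x := fun x hx => by
    rw [glueAtZero_of_nonpos (by simpa using h0') hx]
    have hder := (hq (-x) (neg_nonneg.2 hx)).scomp (h := fun r : ℝ => -r) (s := Iic 0) x
      (hasDerivAt_neg x).hasDerivWithinAt fun r hr => neg_nonneg.2 (mem_Iic.1 hr)
    rw [neg_one_smul] at hder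
    exact hder.congr (fun r hr => glueAtZero_of_nonpos h0 hr) (glueAtZero_of_nonpos h0 hx)
  rcases lt_trichotomy x 0 with h | rfl | h
  · exact (hleft x h.le).hasDerivAt (Iic_mem_nhds h)
  · rw [← hasDerivWithinAt_univ, ← Ici_union_Iic (a := (0 : ℝ))]
    exact (hright 0 le_rfl).union (hleft 0 le_rfl)
  · exact (hright x h.le).hasDerivAt (Ici_mem_nhds h)

end GlueAtZero

section ProperInjective

variable {θ : ℝ → ℝ}

lemma tendsto_abs_cocompact_of_le {ε C : ℝ} (hε : 0 < ε) (h : ∀ x, ε * |x| - C ≤ |θ x|) :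
    Tendsto (fun x => |θ x|) (cocompact ℝ) atTop :=
  tendsto_atTop_mono h
    (tendsto_atTop_add_const_right _ _ (tendsto_norm_cocompact_atTop.const_mul_atTop hε))

lemma tendsto_atTop_of_monotone_of_abs (hmono : Monotone θ)
    (hlim : Tendsto (fun x => |θ x|) atTop atTop) : Tendsto θ atTop atTop :=
  (tendsto_atTop_of_monotone hmono).resolve_right fun ⟨_, hl⟩ =>
    not_tendsto_nhds_of_tendsto_atTop hlim _ hl.abs

lemma surjective_of_monotone_of_abs (hcont : Continuous θ) (hmono : Monotone θ)
    (hlim : Tendsto (fun x => |θ x|) (cocompact ℝ) atTop) : Function.Surjective θ := by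
  rw [cocompact_eq_atBot_atTop, tendsto_sup] at hlim
  have hbot : Tendsto (fun x => -θ (-x)) atTop atTop :=
    tendsto_atTop_of_monotone_of_abs (fun _ _ hxy => neg_le_neg (hmono (neg_le_neg hxy)))
      (by simpa only [abs_neg, Function.comp_def] using hlim.1.comp tendsto_neg_atTop_atBot)
  refine hcont.surjective (tendsto_atTop_of_monotone_of_abs hmono hlim.2) ?_
  simpa [Function.comp_def] using (tendsto_neg_atTop_atBot.comp hbot).comp tendsto_neg_atBot_atTop

lemma exists_image_Ioo_eq_of_injective (hcont : Continuous θ) (hinj : Function.Injective θ)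
    (hlim : Tendsto (fun x => |θ x|) (cocompact ℝ) atTop) {a b : ℝ} (hab : a < b) :
    ∃ a' b', a' < b' ∧ θ '' Ioo a' b' = Ioo a b := by
  wlog hmono : StrictMono θ generalizing θ
  · have hanti := (hcont.strictMono_of_inj hinj).resolve_left hmono
    obtain ⟨a', b', hab', himage⟩ := this (θ := fun x => θ (-x)) (by fun_prop)
      (hinj.comp neg_injective) (hlim.comp (Homeomorph.neg ℝ).isClosedEmbedding.tendsto_cocompact)
      fun x y hxy => hanti (neg_lt_neg hxy)
    refine ⟨-b', -a', neg_lt_neg hab', ?_⟩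
    rw [← himage, ← image_neg_Ioo, image_image]
  have hsurj := surjective_of_monotone_of_abs hcont hmono.monotone hlim
  obtain ⟨a', rfl⟩ := hsurj a
  obtain ⟨b', rfl⟩ := hsurj b
  exact ⟨a', b', hmono.lt_iff_lt.1 hab, (hmono.orderIsoOfSurjective θ hsurj).image_Ioo a' b'⟩

end ProperInjective

variable {M R : ℝ} {A B : ℂ → ℝ}

section Unrotate

variable {z v : ℂ}

lemma IsHorizDir.of_rotate (h : IsHorizDir (rotateSlope A) z v) :
    IsVertDir A (ζ * z) (ζ * v) := by
  obtain ⟨k, hk, e⟩ := h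
  refine ⟨k, hk, ?_⟩
  rw [rotateSlope] at e
  linear_combination (z * v ^ 2) * ζ_cube - e

lemma IsVertDir.of_rotate (h : IsVertDir (rotateSlope A) z v) :
    IsHorizDir A (ζ * z) (ζ * v) := by
  obtain ⟨k, hk, e⟩ := h
  refine ⟨k, hk, ?_⟩
  rw [rotateSlope] at e
  linear_combination (z * v ^ 2) * ζ_cube - e

lemma IsWebCurve.of_rotate {γ γ' : ℝ → ℂ} {I : Set ℝ}
    (h : IsWebCurve (rotateSlope B) (rotateSlope A) γ γ' I) :
    IsWebCurve A B (fun t => ζ * γ t) (fun t => ζ * γ' t) I where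
  der t ht := (h.der t ht).const_mul ζ
  cont := continuousOn_const.mul h.cont
  ne t ht := mul_ne_zero ζ_ne_zero (h.ne t ht)
  dir t ht := (h.dir t ht).imp (fun h0 => by rw [h0, mul_zero]) fun hdir =>
    hdir.symm.imp IsVertDir.of_rotate IsHorizDir.of_rotate

lemma IsHorizDir.tangent_ne_zero (g : IsSmallSlope M R A) (h : IsHorizDir A z v) : v ≠ 0 := by
  rintro rfl
  simpa using h.re_pos g

lemma IsVertDir.tangent_ne_zero (g : IsSmallSlope M R B) (h : IsVertDir B z v) : v ≠ 0 := by
  rintro rfl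
  simpa using h.re_neg g

lemma IsHorizDir.isVertDir_neg (h : IsHorizDir (fun z => B (-z)) z v) : IsVertDir B (-z) v := by
  obtain ⟨k, hk, e⟩ := h
  exact ⟨k, hk, by linear_combination -e⟩

lemma rotateSlope_rotateSlope_rotateSlope (A : ℂ → ℝ) :
    rotateSlope (rotateSlope (rotateSlope A)) = fun z => A (-z) := by
  funext z
  simp only [rotateSlope]
  congr 1
  linear_combination z * ζ_cube

lemma IsSmallSlopePair.comp_neg (g : IsSmallSlopePair M R A B) :
    IsSmallSlopePair M R (fun z => B (-z)) fun z => A (-z) := by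
  simpa only [rotateSlope_rotateSlope_rotateSlope] using g.rotate.rotate.rotate

lemma straighten_neg (z : ℂ) :
    straighten A B (-z) = -straighten (fun z => B (-z)) (fun z => A (-z)) z := by
  have hneg (z : ℂ) : -z = ζ * (ζ * (ζ * z)) := by linear_combination -z * ζ_cube
  simp only [← rotateSlope_rotateSlope_rotateSlope]
  rw [hneg, straighten_ζ_mul, straighten_ζ_mul, straighten_ζ_mul, ← hneg]

end Unrotate

/-- `X` is the image under `straighten A B` of a curve of the web with slopes `A` and `B`. -/
def IsRealized (A B : ℂ → ℝ) (X : Set ℂ) : Prop :=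
  ∃ (γ γ' : ℝ → ℂ) (a b : ℝ), a < b ∧ IsWebCurve A B γ γ' (Ioo a b) ∧
    straighten A B '' (γ '' Ioo a b) = X

lemma IsRealized.of_rotate {X : Set ℂ} (h : IsRealized (rotateSlope B) (rotateSlope A) X) :
    IsRealized A B ((fun z => ζ * z) '' X) := by
  obtain ⟨γ, γ', a, b, hab, hγ, rfl⟩ := h
  refine ⟨_, _, a, b, hab, hγ.of_rotate, ?_⟩
  simp only [image_image, straighten_ζ_mul]

lemma IsWebCurve.isRealized_image_Ioo {γ γ' : ℝ → ℂ} (h : IsWebCurve A B γ γ' univ)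
    (g : IsSmallSlopePair M R A B) (hinj : Function.Injective γ) {F : ℝ → ℂ} {θ : ℝ → ℝ}
    (hγ : ∀ x, straighten A B (γ x) = F (θ x)) (hcont : Continuous θ)
    (hlim : Tendsto (fun x => |θ x|) (cocompact ℝ) atTop) {a b : ℝ} (hab : a < b) :
    IsRealized A B (F '' Ioo a b) := by
  have hθ : Function.Injective θ := fun s t hst =>
    hinj (injective_straighten g (by rw [hγ, hγ, hst]))
  obtain ⟨a', b', hab', himage⟩ := exists_image_Ioo_eq_of_injective hcont hθ hlim hab
  refine ⟨γ, γ', a', b', hab', h.mono (subset_univ _), ?_⟩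
  rw [← himage, image_image, image_image]
  exact image_congr fun x _ => hγ x

section LineThroughOrigin

variable {G G' K K' : ℝ → ℂ}

lemma IsHalfLeaf.straighten_eq (g : IsSmallSlopePair M R A B) (hG : IsHalfLeaf A G G') {r : ℝ}
    (hr : 0 ≤ r) :
    straighten A B (G r) = (straighten A B (G r)).re ∧ r / 2 ≤ (straighten A B (G r)).re := by
  rcases hr.eq_or_lt with rfl | hr
  · simp [hG.zero]
  have hnorm : ‖G r‖ ≤ r + r / 1000 := by
    have := norm_add_le (r : ℂ) (G r - r)
    rw [add_sub_cancel, Complex.norm_real, Real.norm_of_nonneg hr.le] at this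
    linarith [hG.norm_sub_le r hr.le]
  have hclose : ‖straighten A B (G r) - r‖ ≤ r / 5 := by
    have := norm_sub_le_norm_sub_add_norm_sub (straighten A B (G r)) (G r) (r : ℂ)
    linarith [norm_straighten_sub_le g (G r), hG.norm_sub_le r hr.le]
  have hre := abs_le.1 ((Complex.abs_re_le_norm _).trans hclose)
  have him := (Complex.abs_im_le_norm _).trans hclose
  simp only [Complex.sub_re, Complex.ofReal_re, Complex.sub_im, Complex.ofReal_im, sub_zero]
    at hre him
  have hmem : straighten A B (G r) ∈ sector := by
    rw [StarBDE.mem_sector]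
    nlinarith [sqrt_three_mul_self, Real.sqrt_nonneg 3]
  refine ⟨eq_ofReal_re_of_im_eq_zero (im_eq_zero_of_chartImSq_eq_zero hmem ?_), by linarith [hre.1]⟩
  rw [chartImSq_straighten g (hG.mem_sector r hr), hG.leafHeight_eq r hr]
  ring

lemma IsHalfLeaf.isWebCurve_glueAtZero (g : IsSmallSlopePair M R A B) (hG : IsHalfLeaf A G G')
    (hK : IsHalfLeaf (fun z => B (-z)) K K') :
    IsWebCurve A B (glueAtZero G (-K)) (glueAtZero G' K') univ := by
  have h0 : G 0 = (-K) 0 := by simp [hG.zero, hK.zero]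
  have h0' : G' 0 = K' 0 := by rw [hG.deriv_zero, hK.deriv_zero]
  have hdir (x : ℝ) (hx : x ≠ 0) : IsHorizDir A (glueAtZero G (-K) x) (glueAtZero G' K' x) ∨
      IsVertDir B (glueAtZero G (-K) x) (glueAtZero G' K' x) := by
    rcases hx.lt_or_gt with h | h
    · rw [glueAtZero_of_nonpos h0 h.le, glueAtZero_of_nonpos h0' h.le]
      exact Or.inr (hK.isHorizDir (-x) (neg_pos.2 h)).isVertDir_neg
    · rw [glueAtZero_of_nonneg h.le, glueAtZero_of_nonneg h.le]
      exact Or.inl (hG.isHorizDir x h)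
  refine ⟨fun x _ => ?_, (continuous_glueAtZero h0' hG.cont hK.cont).continuousOn, fun x _ => ?_,
    fun x _ => ?_⟩
  · simpa only [neg_neg] using hasDerivAt_glueAtZero h0 (q' := -K') (by simpa using h0')
      hG.hasDerivWithinAt (fun r hr => (hK.hasDerivWithinAt r hr).neg) x
  · rcases eq_or_ne x 0 with rfl | hx
    · rw [glueAtZero_of_nonneg le_rfl, hG.deriv_zero]
      exact one_ne_zero
    · exact (hdir x hx).elim (·.tangent_ne_zero g.horiz) (·.tangent_ne_zero g.vert)
  · rcases eq_or_ne x 0 with rfl | hx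
    · exact Or.inl ((glueAtZero_of_nonneg le_rfl).trans hG.zero)
    · exact Or.inr (hdir x hx)

lemma IsHalfLeaf.straighten_glueAtZero (g : IsSmallSlopePair M R A B) (hG : IsHalfLeaf A G G')
    (hK : IsHalfLeaf (fun z => B (-z)) K K') (x : ℝ) :
    straighten A B (glueAtZero G (-K) x) = (straighten A B (glueAtZero G (-K) x)).re ∧
      |x| / 2 ≤ |(straighten A B (glueAtZero G (-K) x)).re| := by
  rcases le_total 0 x with hx | hx
  · obtain ⟨hreal, hre⟩ := hG.straighten_eq g hx
    rw [glueAtZero_of_nonneg hx, abs_of_nonneg hx]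
    exact ⟨hreal, hre.trans (le_abs_self _)⟩
  · obtain ⟨hreal, hre⟩ := hK.straighten_eq g.comp_neg (neg_nonneg.2 hx)
    rw [glueAtZero_of_nonpos (by simp [hG.zero, hK.zero]) hx, Pi.neg_apply, straighten_neg,
      abs_of_nonpos hx, Complex.neg_re, abs_neg, Complex.ofReal_neg, neg_inj]
    exact ⟨hreal, hre.trans (le_abs_self _)⟩

lemma IsWebCurve.injective_of_eq_zero {γ γ' : ℝ → ℂ} (h : IsWebCurve A B γ γ' univ)
    (g : IsSmallSlopePair M R A B) (h0 : γ 0 = 0) : Function.Injective γ := by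
  intro s t hst
  obtain ⟨N, hN⟩ := exists_gt (max |s| |t|)
  have hs := abs_lt.1 ((le_max_left _ _).trans_lt hN)
  have ht := abs_lt.1 ((le_max_right _ _).trans_lt hN)
  have hzero : (0 : ℝ) ∈ Ioo (-N) N := ⟨by linarith [hs.1, hs.2], by linarith [hs.1, hs.2]⟩
  obtain ⟨-, -, hinj⟩ := (h.mono (subset_univ _)).exists_im_eq_zero_and_injOn g hzero h0
  exact hinj hs ht hst

lemma isRealized_ofReal_image (g : IsSmallSlopePair M R A B) {a b : ℝ} (hab : a < b) :
    IsRealized A B ((fun s : ℝ => (s : ℂ)) '' Ioo a b) := by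
  obtain ⟨G, G', hG⟩ := exists_isHalfLeaf g.horiz
  obtain ⟨K, K', hK⟩ := exists_isHalfLeaf g.comp_neg.horiz
  have hweb := hG.isWebCurve_glueAtZero g hK
  have hcont : Continuous (glueAtZero G (-K)) :=
    continuous_iff_continuousAt.2 fun x => (hweb.der x trivial).continuousAt
  refine hweb.isRealized_image_Ioo g
    (hweb.injective_of_eq_zero g ((glueAtZero_of_nonneg le_rfl).trans hG.zero))
    (fun x => (hG.straighten_glueAtZero g hK x).1)
    (Complex.continuous_re.comp ((continuous_straighten g).comp hcont))
    (tendsto_abs_cocompact_of_le (ε := 1 / 2) (C := 0) (by norm_num) fun x => ?_) hab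
  linarith [(hG.straighten_glueAtZero g hK x).2]

end LineThroughOrigin

/-! ### Realizing the model arcs: vertical leaves -/

lemma chartInv_mk_neg {u v : ℝ} (hu : 0 ≤ u) : chartInv ⟨-v, u⟩ = ζ * chartInv ⟨u, v⟩ := by
  have harg : |(⟨u, v⟩ : ℂ).arg| ≤ Real.pi / 2 := Complex.abs_arg_le_pi_div_two_iff.2 hu
  rw [← chartInv_I_mul (abs_le.1 harg).2]
  congr 1
  apply Complex.ext <;> simp

lemma chartInv_mk_neg_right {u v : ℝ} (hu : 0 ≤ u) (hv : u = 0 → 0 ≤ v) :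
    chartInv ⟨v, -u⟩ = ζ⁻¹ * chartInv ⟨u, v⟩ := by
  have harg : -(Real.pi / 2) < (⟨u, v⟩ : ℂ).arg := by
    rcases hu.eq_or_lt with rfl | hpos
    · have : 0 ≤ (⟨0, v⟩ : ℂ).arg := Complex.arg_nonneg_iff.2 (hv rfl)
      linarith [Real.pi_pos]
    · exact (abs_lt.1 (Complex.abs_arg_lt_pi_div_two_iff.2 (Or.inl hpos))).1
  rw [← chartInv_neg_I_mul harg]
  congr 1
  apply Complex.ext <;> simp

/-- The leaf `u = y v` through `c` of the vertical family with slope `B`, in the coordinate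
`u + v I` of the chart. It is defined for all `v`, although `y` may become negative. -/
structure IsVertLeaf (B : ℂ → ℝ) (c : ℝ) (y : ℝ → ℝ) : Prop where
  zero : y 0 = c
  der : ∀ x, HasDerivAt y (-B (chartInv ⟨y x, x⟩)) x

/-- The points of the vertical leaf `y`. -/
def vertCurve (y : ℝ → ℝ) (x : ℝ) : ℂ := chartInv ⟨y x, x⟩

/-- The derivative of `vertCurve y` when `y` is a vertical leaf with slope `B`. -/
def vertCurveDeriv (B : ℂ → ℝ) (y : ℝ → ℝ) (x : ℝ) : ℂ :=
  2 / 3 * (⟨y x, x⟩ : ℂ) ^ ((-1 / 3 : ℝ) : ℂ) * (-(B (vertCurve y x) : ℂ) + Complex.I)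

variable {M R c : ℝ} {A B : ℂ → ℝ} {y : ℝ → ℝ}

lemma exists_isVertLeaf (g : IsSmallSlope M R B) (hc : 0 < c) : ∃ y, IsVertLeaf B c y := by
  have gup := g.comp_mul norm_ζ
  have gdown := g.comp_mul norm_ζ_inv
  obtain ⟨p, hp, hp0⟩ := exists_isLeaf gup le_rfl (-c)
  obtain ⟨q, hq, hq0⟩ := exists_isLeaf gdown le_rfl c
  have h0 : (-p) 0 = q 0 := by simp [hp0, hq0]
  have hup (x : ℝ) (hx : 0 ≤ x) : chartInv ⟨-p x, x⟩ = ζ * chartInv ⟨x, p x⟩ := chartInv_mk_neg hx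
  have hdown (x : ℝ) (hx : 0 ≤ x) : chartInv ⟨q x, -x⟩ = ζ⁻¹ * chartInv ⟨x, q x⟩ :=
    chartInv_mk_neg_right hx fun h => by rw [h, hq0]; exact hc.le
  have h0' : -B (ζ * chartInv ⟨0, p 0⟩) = -B (ζ⁻¹ * chartInv ⟨0, q 0⟩) := by
    rw [← hup 0 le_rfl, ← hdown 0 le_rfl, hp0, hq0, neg_neg, neg_zero]
  refine ⟨glueAtZero (-p) q, by simp [glueAtZero, hp0], fun x => ?_⟩
  convert! hasDerivAt_glueAtZero h0 h0' (fun r hr => (hp.hasDerivWithinAt gup hr).neg)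
    (fun r hr => hq.hasDerivWithinAt gdown hr) x using 1
  rcases le_total 0 x with hx | hx
  · rw [glueAtZero_of_nonneg hx, glueAtZero_of_nonneg hx, Pi.neg_apply, hup x hx]
  · have hpoint := hdown (-x) (neg_nonneg.2 hx)
    rw [neg_neg] at hpoint
    rw [glueAtZero_of_nonpos h0 hx, glueAtZero_of_nonpos h0' hx, Pi.neg_apply, hpoint]

namespace IsVertLeaf

lemma mk_mem_slitPlane (h : IsVertLeaf B c y) (hc : 0 < c) (x : ℝ) :
    (⟨y x, x⟩ : ℂ) ∈ Complex.slitPlane := by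
  rcases eq_or_ne x 0 with rfl | hx
  · exact Or.inl (by rwa [h.zero])
  · exact Or.inr hx

lemma mk_ne_zero (h : IsVertLeaf B c y) (hc : 0 < c) (x : ℝ) : (⟨y x, x⟩ : ℂ) ≠ 0 :=
  Complex.slitPlane_ne_zero (h.mk_mem_slitPlane hc x)

lemma hasDerivAt_mk (h : IsVertLeaf B c y) (x : ℝ) :
    HasDerivAt (fun x : ℝ => (⟨y x, x⟩ : ℂ)) (-(B (vertCurve y x) : ℂ) + Complex.I) x := by
  have hder := (h.der x).ofReal_comp.add
    ((Complex.ofRealCLM.hasDerivAt (x := x)).mul_const Complex.I)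
  convert! hder using 1
  · funext x
    exact Complex.mk_eq_add_mul_I _ _
  · simp [vertCurve]

lemma hasDerivAt_vertCurve (h : IsVertLeaf B c y) (hc : 0 < c) (x : ℝ) :
    HasDerivAt (vertCurve y) (vertCurveDeriv B y x) x :=
  HasDerivAt.comp (h := fun x : ℝ => (⟨y x, x⟩ : ℂ)) x
    (hasDerivAt_chartInv (h.mk_mem_slitPlane hc x)) (h.hasDerivAt_mk x)

lemma continuous_vertCurve (h : IsVertLeaf B c y) (hc : 0 < c) : Continuous (vertCurve y) :=
  continuous_iff_continuousAt.2 fun x => (h.hasDerivAt_vertCurve hc x).continuousAt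

lemma continuous_vertCurveDeriv (g : IsSmallSlope M R B) (h : IsVertLeaf B c y) (hc : 0 < c) :
    Continuous (vertCurveDeriv B y) := by
  have hmk : Continuous fun x : ℝ => (⟨y x, x⟩ : ℂ) :=
    continuous_iff_continuousAt.2 fun x => (h.hasDerivAt_mk x).continuousAt
  have hslope : Continuous fun x => (B (vertCurve y x) : ℂ) :=
    Complex.continuous_ofReal.comp (g.continuous.comp (h.continuous_vertCurve hc))
  exact (continuous_const.mul (hmk.cpow continuous_const (h.mk_mem_slitPlane hc))).mul
    (hslope.neg.add continuous_const)

lemma isVertDir (h : IsVertLeaf B c y) (hc : 0 < c) (x : ℝ) :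
    IsVertDir B (vertCurve y x) (vertCurveDeriv B y x) := by
  refine ⟨4 / 9, by norm_num, ?_⟩
  have hpow := chartInv_mul_cpow_sq (h.mk_ne_zero hc x)
  have hI : Complex.I ^ 2 = -1 := Complex.I_sq
  rw [vertCurveDeriv]
  set b : ℂ := (B (vertCurve y x) : ℂ)
  rw [vertCurve]
  generalize (⟨y x, x⟩ : ℂ) ^ ((-1 / 3 : ℝ) : ℂ) = p at hpow ⊢
  push_cast
  linear_combination 4 / 9 * (-b + Complex.I) ^ 2 * hpow + 4 / 9 * (1 + b ^ 2) * hI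

lemma isWebCurve (g : IsSmallSlope M R B) (h : IsVertLeaf B c y) (hc : 0 < c) :
    IsWebCurve A B (vertCurve y) (vertCurveDeriv B y) univ where
  der x _ := h.hasDerivAt_vertCurve hc x
  cont := (h.continuous_vertCurveDeriv g hc).continuousOn
  ne x _ := (h.isVertDir hc x).tangent_ne_zero g
  dir x _ := Or.inr (Or.inr (h.isVertDir hc x))

lemma vertCurve_zero (h : IsVertLeaf B c y) (hc : 0 < c) :
    vertCurve y 0 = (c ^ (2 / 3 : ℝ) : ℝ) := by
  rw [vertCurve, h.zero, chartInv, Complex.ofReal_cpow hc.le]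
  rfl

lemma chartReSq_straighten_vertCurve (g : IsSmallSlopePair M R A B) (h : IsVertLeaf B c y)
    (hc : 0 < c) (x : ℝ) : chartReSq (straighten A B (vertCurve y x)) = 2 * c ^ 2 := by
  have hder (x : ℝ) := hasDerivAt_chartReSq_straighten g (h.hasDerivAt_vertCurve hc x)
    (chartInv_ne_zero (h.mk_ne_zero hc x)) (h.isVertDir hc x)
  have hmem : vertCurve y 0 ∈ sector := chartInv_mem_sector (by simp [h.zero, hc.le])
  have him : 0 ≤ (vertCurve y 0).im := by rw [h.vertCurve_zero hc, Complex.ofReal_im]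
  have hchart : chart (vertCurve y 0) = c := by
    rw [vertCurve, chart_chartInv, h.zero]
    rfl
  calc chartReSq (straighten A B (vertCurve y x))
      = chartReSq (straighten A B (vertCurve y 0)) :=
        is_const_of_deriv_eq_zero (fun x => (hder x).differentiableAt) (fun x => (hder x).deriv) x 0
    _ = 2 * leafHeight (rotateSlope B) (-Complex.I * c) ^ 2 := by
        rw [← chartImSq_ζ_inv_mul, ← straighten_rotateSlope_ζ_inv_mul,
          chartImSq_straighten g.rotate (ζ_inv_mul_mem_sector hmem him), chart_ζ_inv_mul hmem him,
          hchart]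
    _ = 2 * c ^ 2 := by
        rw [leafHeight_of_re_eq_zero g.rotate.horiz (by simp)]
        simp

lemma straighten_vertCurve_zero_mem_openSector (g : IsSmallSlopePair M R A B)
    (h : IsVertLeaf B c y) (hc : 0 < c) : straighten A B (vertCurve y 0) ∈ openSector := by
  have hclose := norm_straighten_sub_le g (vertCurve y 0)
  have hr : 0 < c ^ (2 / 3 : ℝ) := by positivity
  rw [h.vertCurve_zero hc, Complex.norm_real, Real.norm_of_nonneg hr.le] at hclose
  rw [h.vertCurve_zero hc, mem_openSector_iff_norm_lt]
  set r := c ^ (2 / 3 : ℝ)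
  have hre := abs_le.1 ((Complex.abs_re_le_norm _).trans hclose)
  have hnorm := norm_le_norm_add_norm_sub' (straighten A B r) (r : ℂ)
  rw [Complex.norm_real, Real.norm_of_nonneg hr.le] at hnorm
  simp only [Complex.sub_re, Complex.ofReal_re] at hre
  linarith [hre.1]

lemma straighten_mem_openSector (g : IsSmallSlopePair M R A B) (h : IsVertLeaf B c y)
    (hc : 0 < c) (x : ℝ) : straighten A B (vertCurve y x) ∈ openSector := by
  refine mem_openSector_of_isPreconnected isPreconnected_univ
    ((continuous_straighten g).comp (h.continuous_vertCurve hc)).continuousOn (fun x _ => ?_)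
    (mem_univ 0) (h.straighten_vertCurve_zero_mem_openSector g hc) (mem_univ x)
  rw [Function.comp_apply, h.chartReSq_straighten_vertCurve g hc]
  positivity

lemma re_chart_straighten (g : IsSmallSlopePair M R A B) (h : IsVertLeaf B c y) (hc : 0 < c)
    (x : ℝ) : (chart (straighten A B (vertCurve y x))).re = c := by
  have hsq := two_mul_re_chart_sq (straighten A B (vertCurve y x))
  rw [h.chartReSq_straighten_vertCurve g hc] at hsq
  have hnonneg :=
    re_chart_nonneg (openSector_subset_sector (h.straighten_mem_openSector g hc x))
  exact (sq_eq_sq₀ hnonneg hc.le).1 (by linarith)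

lemma straighten_eq_chartInv (g : IsSmallSlopePair M R A B) (h : IsVertLeaf B c y) (hc : 0 < c)
    (x : ℝ) : straighten A B (vertCurve y x)
      = chartInv ⟨c, (chart (straighten A B (vertCurve y x))).im⟩ := by
  have hmem := openSector_subset_sector (h.straighten_mem_openSector g hc x)
  conv_lhs => rw [← chartInv_chart_of_mem_sector hmem]
  congr 1
  exact Complex.ext (h.re_chart_straighten g hc x) rfl

lemma mul_abs_sub_le_abs_im_chart (g : IsSmallSlopePair M R A B) (h : IsVertLeaf B c y)
    (hc : 0 < c) (x : ℝ) :
    4 / 5 * |x| - c ≤ |(chart (straighten A B (vertCurve y x))).im| := by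
  set s := straighten A B (vertCurve y x)
  have hx : |x| ^ 2 ≤ ‖vertCurve y x‖ ^ 3 := by
    rw [← norm_chart_sq, vertCurve, chart_chartInv]
    exact pow_le_pow_left₀ (abs_nonneg x) (Complex.abs_im_le_norm (⟨y x, x⟩ : ℂ)) 2
  have hnorm : 9 / 10 * ‖vertCurve y x‖ ≤ ‖s‖ := by
    have := norm_le_norm_add_norm_sub s (vertCurve y x)
    linarith [norm_straighten_sub_le g (vertCurve y x)]
  have hcube : (9 / 10 * ‖vertCurve y x‖) ^ 3 ≤ ‖s‖ ^ 3 := by gcongr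
  have hchart : ‖s‖ ^ 3 ≤ (c + |(chart s).im|) ^ 2 := by
    rw [← norm_chart_sq]
    gcongr
    simpa [s, h.re_chart_straighten g hc x, abs_of_pos hc] using
      Complex.norm_le_abs_re_add_abs_im (chart s)
  have hsq : (4 / 5 * |x|) ^ 2 ≤ (c + |(chart s).im|) ^ 2 := by nlinarith [sq_nonneg |x|]
  linarith [le_of_sq_le_sq hsq (by positivity)]

lemma injective_vertCurve : Function.Injective (vertCurve y) := fun s t hst => by
  simpa [vertCurve, chart_chartInv] using congrArg (fun z => (chart z).im) hst

end IsVertLeaf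

lemma isRealized_chartInv_image (g : IsSmallSlopePair M R A B) (hc : 0 < c) {a b : ℝ}
    (hab : a < b) : IsRealized A B ((fun s : ℝ => chartInv ⟨c, s⟩) '' Ioo a b) := by
  obtain ⟨y, hy⟩ := exists_isVertLeaf g.vert hc
  have hcont : Continuous fun x => (chart (straighten A B (vertCurve y x))).im :=
    Complex.continuous_im.comp (continuous_iff_continuousAt.2 fun x => ContinuousAt.comp'
      (continuousAt_chart (re_pos_of_mem_openSector (hy.straighten_mem_openSector g hc x)).le)
      ((continuous_straighten g).comp (hy.continuous_vertCurve hc)).continuousAt)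
  exact (hy.isWebCurve g.vert hc).isRealized_image_Ioo g IsVertLeaf.injective_vertCurve
    (hy.straighten_eq_chartInv g hc) hcont
    (tendsto_abs_cocompact_of_le (by norm_num) (hy.mul_abs_sub_le_abs_im_chart g hc)) hab

lemma isRealized_ζ_pow_mul_image {X : Set ℂ} (j : ℕ) (g : IsSmallSlopePair M R A B)
    (h : ∀ {A B : ℂ → ℝ}, IsSmallSlopePair M R A B → IsRealized A B X) :
    IsRealized A B ((fun z => ζ ^ j * z) '' X) := by
  induction j generalizing A B with
  | zero => simpa using h g
  | succ n ih => simpa [image_image, pow_succ', mul_assoc] using (ih g.rotate).of_rotate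

lemma IsModelArc.isRealized (g : IsSmallSlopePair M R A B) {X : Set ℂ} (h : IsModelArc X) :
    IsRealized A B X := by
  obtain ⟨j, a, b, hab, ⟨c, hc, rfl⟩ | rfl⟩ := h
  · simpa only [image_image] using
      isRealized_ζ_pow_mul_image j g fun g => isRealized_chartInv_image g hc hab
  · simpa only [image_image] using
      isRealized_ζ_pow_mul_image j g fun g => isRealized_ofReal_image g hab

/-! ### Solving a perturbed quadratic form for its two slopes -/

/-- The smaller root of `m * a ^ 2 - 2 * (1 + q) * a + n`, in the form which stays regular at
`m = 0`. -/
def smallRoot (m n q : ℝ) : ℝ := n / ((1 + q) + √((1 + q) ^ 2 - m * n))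

section SmallRoot

variable {m n q : ℝ}

lemma smallRoot_zero_mid (m q : ℝ) : smallRoot m 0 q = 0 := by simp [smallRoot]

lemma discrim_smallRoot_nonneg (hm : |m| ≤ 1 / 10) (hn : |n| ≤ 1 / 10) (hq : |q| ≤ 1 / 10) :
    0 ≤ (1 + q) ^ 2 - m * n := by
  have hmn : m * n ≤ 1 / 10 * (1 / 10) := by
    refine (le_abs_self _).trans ?_
    rw [abs_mul]
    gcongr
  nlinarith [abs_le.1 hq]

lemma smallRoot_mul (hq : |q| ≤ 1 / 10) :
    smallRoot m n q * ((1 + q) + √((1 + q) ^ 2 - m * n)) = n := by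
  have hpos : 0 < (1 + q) + √((1 + q) ^ 2 - m * n) := by
    linarith [(abs_le.1 hq).1, Real.sqrt_nonneg ((1 + q) ^ 2 - m * n)]
  exact div_mul_cancel₀ _ hpos.ne'

lemma smallRoot_isRoot (hm : |m| ≤ 1 / 10) (hn : |n| ≤ 1 / 10) (hq : |q| ≤ 1 / 10) :
    m * smallRoot m n q ^ 2 - 2 * (1 + q) * smallRoot m n q + n = 0 := by
  have hsq := Real.sq_sqrt (discrim_smallRoot_nonneg hm hn hq)
  have hmul := smallRoot_mul (m := m) (n := n) hq
  have hs := Real.sqrt_nonneg ((1 + q) ^ 2 - m * n)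
  set s := √((1 + q) ^ 2 - m * n)
  set a := smallRoot m n q
  have hpos : 0 < (1 + q) + s := by linarith [(abs_le.1 hq).1]
  have hprod : (m * a ^ 2 - 2 * (1 + q) * a + n) * ((1 + q) + s) = 0 := by
    linear_combination (m * a - (1 + q) - s) * hmul + a * hsq
  exact (mul_eq_zero.1 hprod).resolve_right hpos.ne'

lemma abs_smallRoot_le (hn : |n| ≤ 1 / 10) (hq : |q| ≤ 1 / 10) : |smallRoot m n q| ≤ 1 / 2 := by
  have hs := Real.sqrt_nonneg ((1 + q) ^ 2 - m * n)
  have hden : 9 / 10 ≤ (1 + q) + √((1 + q) ^ 2 - m * n) := by linarith [(abs_le.1 hq).1]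
  rw [smallRoot, abs_div, abs_of_pos (a := 1 + q + _) (by linarith), div_le_iff₀ (by linarith)]
  linarith

lemma abs_sub_le_of_quadratic_eq_zero {m' n' q' a a' : ℝ} (hm : |m| ≤ 1 / 10)
    (hq : |q| ≤ 1 / 10) (ha : |a| ≤ 1) (ha' : |a'| ≤ 1 / 2)
    (h : m * a ^ 2 - 2 * (1 + q) * a + n = 0) (h' : m' * a' ^ 2 - 2 * (1 + q') * a' + n' = 0) :
    |a - a'| ≤ |q - q'| + |m - m'| + |n - n'| := by
  have hdiff : 2 * (1 + q) * (a - a') = m * (a + a') * (a - a') - 2 * (q - q') * a'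
      + (m - m') * a' ^ 2 + (n - n') := by
    linear_combination h' - h
  have hq' := abs_le.1 hq
  have hlhs : |2 * (1 + q) * (a - a')| = 2 * (1 + q) * |a - a'| := by
    rw [abs_mul, abs_of_pos (by linarith)]
  have hself : |m * (a + a') * (a - a')| ≤ 1 / 10 * (3 / 2) * |a - a'| := by
    rw [abs_mul, abs_mul]
    have : |a + a'| ≤ 3 / 2 := (abs_add_le a a').trans (by linarith)
    gcongr
  have hqq : |2 * (q - q') * a'| ≤ |q - q'| := by
    rw [abs_mul, abs_mul, abs_two]
    nlinarith [abs_nonneg (q - q')]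
  have hmm : |(m - m') * a' ^ 2| ≤ |m - m'| := by
    rw [abs_mul, abs_pow]
    exact mul_le_of_le_one_right (abs_nonneg _)
      (pow_le_one₀ (abs_nonneg a') (ha'.trans (by norm_num)))
  have htri : |2 * (1 + q) * (a - a')| ≤ |m * (a + a') * (a - a')| + |2 * (q - q') * a'|
      + |(m - m') * a' ^ 2| + |n - n'| := by
    rw [hdiff]
    refine (abs_add_le _ _).trans (add_le_add_left ((abs_add_le _ _).trans ?_) _)
    gcongr
    exact abs_sub _ _
  nlinarith [abs_nonneg (a - a')]

end SmallRoot

/-- The quadratic form `-Im (z v²) + Re (κ v²) + l ‖v‖²` divided by `‖z‖`, as a function of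
`w = z v²`; here `K = κ / z` and `ℓ = l / ‖z‖`. -/
def normalizedForm (K : ℂ) (ℓ : ℝ) (w : ℂ) : ℝ := -w.im + (K * w).re + ℓ * ‖w‖

/-- The slope of the horizontal directions solving `normalizedForm K ℓ w = 0`. -/
def rootSlope (K : ℂ) (ℓ : ℝ) : ℝ := smallRoot (ℓ - K.re) (K.re + ℓ) K.im

section RootSlope

variable {K K' w : ℂ} {ℓ ℓ' : ℝ}

lemma normalizedForm_neg : normalizedForm K (-ℓ) (-w) = -normalizedForm K ℓ w := by
  simp only [normalizedForm, mul_neg, Complex.neg_im, Complex.neg_re, norm_neg]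
  ring

lemma normalizedForm_sq (σ : ℂ) : normalizedForm K ℓ (σ ^ 2) =
    (K.re + ℓ) * σ.re ^ 2 - 2 * (1 + K.im) * (σ.re * σ.im) + (ℓ - K.re) * σ.im ^ 2 := by
  rw [normalizedForm, norm_pow, ← Complex.normSq_eq_norm_sq, Complex.normSq_apply]
  simp only [pow_two, Complex.mul_re, Complex.mul_im]
  ring

lemma abs_coeffs_le (hK : ‖K‖ ≤ 1 / 20) (hℓ : |ℓ| ≤ 1 / 20) :
    |ℓ - K.re| ≤ 1 / 10 ∧ |K.re + ℓ| ≤ 1 / 10 ∧ |K.im| ≤ 1 / 10 := by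
  have hre := (Complex.abs_re_le_norm K).trans hK
  have him := (Complex.abs_im_le_norm K).trans hK
  exact ⟨(abs_sub _ _).trans (by linarith), (abs_add_le _ _).trans (by linarith), by linarith⟩

lemma rootSlope_isRoot (hK : ‖K‖ ≤ 1 / 20) (hℓ : |ℓ| ≤ 1 / 20) :
    (ℓ - K.re) * rootSlope K ℓ ^ 2 - 2 * (1 + K.im) * rootSlope K ℓ + (K.re + ℓ) = 0 := by
  obtain ⟨hm, hn, hq⟩ := abs_coeffs_le hK hℓ
  exact smallRoot_isRoot hm hn hq

lemma abs_rootSlope_le (hK : ‖K‖ ≤ 1 / 20) (hℓ : |ℓ| ≤ 1 / 20) : |rootSlope K ℓ| ≤ 1 / 2 := by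
  obtain ⟨-, hn, hq⟩ := abs_coeffs_le hK hℓ
  exact abs_smallRoot_le hn hq

lemma eq_rootSlope (hK : ‖K‖ ≤ 1 / 20) (hℓ : |ℓ| ≤ 1 / 20) {a : ℝ} (ha : |a| ≤ 1)
    (h : (ℓ - K.re) * a ^ 2 - 2 * (1 + K.im) * a + (K.re + ℓ) = 0) : a = rootSlope K ℓ := by
  obtain ⟨hm, -, hq⟩ := abs_coeffs_le hK hℓ
  have := abs_sub_le_of_quadratic_eq_zero hm hq ha (abs_rootSlope_le hK hℓ) h
    (rootSlope_isRoot hK hℓ)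
  simp only [sub_self, abs_zero, add_zero, abs_nonpos_iff] at this
  exact sub_eq_zero.1 this

lemma abs_rootSlope_sub_le (hK : ‖K‖ ≤ 1 / 20) (hℓ : |ℓ| ≤ 1 / 20) (hK' : ‖K'‖ ≤ 1 / 20)
    (hℓ' : |ℓ'| ≤ 1 / 20) :
    |rootSlope K ℓ - rootSlope K' ℓ'| ≤ 3 * ‖K - K'‖ + 2 * |ℓ - ℓ'| := by
  obtain ⟨hm, -, hq⟩ := abs_coeffs_le hK hℓ
  have hroot := abs_sub_le_of_quadratic_eq_zero hm hq
    ((abs_rootSlope_le hK hℓ).trans (by norm_num)) (abs_rootSlope_le hK' hℓ')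
    (rootSlope_isRoot hK hℓ) (rootSlope_isRoot hK' hℓ')
  have hre : |K.re - K'.re| ≤ ‖K - K'‖ := Complex.abs_re_le_norm (K - K')
  have him : |K.im - K'.im| ≤ ‖K - K'‖ := Complex.abs_im_le_norm (K - K')
  have hm' : |ℓ - K.re - (ℓ' - K'.re)| ≤ |ℓ - ℓ'| + |K.re - K'.re| := by
    rw [sub_sub_sub_comm]
    exact abs_sub _ _
  have hn' : |K.re + ℓ - (K'.re + ℓ')| ≤ |K.re - K'.re| + |ℓ - ℓ'| := by
    rw [add_sub_add_comm]
    exact abs_add_le _ _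
  linarith

lemma exists_eq_of_normalizedForm_eq_zero (hK : ‖K‖ ≤ 1 / 20) (hℓ : |ℓ| ≤ 1 / 20) (hw : w ≠ 0)
    (hre : 0 ≤ w.re) (h : normalizedForm K ℓ w = 0) :
    ∃ k : ℝ, 0 < k ∧ w = k * (1 + (rootSlope K ℓ : ℂ) * Complex.I) ^ 2 := by
  obtain ⟨σ, rfl⟩ := IsAlgClosed.exists_pow_nat_eq w (n := 2) two_pos
  rw [normalizedForm_sq] at h
  have hle : |σ.im| ≤ |σ.re| := by
    rw [pow_two, Complex.mul_re] at hre
    exact sq_le_sq.1 (by linarith)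
  have hσ : σ.re ≠ 0 := by
    intro h0
    rw [h0, abs_zero] at hle
    exact hw (by rw [Complex.ext (w := 0) h0 (abs_nonpos_iff.1 hle)]; simp)
  have hslope : σ.im / σ.re = rootSlope K ℓ := by
    refine eq_rootSlope hK hℓ ?_ (by field_simp; linear_combination h)
    rw [abs_div]
    exact div_le_one_of_le₀ hle (abs_nonneg _)
  refine ⟨σ.re ^ 2, by positivity, ?_⟩
  rw [← hslope, Complex.ofReal_pow, ← mul_pow, Complex.ofReal_div, mul_add, ← mul_assoc,
    mul_div_cancel₀ _ (by exact_mod_cast hσ), mul_one, Complex.re_add_im]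

lemma normalizedForm_eq_zero_of_eq (hK : ‖K‖ ≤ 1 / 20) (hℓ : |ℓ| ≤ 1 / 20) {k : ℝ} (hk : 0 < k)
    (hw : w = k * (1 + (rootSlope K ℓ : ℂ) * Complex.I) ^ 2) : normalizedForm K ℓ w = 0 := by
  have hsqrt : ((√k : ℝ) : ℂ) ^ 2 = k := by exact_mod_cast Real.sq_sqrt hk.le
  rw [hw, ← hsqrt, ← mul_pow, normalizedForm_sq]
  simp only [Complex.mul_re, Complex.mul_im, Complex.add_re, Complex.add_im, Complex.ofReal_re,
    Complex.ofReal_im, Complex.one_re, Complex.one_im, Complex.I_re, Complex.I_im]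
  linear_combination √k ^ 2 * rootSlope_isRoot hK hℓ

lemma normalizedForm_eq_zero_iff (hK : ‖K‖ ≤ 1 / 20) (hℓ : |ℓ| ≤ 1 / 20) (hw : w ≠ 0) :
    normalizedForm K ℓ w = 0 ↔
      (∃ k : ℝ, 0 < k ∧ w = k * (1 + (rootSlope K ℓ : ℂ) * Complex.I) ^ 2) ∨
      ∃ k : ℝ, 0 < k ∧ w = -(k * (1 + (rootSlope K (-ℓ) : ℂ) * Complex.I) ^ 2) := by
  have hℓ' : |-ℓ| ≤ 1 / 20 := by rwa [abs_neg]
  have hneg : normalizedForm K (-ℓ) (-w) = 0 ↔ normalizedForm K ℓ w = 0 := by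
    rw [normalizedForm_neg, neg_eq_zero]
  constructor
  · intro h
    rcases le_total 0 w.re with hre | hre
    · exact Or.inl (exists_eq_of_normalizedForm_eq_zero hK hℓ hw hre h)
    · obtain ⟨k, hk, e⟩ := exists_eq_of_normalizedForm_eq_zero hK hℓ' (neg_ne_zero.2 hw)
        (by simpa using hre) (hneg.2 h)
      exact Or.inr ⟨k, hk, neg_eq_iff_eq_neg.1 e⟩
  · rintro (⟨k, hk, e⟩ | ⟨k, hk, e⟩)
    · exact normalizedForm_eq_zero_of_eq hK hℓ hk e
    · exact hneg.1 (normalizedForm_eq_zero_of_eq hK hℓ' hk (neg_eq_iff_eq_neg.2 e))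

end RootSlope

/-- A quantitative way for `h` to vanish to first order at `0`: on the ball of radius `r` it is
Lipschitz with a constant proportional to the distance from `0`. -/
structure IsQuadraticallyFlat (r L : ℝ) (h : ℂ → ℂ) : Prop where
  pos : 0 < r
  nonneg : 0 ≤ L
  zero : h 0 = 0
  lip : ∀ z z', ‖z'‖ ≤ ‖z‖ → ‖z‖ ≤ r → ‖h z - h z'‖ ≤ L * ‖z‖ * ‖z - z'‖

/-- A Lipschitz cutoff, equal to `1` for `‖z‖ ≤ R / 2` and to `0` for `R ≤ ‖z‖`. -/
def cutoff (R : ℝ) (z : ℂ) : ℝ := max 0 (min 1 (2 - 2 * ‖z‖ / R))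

section Cutoff

variable {r L R : ℝ} {h d : ℂ → ℂ} {z z' : ℂ}

lemma cutoff_nonneg (R : ℝ) (z : ℂ) : 0 ≤ cutoff R z := le_max_left _ _

lemma cutoff_le_one (R : ℝ) (z : ℂ) : cutoff R z ≤ 1 := max_le zero_le_one (min_le_left _ _)

lemma cutoff_eq_one (hR : 0 < R) (hz : ‖z‖ ≤ R / 2) : cutoff R z = 1 := by
  have : 2 * ‖z‖ / R ≤ 1 := by rw [div_le_one hR]; linarith
  rw [cutoff, min_eq_left (by linarith), max_eq_right zero_le_one]

lemma cutoff_eq_zero (hR : 0 < R) (hz : R ≤ ‖z‖) : cutoff R z = 0 := by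
  have : 2 ≤ 2 * ‖z‖ / R := by rw [le_div_iff₀ hR]; linarith
  exact max_eq_left ((min_le_right _ _).trans (by linarith))

lemma abs_cutoff_sub_le (hR : 0 < R) (z z' : ℂ) :
    |cutoff R z - cutoff R z'| ≤ 2 / R * ‖z - z'‖ := by
  calc |cutoff R z - cutoff R z'|
      ≤ |min 1 (2 - 2 * ‖z‖ / R) - min 1 (2 - 2 * ‖z'‖ / R)| := by
        simpa [cutoff] using abs_max_sub_max_le_max 0 (min 1 (2 - 2 * ‖z‖ / R)) 0
          (min 1 (2 - 2 * ‖z'‖ / R))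
    _ ≤ |(2 - 2 * ‖z‖ / R) - (2 - 2 * ‖z'‖ / R)| := by
        simpa using abs_min_sub_min_le_max 1 (2 - 2 * ‖z‖ / R) 1 (2 - 2 * ‖z'‖ / R)
    _ = 2 / R * |‖z'‖ - ‖z‖| := by
        rw [show (2 - 2 * ‖z‖ / R) - (2 - 2 * ‖z'‖ / R) = 2 / R * (‖z'‖ - ‖z‖) by ring, abs_mul,
          abs_of_pos (by positivity : 0 < 2 / R)]
    _ ≤ 2 / R * ‖z - z'‖ := by
        rw [norm_sub_rev]
        gcongr
        exact abs_norm_sub_norm_le _ _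

namespace IsQuadraticallyFlat

lemma norm_le (hh : IsQuadraticallyFlat r L h) (hz : ‖z‖ ≤ r) : ‖h z‖ ≤ L * ‖z‖ * ‖z‖ := by
  simpa [hh.zero] using hh.lip z 0 (by simp) hz

lemma norm_div_le (hh : IsQuadraticallyFlat r L h) (hd : ∀ z, ‖d z‖ = ‖z‖) (hz : ‖z‖ ≤ r) :
    ‖h z / d z‖ ≤ L * ‖z‖ := by
  rw [norm_div, hd]
  exact div_le_of_le_mul₀ (norm_nonneg z) (mul_nonneg hh.nonneg (norm_nonneg z)) (hh.norm_le hz)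

lemma norm_div_sub_le (hh : IsQuadraticallyFlat r L h) (hd : ∀ z, ‖d z‖ = ‖z‖)
    (hdl : ∀ z z', ‖d z - d z'‖ ≤ ‖z - z'‖) (hz : ‖z‖ ≤ r) (hz' : ‖z'‖ ≤ r) :
    ‖h z / d z - h z' / d z'‖ ≤ 2 * L * ‖z - z'‖ := by
  wlog hle : ‖z'‖ ≤ ‖z‖ generalizing z z'
  · rw [norm_sub_rev, norm_sub_rev z]
    exact this hz' hz (le_of_not_ge hle)
  have hL := hh.nonneg
  rcases eq_or_ne z' 0 with rfl | h0
  · have := hh.norm_div_le hd hz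
    simp only [hh.zero, zero_div, sub_zero]
    nlinarith [norm_nonneg z]
  have hpos' : 0 < ‖z'‖ := norm_pos_iff.2 h0
  have hpos : 0 < ‖z‖ := hpos'.trans_le hle
  have hd0 : d z ≠ 0 := by rw [← norm_pos_iff, hd]; exact hpos
  have hd0' : d z' ≠ 0 := by rw [← norm_pos_iff, hd]; exact hpos'
  have hnum : ‖(h z - h z') / d z‖ ≤ L * ‖z - z'‖ := by
    rw [norm_div, hd, div_le_iff₀ hpos]
    linarith [hh.lip z z' hle hz]
  have hden : ‖(h z' / d z') * ((d z' - d z) / d z)‖ ≤ L * ‖z - z'‖ := by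
    rw [norm_mul, norm_div (_ - _), hd, norm_sub_rev]
    calc _ ≤ (L * ‖z'‖) * (‖z - z'‖ / ‖z‖) := by gcongr; exacts [hh.norm_div_le hd hz', hdl z z']
      _ = L * ‖z - z'‖ * (‖z'‖ / ‖z‖) := by ring
      _ ≤ L * ‖z - z'‖ := mul_le_of_le_one_right (by positivity) ((div_le_one hpos).2 hle)
  calc ‖h z / d z - h z' / d z'‖
      = ‖(h z - h z') / d z + (h z' / d z') * ((d z' - d z) / d z)‖ := by
        congr 1
        field_simp
        ring
    _ ≤ L * ‖z - z'‖ + L * ‖z - z'‖ := norm_add_le_of_le hnum hden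
    _ = 2 * L * ‖z - z'‖ := by ring

lemma norm_cutoff_mul_div_sub_le (hh : IsQuadraticallyFlat r L h) (hd : ∀ z, ‖d z‖ = ‖z‖)
    (hdl : ∀ z z', ‖d z - d z'‖ ≤ ‖z - z'‖) (hR : 0 < R) (hRr : R ≤ r) (z z' : ℂ) :
    ‖(cutoff R z : ℂ) * (h z / d z) - (cutoff R z' : ℂ) * (h z' / d z')‖
      ≤ 4 * L * ‖z - z'‖ := by
  wlog hle : ‖z'‖ ≤ ‖z‖ generalizing z z'
  · rw [norm_sub_rev, norm_sub_rev z]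
    exact this z' z (le_of_not_ge hle)
  have hL := hh.nonneg
  rcases le_total R ‖z'‖ with hout' | hin'
  · rw [cutoff_eq_zero hR hout', cutoff_eq_zero hR (hout'.trans hle)]
    simpa using by positivity
  have hcut : ‖((cutoff R z - cutoff R z' : ℝ) : ℂ) * (h z' / d z')‖ ≤ 2 * L * ‖z - z'‖ := by
    rw [norm_mul, Complex.norm_real, Real.norm_eq_abs]
    calc _ ≤ (2 / R * ‖z - z'‖) * (L * R) := by
          gcongr
          · exact abs_cutoff_sub_le hR z z'
          · exact (hh.norm_div_le hd (hin'.trans hRr)).trans (by gcongr)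
      _ = _ := by field_simp
  have hdiv : ‖(cutoff R z : ℂ) * (h z / d z - h z' / d z')‖ ≤ 2 * L * ‖z - z'‖ := by
    rcases le_total R ‖z‖ with hout | hin
    · rw [cutoff_eq_zero hR hout]
      simpa using by positivity
    · rw [norm_mul, Complex.norm_real, Real.norm_eq_abs, abs_of_nonneg (cutoff_nonneg _ _)]
      exact (mul_le_of_le_one_left (norm_nonneg _) (cutoff_le_one _ _)).trans
        (hh.norm_div_sub_le hd hdl (hin.trans hRr) (hin'.trans hRr))
  calc _ = ‖(cutoff R z : ℂ) * (h z / d z - h z' / d z')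
        + ((cutoff R z - cutoff R z' : ℝ) : ℂ) * (h z' / d z')‖ := by
        push_cast
        congr 1
        ring
    _ ≤ 2 * L * ‖z - z'‖ + 2 * L * ‖z - z'‖ := norm_add_le_of_le hdiv hcut
    _ = 4 * L * ‖z - z'‖ := by ring

lemma neg_ofReal {l : ℂ → ℝ} (hl : IsQuadraticallyFlat r L fun z => (l z : ℂ)) :
    IsQuadraticallyFlat r L fun z => ((-l z : ℝ) : ℂ) where
  pos := hl.pos
  nonneg := hl.nonneg
  zero := by simpa using hl.zero
  lip z z' hle hz := by
    rw [Complex.ofReal_neg, Complex.ofReal_neg, neg_sub_neg, norm_sub_rev]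
    exact hl.lip z z' hle hz

end IsQuadraticallyFlat

end Cutoff

/-- The quadratic form of a planar BDE with principal part `-Im (z v²)`. Every real quadratic form
in `v` is of the form `Re (κ v²) + l ‖v‖²`. -/
def perturbedForm (κ : ℂ → ℂ) (l : ℂ → ℝ) (z v : ℂ) : ℝ :=
  -(z * v ^ 2).im + (κ z * v ^ 2).re + l z * ‖v‖ ^ 2

/-- The coefficient `κ z / z` cut off at radius `R`. -/
def cutCoeff (R : ℝ) (κ : ℂ → ℂ) (z : ℂ) : ℂ := (cutoff R z : ℂ) * (κ z / z)

/-- The coefficient `l z / ‖z‖` cut off at radius `R`. -/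
def cutNormCoeff (R : ℝ) (l : ℂ → ℝ) (z : ℂ) : ℝ := cutoff R z * (l z / ‖z‖)

/-- The slope of the horizontal solutions of the form with the cut-off coefficients. -/
def cutSlope (R : ℝ) (κ : ℂ → ℂ) (l : ℂ → ℝ) (z : ℂ) : ℝ :=
  rootSlope (cutCoeff R κ z) (cutNormCoeff R l z)

section CutSlope

variable {r L R : ℝ} {κ : ℂ → ℂ} {l : ℂ → ℝ} {z : ℂ}

lemma norm_cutCoeff_sub_le (hκ : IsQuadraticallyFlat r L κ) (hR : 0 < R) (hRr : R ≤ r)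
    (z z' : ℂ) : ‖cutCoeff R κ z - cutCoeff R κ z'‖ ≤ 4 * L * ‖z - z'‖ :=
  hκ.norm_cutoff_mul_div_sub_le (d := id) (fun _ => rfl) (fun _ _ => le_rfl) hR hRr z z'

lemma abs_cutNormCoeff_sub_le (hl : IsQuadraticallyFlat r L fun z => (l z : ℂ)) (hR : 0 < R)
    (hRr : R ≤ r) (z z' : ℂ) :
    |cutNormCoeff R l z - cutNormCoeff R l z'| ≤ 4 * L * ‖z - z'‖ := by
  have hlip : ∀ z z' : ℂ, ‖(‖z‖ : ℂ) - (‖z'‖ : ℂ)‖ ≤ ‖z - z'‖ := fun z z' => by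
    rw [← Complex.ofReal_sub, Complex.norm_real]
    exact abs_norm_sub_norm_le _ _
  rw [← Real.norm_eq_abs, ← Complex.norm_real]
  simpa [cutNormCoeff] using
    hl.norm_cutoff_mul_div_sub_le (d := fun z => (‖z‖ : ℂ)) (by simp) hlip hR hRr z z'

lemma norm_cutCoeff_le (hκ : IsQuadraticallyFlat r L κ) (hR : 0 < R) (hRr : R ≤ r) (z : ℂ) :
    ‖cutCoeff R κ z‖ ≤ 4 * L * R := by
  have hL := hκ.nonneg
  rcases le_total R ‖z‖ with hout | hin
  · rw [cutCoeff, cutoff_eq_zero hR hout, Complex.ofReal_zero, zero_mul, norm_zero]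
    positivity
  · have := norm_cutCoeff_sub_le hκ hR hRr z 0
    simp only [cutCoeff, div_zero, mul_zero, sub_zero] at this
    exact this.trans (by gcongr)

lemma abs_cutNormCoeff_le (hl : IsQuadraticallyFlat r L fun z => (l z : ℂ)) (hR : 0 < R)
    (hRr : R ≤ r) (z : ℂ) : |cutNormCoeff R l z| ≤ 4 * L * R := by
  have hL := hl.nonneg
  rcases le_total R ‖z‖ with hout | hin
  · rw [cutNormCoeff, cutoff_eq_zero hR hout, zero_mul, abs_zero]
    positivity
  · have := abs_cutNormCoeff_sub_le hl hR hRr z 0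
    simp only [cutNormCoeff, norm_zero, div_zero, mul_zero, sub_zero] at this
    exact this.trans (by gcongr)

lemma isSmallSlope_cutSlope (hκ : IsQuadraticallyFlat r L κ)
    (hl : IsQuadraticallyFlat r L fun z => (l z : ℂ)) (hR : 0 < R) (hRr : R ≤ r)
    (hLR : 20 * L * R ≤ 1 / 1000) : IsSmallSlope (20 * L) R (cutSlope R κ l) := by
  have hK := fun z => (norm_cutCoeff_le hκ hR hRr z).trans (by linarith : _ ≤ (1 / 20 : ℝ))
  have hℓ := fun z => (abs_cutNormCoeff_le hl hR hRr z).trans (by linarith : _ ≤ (1 / 20 : ℝ))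
  refine ⟨mul_nonneg (by norm_num) hκ.nonneg, hR, hLR, fun z z' => ?_, ?_, fun z hz => ?_⟩
  · have := abs_rootSlope_sub_le (hK z) (hℓ z) (hK z') (hℓ z')
    have := norm_cutCoeff_sub_le hκ hR hRr z z'
    have := abs_cutNormCoeff_sub_le hl hR hRr z z'
    unfold cutSlope
    linarith
  · simp [cutSlope, cutCoeff, cutNormCoeff, rootSlope, smallRoot_zero_mid]
  · simp [cutSlope, cutCoeff, cutNormCoeff, rootSlope, cutoff_eq_zero hR hz, smallRoot_zero_mid]

lemma perturbedForm_eq_normalizedForm (hR : 0 < R) (hz : ‖z‖ ≤ R / 2) (hz0 : z ≠ 0) (v : ℂ) :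
    perturbedForm κ l z v =
      normalizedForm (cutCoeff R κ z) (cutNormCoeff R l z) (z * v ^ 2) := by
  rw [normalizedForm, cutCoeff, cutNormCoeff, cutoff_eq_one hR hz, Complex.ofReal_one, one_mul,
    one_mul, ← mul_assoc, div_mul_cancel₀ _ hz0, norm_mul, norm_pow, ← mul_assoc,
    div_mul_cancel₀ _ (norm_ne_zero_iff.2 hz0), perturbedForm]

lemma exists_isSmallSlopePair (hκ : IsQuadraticallyFlat r L κ)
    (hl : IsQuadraticallyFlat r L fun z => (l z : ℂ)) :
    ∃ (M R : ℝ) (A B : ℂ → ℝ), IsSmallSlopePair M R A B ∧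
      ∀ z, z ≠ 0 → ‖z‖ < R / 2 → ∀ v, v ≠ 0 →
        (perturbedForm κ l z v = 0 ↔ IsHorizDir A z v ∨ IsVertDir B z v) := by
  have hL := hκ.nonneg
  set R := min r (1 / (20000 * (L + 1)))
  have hR : 0 < R := lt_min hκ.pos (by positivity)
  have hRr : R ≤ r := min_le_left _ _
  have hLR : 20 * L * R ≤ 1 / 1000 := by
    have hle : R ≤ 1 / (20000 * (L + 1)) := min_le_right _ _
    rw [le_div_iff₀ (by positivity)] at hle
    linarith
  refine ⟨20 * L, R, cutSlope R κ l, cutSlope R κ fun z => -l z,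
    ⟨isSmallSlope_cutSlope hκ hl hR hRr hLR, isSmallSlope_cutSlope hκ hl.neg_ofReal hR hRr hLR⟩,
    fun z hz0 hz v hv => ?_⟩
  have hneg : cutNormCoeff R (fun z => -l z) z = -cutNormCoeff R l z := by
    rw [cutNormCoeff, neg_div, mul_neg, cutNormCoeff]
  rw [perturbedForm_eq_normalizedForm hR hz.le hz0, normalizedForm_eq_zero_iff
    ((norm_cutCoeff_le hκ hR hRr z).trans (by linarith))
    ((abs_cutNormCoeff_le hl hR hRr z).trans (by linarith))
    (mul_ne_zero hz0 (pow_ne_zero 2 hv)), ← hneg]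
  rfl

end CutSlope

/-! ### Partial derivatives and jets -/

section PartialDerivatives

variable {g u w : ℝ × ℝ → ℝ} {n : ℕ}

lemma pdx_eq_fderiv (hg : Differentiable ℝ g) : pdx g = fun p => fderiv ℝ g p (1, 0) := by
  funext p
  have hline : HasDerivAt (fun s : ℝ => (s, p.2)) ((1 : ℝ), (0 : ℝ)) p.1 :=
    (hasDerivAt_id p.1).prodMk (hasDerivAt_const _ _)
  exact ((hg p).hasFDerivAt.comp_hasDerivAt p.1 hline).deriv

lemma pdy_eq_fderiv (hg : Differentiable ℝ g) : pdy g = fun p => fderiv ℝ g p (0, 1) := by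
  funext p
  have hline : HasDerivAt (fun s : ℝ => (p.1, s)) ((0 : ℝ), (1 : ℝ)) p.2 :=
    (hasDerivAt_const _ _).prodMk (hasDerivAt_id p.2)
  exact ((hg p).hasFDerivAt.comp_hasDerivAt p.2 hline).deriv

lemma differentiable_of_contDiff_succ (hg : ContDiff ℝ (n + 1 : ℕ) g) : Differentiable ℝ g :=
  hg.differentiable (by simp)

lemma contDiff_fderiv_apply (hg : ContDiff ℝ (n + 1 : ℕ) g) (v : ℝ × ℝ) :
    ContDiff ℝ n fun p => fderiv ℝ g p v :=
  (hg.fderiv_right (m := n) (by simp)).clm_apply contDiff_const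

lemma contDiff_pdx (hg : ContDiff ℝ (n + 1 : ℕ) g) : ContDiff ℝ n (pdx g) := by
  rw [pdx_eq_fderiv (differentiable_of_contDiff_succ hg)]
  exact contDiff_fderiv_apply hg _

lemma contDiff_pdy (hg : ContDiff ℝ (n + 1 : ℕ) g) : ContDiff ℝ n (pdy g) := by
  rw [pdy_eq_fderiv (differentiable_of_contDiff_succ hg)]
  exact contDiff_fderiv_apply hg _

lemma pdx_linComb (hu : Differentiable ℝ u) (hw : Differentiable ℝ w) (a b : ℝ) :
    pdx (fun p => a * u p + b * w p) = fun p => a * pdx u p + b * pdx w p := by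
  rw [pdx_eq_fderiv (by fun_prop), pdx_eq_fderiv hu, pdx_eq_fderiv hw]
  funext p
  rw [fderiv_fun_add (by fun_prop) (by fun_prop), fderiv_const_mul (hu p), fderiv_const_mul (hw p)]
  rfl

lemma pdy_linComb (hu : Differentiable ℝ u) (hw : Differentiable ℝ w) (a b : ℝ) :
    pdy (fun p => a * u p + b * w p) = fun p => a * pdy u p + b * pdy w p := by
  rw [pdy_eq_fderiv (by fun_prop), pdy_eq_fderiv hu, pdy_eq_fderiv hw]
  funext p
  rw [fderiv_fun_add (by fun_prop) (by fun_prop), fderiv_const_mul (hu p), fderiv_const_mul (hw p)]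
  rfl

lemma pdx_sub (hu : Differentiable ℝ u) (hw : Differentiable ℝ w) :
    pdx (fun p => u p - w p) = fun p => pdx u p - pdx w p := by
  simpa [← sub_eq_add_neg] using pdx_linComb hu hw 1 (-1)

lemma pdy_sub (hu : Differentiable ℝ u) (hw : Differentiable ℝ w) :
    pdy (fun p => u p - w p) = fun p => pdy u p - pdy w p := by
  simpa [← sub_eq_add_neg] using pdy_linComb hu hw 1 (-1)

lemma fderiv_fderiv_apply (hg : ContDiff ℝ 2 g) (p v w : ℝ × ℝ) :
    fderiv ℝ (fun p => fderiv ℝ g p v) p w = fderiv ℝ (fderiv ℝ g) p w v := by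
  have hdiff : Differentiable ℝ (fderiv ℝ g) :=
    (hg.fderiv_right (m := 1) (by norm_num)).differentiable (by simp)
  rw [((hdiff p).hasFDerivAt.clm_apply (hasFDerivAt_const v p)).fderiv]
  simp

lemma pdx_pdy_comm (hg : ContDiff ℝ 2 g) : pdx (pdy g) = pdy (pdx g) := by
  have hx : ContDiff ℝ 1 (pdx g) := contDiff_pdx (n := 1) hg
  have hy : ContDiff ℝ 1 (pdy g) := contDiff_pdy (n := 1) hg
  have hdiff : Differentiable ℝ g := hg.differentiable (by simp)
  rw [pdx_eq_fderiv (hy.differentiable (by simp)), pdy_eq_fderiv (hx.differentiable (by simp)),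
    pdx_eq_fderiv hdiff, pdy_eq_fderiv hdiff]
  funext p
  rw [fderiv_fderiv_apply hg, fderiv_fderiv_apply hg]
  exact (hg.contDiffAt (x := p)).isSymmSndFDerivAt (by simp) _ _

/-- The derivative of `g` in the direction `(a, b)`, as a differential operator. -/
def dirDeriv (a b : ℝ) (g : ℝ × ℝ → ℝ) : ℝ × ℝ → ℝ := fun p => a * pdx g p + b * pdy g p

lemma contDiff_dirDeriv (hg : ContDiff ℝ (n + 1 : ℕ) g) (a b : ℝ) :
    ContDiff ℝ n (dirDeriv a b g) :=
  (contDiff_const.mul (contDiff_pdx hg)).add (contDiff_const.mul (contDiff_pdy hg))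

lemma deriv_comp_line (hg : Differentiable ℝ g) (a b : ℝ) :
    deriv (fun t : ℝ => g (t * a, t * b)) = fun t => dirDeriv a b g (t * a, t * b) := by
  funext t
  have hline : HasDerivAt (fun t : ℝ => (t * a, t * b)) (a, b) t := by
    simpa using ((hasDerivAt_id t).mul_const a).prodMk ((hasDerivAt_id t).mul_const b)
  have hab : ((a, b) : ℝ × ℝ) = a • (1, 0) + b • (0, 1) := by simp
  refine ((hg _).hasFDerivAt.comp_hasDerivAt t hline).deriv.trans ?_
  rw [dirDeriv, pdx_eq_fderiv hg, pdy_eq_fderiv hg, hab, map_add, map_smul, map_smul, smul_eq_mul,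
    smul_eq_mul]

lemma iteratedDeriv_comp_line {k : ℕ} (hg : ContDiff ℝ k g) (a b : ℝ) :
    iteratedDeriv k (fun t : ℝ => g (t * a, t * b)) =
      fun t => ((dirDeriv a b)^[k] g) (t * a, t * b) := by
  induction k generalizing g with
  | zero => simp
  | succ k ih =>
    rw [iteratedDeriv_succ', deriv_comp_line (differentiable_of_contDiff_succ hg),
      ih (contDiff_dirDeriv hg a b), Function.iterate_succ_apply]

lemma dirDeriv_dirDeriv (hg : ContDiff ℝ 2 g) (a b : ℝ) :
    dirDeriv a b (dirDeriv a b g) = fun p =>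
      a ^ 2 * pdx (pdx g) p + 2 * a * b * pdy (pdx g) p + b ^ 2 * pdy (pdy g) p := by
  have hx : Differentiable ℝ (pdx g) := (contDiff_pdx (n := 1) hg).differentiable (by simp)
  have hy : Differentiable ℝ (pdy g) := (contDiff_pdy (n := 1) hg).differentiable (by simp)
  funext p
  unfold dirDeriv
  rw [pdx_linComb hx hy, pdy_linComb hx hy, pdx_pdy_comm hg]
  ring

lemma dirDeriv_dirDeriv_dirDeriv (hg : ContDiff ℝ 3 g) (a b : ℝ) (p : ℝ × ℝ) :
    dirDeriv a b (dirDeriv a b (dirDeriv a b g)) p =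
      a ^ 3 * pdx (pdx (pdx g)) p + 3 * a ^ 2 * b * pdy (pdx (pdx g)) p +
        3 * a * b ^ 2 * pdy (pdy (pdx g)) p + b ^ 3 * pdy (pdy (pdy g)) p := by
  have hg2 : ContDiff ℝ 2 g := hg.of_le (by norm_num)
  have hx : ContDiff ℝ 2 (pdx g) := contDiff_pdx (n := 2) hg
  have hy : ContDiff ℝ 2 (pdy g) := contDiff_pdy (n := 2) hg
  have hxx : Differentiable ℝ (pdx (pdx g)) := (contDiff_pdx (n := 1) hx).differentiable (by simp)
  have hxy : Differentiable ℝ (pdy (pdx g)) := (contDiff_pdy (n := 1) hx).differentiable (by simp)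
  have hyy : Differentiable ℝ (pdy (pdy g)) := (contDiff_pdy (n := 1) hy).differentiable (by simp)
  have ex : pdx (dirDeriv a b g) = fun p => a * pdx (pdx g) p + b * pdy (pdx g) p := by
    rw [← pdx_pdy_comm hg2]
    exact pdx_linComb (hx.differentiable (by simp)) (hy.differentiable (by simp)) a b
  have ey : pdy (dirDeriv a b g) = fun p => a * pdy (pdx g) p + b * pdy (pdy g) p :=
    pdy_linComb (hx.differentiable (by simp)) (hy.differentiable (by simp)) a b
  rw [dirDeriv_dirDeriv (contDiff_dirDeriv (n := 2) hg a b), ex, ey, pdx_linComb hxx hxy,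
    pdy_linComb hxx hxy, pdy_linComb hxy hyy, pdx_pdy_comm hx]
  ring

end PartialDerivatives

section Jets

lemma isLittleO_pow_of_succ {E F : Type*} [NormedAddCommGroup E] [NormedAddCommGroup F]
    {φ : E → F} {n : ℕ} (h : φ =o[nhds 0] fun p => ‖p‖ ^ (n + 1)) :
    φ =o[nhds 0] fun p => ‖p‖ ^ n := by
  refine h.trans_isBigO (.of_bound 1 ?_)
  filter_upwards [Metric.ball_mem_nhds (0 : E) one_pos] with p hp
  rw [norm_pow, norm_pow, norm_norm, one_mul]
  exact pow_le_pow_of_le_one (norm_nonneg p) (mem_ball_zero_iff.1 hp).le n.le_succ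

lemma eq_zero_of_const_mul_pow_isLittleO {c : ℝ} {n : ℕ}
    (h : (fun t : ℝ => c * t ^ n) =o[nhds 0] fun t => ‖t‖ ^ n) : c = 0 := by
  by_contra hc
  have hself : (fun t : ℝ => t ^ n) =o[nhds 0] fun t : ℝ => t ^ n := by
    simpa only [← norm_pow, isLittleO_norm_right, isLittleO_const_mul_left_iff hc] using h
  have hfreq : ∃ᶠ t : ℝ in nhds 0, t ^ n ≠ 0 :=
    ((eventually_mem_nhdsWithin (a := (0 : ℝ)) (s := {0}ᶜ)).frequently.filter_mono
      nhdsWithin_le_nhds).mono fun t ht => pow_ne_zero n ht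
  exact isLittleO_irrefl hfreq hself

lemma iteratedDeriv_eq_zero_of_isLittleO {n : ℕ} {φ : ℝ → ℝ} (hφ : ContDiff ℝ n φ)
    (ho : φ =o[nhds 0] fun t => ‖t‖ ^ n) (hlt : ∀ k < n, iteratedDeriv k φ 0 = 0) :
    iteratedDeriv n φ 0 = 0 := by
  have htaylor : ∀ t, taylorWithinEval φ n univ 0 t =
      ((n.factorial : ℝ)⁻¹ * iteratedDeriv n φ 0) * t ^ n := by
    intro t
    rw [taylor_within_apply, Finset.sum_range_succ, Finset.sum_eq_zero]
    · rw [iteratedDerivWithin_univ, zero_add, sub_zero, smul_eq_mul]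
      ring
    · intro k hk
      rw [iteratedDerivWithin_univ, hlt k (Finset.mem_range.1 hk), smul_zero]
  have hrem : (fun t => φ t - taylorWithinEval φ n univ 0 t) =o[nhds 0] fun t : ℝ => ‖t‖ ^ n := by
    simpa only [sub_zero, ← norm_pow, isLittleO_norm_right] using
      taylor_isLittleO_univ (x₀ := 0) hφ
  have hlead := ho.sub hrem
  simp only [htaylor, sub_sub_cancel] at hlead
  exact (mul_eq_zero.1 (eq_zero_of_const_mul_pow_isLittleO hlead)).resolve_left
    (inv_ne_zero (by exact_mod_cast n.factorial_ne_zero))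

lemma iteratedDeriv_eq_zero_of_le_of_isLittleO {n : ℕ} {φ : ℝ → ℝ} (hφ : ContDiff ℝ n φ)
    (ho : φ =o[nhds 0] fun t => ‖t‖ ^ n) {k : ℕ} (hk : k ≤ n) : iteratedDeriv k φ 0 = 0 := by
  induction n generalizing k with
  | zero =>
    obtain rfl := Nat.le_zero.1 hk
    exact iteratedDeriv_eq_zero_of_isLittleO hφ ho (by simp)
  | succ n ih =>
    have hlower := fun {j} (hj : j ≤ n) =>
      ih (hφ.of_le (by exact_mod_cast n.le_succ)) (isLittleO_pow_of_succ ho) hj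
    rcases hk.lt_or_eq with hlt | rfl
    · exact hlower (Nat.lt_succ_iff.1 hlt)
    · exact iteratedDeriv_eq_zero_of_isLittleO hφ ho fun j hj => hlower (Nat.lt_succ_iff.1 hj)

variable {g : ℝ × ℝ → ℝ}

lemma iterate_dirDeriv_eq_zero {n k : ℕ} (hg : ContDiff ℝ n g)
    (ho : g =o[nhds 0] fun p => ‖p‖ ^ n) (hk : k ≤ n) (a b : ℝ) :
    ((dirDeriv a b)^[k] g) 0 = 0 := by
  have hline : ContDiff ℝ n fun t : ℝ => g (t * a, t * b) := hg.comp (by fun_prop)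
  have htendsto : Tendsto (fun t : ℝ => (t * a, t * b)) (nhds 0) (nhds (0 : ℝ × ℝ)) :=
    (by fun_prop : Continuous fun t : ℝ => (t * a, t * b)).tendsto' 0 0 (by simp)
  have hlo : (fun t : ℝ => g (t * a, t * b)) =o[nhds 0] fun t : ℝ => ‖t‖ ^ n := by
    refine (ho.comp_tendsto htendsto).trans_isBigO
      (.of_bound (‖(a, b)‖ ^ n) (Eventually.of_forall fun t => ?_))
    rw [Function.comp_apply, show (t * a, t * b) = t • (a, b) by simp, norm_smul, norm_pow,
      norm_mul, norm_norm, norm_norm, norm_pow, norm_norm, mul_pow, mul_comm]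
  have := iteratedDeriv_eq_zero_of_le_of_isLittleO hline hlo hk
  rw [iteratedDeriv_comp_line (hg.of_le (by exact_mod_cast hk))] at this
  simpa only [zero_mul, Prod.mk_zero_zero] using this

lemma partials_eq_zero_of_isLittleO_sq (hg : ContDiff ℝ 2 g)
    (ho : g =o[nhds 0] fun p => ‖p‖ ^ 2) :
    g 0 = 0 ∧ pdx g 0 = 0 ∧ pdy g 0 = 0 ∧
      pdx (pdx g) 0 = 0 ∧ pdy (pdx g) 0 = 0 ∧ pdy (pdy g) 0 = 0 := by
  have hzero := fun {k} (hk : k ≤ 2) => iterate_dirDeriv_eq_zero (n := 2) hg ho hk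
  have hfirst : ∀ a b, a * pdx g 0 + b * pdy g 0 = 0 := hzero one_le_two
  have hsecond : ∀ a b,
      a ^ 2 * pdx (pdx g) 0 + 2 * a * b * pdy (pdx g) 0 + b ^ 2 * pdy (pdy g) 0 = 0 :=
    fun a b => (congrFun (dirDeriv_dirDeriv hg a b) 0).symm.trans (hzero le_rfl a b)
  exact ⟨hzero zero_le_two 0 0, by linarith [hfirst 1 0], by linarith [hfirst 0 1],
    by linarith [hsecond 1 0], by linarith [hsecond 1 1, hsecond 1 (-1)],
    by linarith [hsecond 0 1]⟩

lemma third_partials_eq_zero_of_isLittleO_cube (hg : ContDiff ℝ 3 g)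
    (ho : g =o[nhds 0] fun p => ‖p‖ ^ 3) :
    pdx (pdx (pdx g)) 0 = 0 ∧ pdy (pdx (pdx g)) 0 = 0 ∧ pdy (pdy (pdx g)) 0 = 0 ∧
      pdy (pdy (pdy g)) 0 = 0 := by
  have hthird : ∀ a b, a ^ 3 * pdx (pdx (pdx g)) 0 + 3 * a ^ 2 * b * pdy (pdx (pdx g)) 0 +
      3 * a * b ^ 2 * pdy (pdy (pdx g)) 0 + b ^ 3 * pdy (pdy (pdy g)) 0 = 0 := fun a b =>
    (dirDeriv_dirDeriv_dirDeriv hg a b 0).symm.trans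
      (iterate_dirDeriv_eq_zero (n := 3) hg ho le_rfl a b)
  have hx := hthird 1 0
  have hy := hthird 0 1
  exact ⟨by linarith, by linarith [hthird 1 1, hthird 1 (-1)],
    by linarith [hthird 1 1, hthird 1 (-1)], by linarith⟩

end Jets

/-- A `C²` function whose value and derivative vanish at `0`. -/
structure HasZeroOneJet {E F : Type*} [NormedAddCommGroup E] [NormedSpace ℝ E]
    [NormedAddCommGroup F] [NormedSpace ℝ F] (g : E → F) : Prop where
  contDiff : ContDiff ℝ 2 g
  zero : g 0 = 0
  hasFDerivAt : HasFDerivAt g (0 : E →L[ℝ] F) 0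

namespace HasZeroOneJet

variable {E F : Type*} [NormedAddCommGroup E] [NormedSpace ℝ E] [NormedAddCommGroup F]
  [NormedSpace ℝ F]

lemma of_partials {g : ℝ × ℝ → ℝ} (hg : ContDiff ℝ 2 g) (h0 : g 0 = 0) (hx : pdx g 0 = 0)
    (hy : pdy g 0 = 0) : HasZeroOneJet g := by
  have hdiff : Differentiable ℝ g := hg.differentiable (by simp)
  have hzero : fderiv ℝ g 0 = 0 := by
    ext
    · simpa [pdx_eq_fderiv hdiff] using hx
    · simpa [pdy_eq_fderiv hdiff] using hy
  exact ⟨hg, h0, hzero ▸ (hdiff 0).hasFDerivAt⟩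

lemma add {g h : E → F} (hg : HasZeroOneJet g) (hh : HasZeroOneJet h) :
    HasZeroOneJet fun p => g p + h p where
  contDiff := hg.contDiff.add hh.contDiff
  zero := by rw [hg.zero, hh.zero, add_zero]
  hasFDerivAt := (hg.hasFDerivAt.fun_add hh.hasFDerivAt).congr_fderiv (add_zero 0)

lemma smul_const {g : E → ℝ} (hg : HasZeroOneJet g) (c : F) : HasZeroOneJet fun p => g p • c where
  contDiff := hg.contDiff.smul contDiff_const
  zero := by rw [hg.zero, zero_smul]
  hasFDerivAt := (hg.hasFDerivAt.smul_const c).congr_fderiv (by ext; simp)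

lemma comp_clm {E' : Type*} [NormedAddCommGroup E'] [NormedSpace ℝ E'] {g : E → F}
    (hg : HasZeroOneJet g) (T : E' →L[ℝ] E) : HasZeroOneJet fun p => g (T p) where
  contDiff := hg.contDiff.comp T.contDiff
  zero := by rw [map_zero, hg.zero]
  hasFDerivAt := by
    have hgT : HasFDerivAt g (0 : E →L[ℝ] F) (T 0) := by rw [map_zero]; exact hg.hasFDerivAt
    exact (hgT.comp 0 T.hasFDerivAt).congr_fderiv (ContinuousLinearMap.zero_comp T)

lemma isLittleO {g : E → F} (hg : HasZeroOneJet g) : g =o[nhds 0] fun p : E => ‖p‖ := by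
  have := hg.hasFDerivAt.isLittleO
  simp only [hg.zero, sub_zero, zero_apply] at this
  exact this.norm_right

lemma exists_isQuadraticallyFlat {G : ℂ → ℂ} (hG : HasZeroOneJet G) :
    ∃ r L, IsQuadraticallyFlat r L G := by
  have hfderiv : ContDiff ℝ 1 (fderiv ℝ G) := hG.contDiff.fderiv_right (by norm_num)
  obtain ⟨K, t, ht, hK⟩ := (hfderiv.contDiffAt (x := 0)).exists_lipschitzOnWith
  obtain ⟨ε, hε, hball⟩ := Metric.mem_nhds_iff.1 ht
  refine ⟨ε / 2, K, by positivity, K.2, hG.zero, fun z z' hle hz => ?_⟩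
  have hbound : ∀ x ∈ Metric.closedBall (0 : ℂ) ‖z‖, ‖fderiv ℝ G x‖ ≤ K * ‖z‖ := by
    intro x hx
    have hxz : ‖x‖ ≤ ‖z‖ := by simpa using hx
    have := hK.dist_le_mul x (hball (by rw [mem_ball_zero_iff]; linarith)) 0
      (hball (Metric.mem_ball_self hε))
    rw [hG.hasFDerivAt.fderiv, dist_zero_right, dist_zero_right] at this
    exact this.trans (by gcongr)
  exact (convex_closedBall _ _).norm_image_sub_le_of_norm_fderiv_le
    (fun x _ => hG.contDiff.differentiable (by simp) x) hbound (by simpa using hle) (by simp)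

end HasZeroOneJet

lemma IsQuadraticallyFlat.mono {r L r' L' : ℝ} {h : ℂ → ℂ} (hh : IsQuadraticallyFlat r L h)
    (hr' : 0 < r') (hr : r' ≤ r) (hL : L ≤ L') : IsQuadraticallyFlat r' L' h :=
  ⟨hr', hh.nonneg.trans hL, hh.zero, fun z z' hle hz =>
    (hh.lip z z' hle (hz.trans hr)).trans (by gcongr)⟩

/-! ### The discriminant -/

section Discriminant

/-- The cubic part of the flat umbilic: an elliptic cubic form, with three real root directions. -/
def ellipticCubic (p : ℝ × ℝ) : ℝ := p.1 * p.2 ^ 2 - p.1 ^ 3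

lemma contDiff_ellipticCubic {n : WithTop ℕ∞} : ContDiff ℝ n ellipticCubic := by
  unfold ellipticCubic
  fun_prop

lemma pdx_ellipticCubic : pdx ellipticCubic = fun p => p.2 ^ 2 - 3 * p.1 ^ 2 := by
  funext p
  have hderiv : HasDerivAt (fun s : ℝ => s * p.2 ^ 2 - s ^ 3) (p.2 ^ 2 - 3 * p.1 ^ 2) p.1 := by
    simpa using ((hasDerivAt_id p.1).mul_const (p.2 ^ 2)).fun_sub (hasDerivAt_pow 3 p.1)
  exact hderiv.deriv

lemma pdy_ellipticCubic : pdy ellipticCubic = fun p => 2 * p.1 * p.2 := by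
  funext p
  have hderiv : HasDerivAt (fun s : ℝ => p.1 * s ^ 2 - p.1 ^ 3) (p.1 * (2 * p.2)) p.2 := by
    simpa using ((hasDerivAt_pow 2 p.2).const_mul p.1).sub_const (p.1 ^ 3)
  exact hderiv.deriv.trans (by ring)

lemma fxx_ellipticCubic (p : ℝ × ℝ) : fxx ellipticCubic p = -6 * p.1 := by
  have hderiv : HasDerivAt (fun s : ℝ => p.2 ^ 2 - 3 * s ^ 2) (-(3 * (2 * p.1))) p.1 := by
    simpa using ((hasDerivAt_pow 2 p.1).const_mul 3).const_sub (p.2 ^ 2)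
  rw [fxx, pdx_ellipticCubic]
  exact hderiv.deriv.trans (by ring)

lemma fxy_ellipticCubic (p : ℝ × ℝ) : fxy ellipticCubic p = 2 * p.2 := by
  have hderiv : HasDerivAt (fun s : ℝ => s ^ 2 - 3 * p.1 ^ 2) (2 * p.2) p.2 := by
    simpa using (hasDerivAt_pow 2 p.2).sub_const (3 * p.1 ^ 2)
  rw [fxy, pdx_ellipticCubic]
  exact hderiv.deriv

lemma fyy_ellipticCubic (p : ℝ × ℝ) : fyy ellipticCubic p = 2 * p.1 := by
  have hderiv : HasDerivAt (fun s : ℝ => 2 * p.1 * s) (2 * p.1) p.2 := by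
    simpa using (hasDerivAt_id p.2).const_mul (2 * p.1)
  rw [fyy, pdy_ellipticCubic]
  exact hderiv.deriv

/-- The part of `f` beyond its cubic jet. -/
def cubicRem (f : ℝ × ℝ → ℝ) (p : ℝ × ℝ) : ℝ := f p - ellipticCubic p

variable {f : ℝ × ℝ → ℝ}

lemma fxx_eq (hf : ContDiff ℝ 2 f) (p : ℝ × ℝ) : fxx f p = -6 * p.1 + fxx (cubicRem f) p := by
  have hsub : fxx (cubicRem f) p = fxx f p - fxx ellipticCubic p := by
    unfold fxx cubicRem
    rw [pdx_sub (hf.differentiable (by simp)) (contDiff_ellipticCubic.differentiable one_ne_zero),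
      pdx_sub ((contDiff_pdx (n := 1) hf).differentiable (by simp))
        ((contDiff_pdx (n := 1) contDiff_ellipticCubic).differentiable (by simp))]
  rw [hsub, fxx_ellipticCubic]
  ring

lemma fxy_eq (hf : ContDiff ℝ 2 f) (p : ℝ × ℝ) : fxy f p = 2 * p.2 + fxy (cubicRem f) p := by
  have hsub : fxy (cubicRem f) p = fxy f p - fxy ellipticCubic p := by
    unfold fxy cubicRem
    rw [pdx_sub (hf.differentiable (by simp)) (contDiff_ellipticCubic.differentiable one_ne_zero),
      pdy_sub ((contDiff_pdx (n := 1) hf).differentiable (by simp))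
        ((contDiff_pdx (n := 1) contDiff_ellipticCubic).differentiable (by simp))]
  rw [hsub, fxy_ellipticCubic]
  ring

lemma fyy_eq (hf : ContDiff ℝ 2 f) (p : ℝ × ℝ) : fyy f p = 2 * p.1 + fyy (cubicRem f) p := by
  have hsub : fyy (cubicRem f) p = fyy f p - fyy ellipticCubic p := by
    unfold fyy cubicRem
    rw [pdy_sub (hf.differentiable (by simp)) (contDiff_ellipticCubic.differentiable one_ne_zero),
      pdy_sub ((contDiff_pdy (n := 1) hf).differentiable (by simp))
        ((contDiff_pdy (n := 1) contDiff_ellipticCubic).differentiable (by simp))]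
  rw [hsub, fyy_ellipticCubic]
  ring

lemma contDiff_fxx {n : ℕ} (hf : ContDiff ℝ (n + 1 + 1 : ℕ) f) : ContDiff ℝ n (fxx f) :=
  contDiff_pdx (contDiff_pdx hf)

lemma contDiff_fxy {n : ℕ} (hf : ContDiff ℝ (n + 1 + 1 : ℕ) f) : ContDiff ℝ n (fxy f) :=
  contDiff_pdy (contDiff_pdx hf)

lemma contDiff_fyy {n : ℕ} (hf : ContDiff ℝ (n + 1 + 1 : ℕ) f) : ContDiff ℝ n (fyy f) :=
  contDiff_pdy (contDiff_pdy hf)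

lemma contDiff_bdeDiscr {n : ℕ} (hf : ContDiff ℝ (n + 1 + 1 : ℕ) f) : ContDiff ℝ n (bdeDiscr f) :=
  ((contDiff_fxy hf).pow 2).sub ((contDiff_fxx hf).mul (contDiff_fyy hf))

lemma hasZeroOneJet_second_partials {g : ℝ × ℝ → ℝ} (hg : ContDiff ℝ 4 g)
    (ho : g =o[nhds 0] fun p => ‖p‖ ^ 3) :
    HasZeroOneJet (fxx g) ∧ HasZeroOneJet (fxy g) ∧ HasZeroOneJet (fyy g) := by
  have hx : ContDiff ℝ 3 (pdx g) := contDiff_pdx (n := 3) hg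
  have hy : ContDiff ℝ 3 (pdy g) := contDiff_pdy (n := 3) hg
  obtain ⟨-, -, -, hxx, hxy, hyy⟩ :=
    partials_eq_zero_of_isLittleO_sq (hg.of_le (by norm_num)) (isLittleO_pow_of_succ ho)
  obtain ⟨hxxx, hxxy, hxyy, hyyy⟩ :=
    third_partials_eq_zero_of_isLittleO_cube (hg.of_le (by norm_num)) ho
  have hxyx : pdx (pdy (pdx g)) 0 = 0 := by
    rw [pdx_pdy_comm (hx.of_le (by norm_num)), hxxy]
  have hyyx : pdx (pdy (pdy g)) 0 = 0 := by
    rw [pdx_pdy_comm (hy.of_le (by norm_num)), pdx_pdy_comm (hg.of_le (by norm_num)), hxyy]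
  exact ⟨.of_partials (contDiff_fxx hg) hxx hxxx hxxy, .of_partials (contDiff_fxy hg) hxy hxyx hxyy,
    .of_partials (contDiff_fyy hg) hyy hyyx hyyy⟩

lemma hasZeroOneJet_cubicRem (hf : ContDiff ℝ 4 f) (hjet : HasJetAt0 f ellipticCubic 3) :
    HasZeroOneJet (fxx (cubicRem f)) ∧ HasZeroOneJet (fxy (cubicRem f)) ∧
      HasZeroOneJet (fyy (cubicRem f)) :=
  hasZeroOneJet_second_partials (hf.sub contDiff_ellipticCubic) hjet

lemma hasJetAt0_bdeDiscr (hf : ContDiff ℝ 4 f) (hjet : HasJetAt0 f ellipticCubic 3) :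
    HasJetAt0 (bdeDiscr f) (fun p => 4 * p.2 ^ 2 + 12 * p.1 ^ 2) 2 := by
  have hf2 : ContDiff ℝ 2 f := hf.of_le (by norm_num)
  obtain ⟨hxx, hxy, hyy⟩ := hasZeroOneJet_cubicRem hf hjet
  have hfst : (fun p : ℝ × ℝ => p.1) =O[nhds 0] fun p => ‖p‖ :=
    isBigO_fst_prod'.norm_right
  have hsnd : (fun p : ℝ × ℝ => p.2) =O[nhds 0] fun p => ‖p‖ :=
    isBigO_snd_prod'.norm_right
  have hlo := (((hsnd.mul_isLittleO hxy.isLittleO).const_mul_left 4).add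
    (hxy.isLittleO.mul hxy.isLittleO)).add (((hfst.mul_isLittleO hyy.isLittleO).const_mul_left
      6).sub ((hfst.mul_isLittleO hxx.isLittleO).const_mul_left 2)) |>.sub
    (hxx.isLittleO.mul hyy.isLittleO)
  refine hlo.congr (fun p => ?_) fun p => (sq ‖p‖).symm
  rw [bdeDiscr, fxx_eq hf2, fxy_eq hf2, fyy_eq hf2]
  ring

end Discriminant

section QuadraticJet

variable {d : ℝ × ℝ → ℝ} {a b : ℝ}

lemma pdx_sumSq : pdx (fun p => b * p.2 ^ 2 + a * p.1 ^ 2) = fun p => 2 * a * p.1 := by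
  funext p
  have hderiv : HasDerivAt (fun s : ℝ => b * p.2 ^ 2 + a * s ^ 2) (a * (2 * p.1)) p.1 := by
    simpa using ((hasDerivAt_pow 2 p.1).const_mul a).const_add (b * p.2 ^ 2)
  exact hderiv.deriv.trans (by ring)

lemma pdy_sumSq : pdy (fun p => b * p.2 ^ 2 + a * p.1 ^ 2) = fun p => 2 * b * p.2 := by
  funext p
  have hderiv : HasDerivAt (fun s : ℝ => b * s ^ 2 + a * p.1 ^ 2) (b * (2 * p.2)) p.2 := by
    simpa using ((hasDerivAt_pow 2 p.2).const_mul b).add_const (a * p.1 ^ 2)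
  exact hderiv.deriv.trans (by ring)

lemma partials_eq_of_hasJetAt0_sumSq (hd : ContDiff ℝ 2 d)
    (hjet : HasJetAt0 d (fun p => b * p.2 ^ 2 + a * p.1 ^ 2) 2) :
    d 0 = 0 ∧ pdx d 0 = 0 ∧ pdy d 0 = 0 ∧
      pdx (pdx d) 0 = 2 * a ∧ pdy (pdx d) 0 = 0 ∧ pdy (pdy d) 0 = 2 * b := by
  have hq : ContDiff ℝ 2 fun p : ℝ × ℝ => b * p.2 ^ 2 + a * p.1 ^ 2 := by fun_prop
  have hdx : Differentiable ℝ (pdx d) := (contDiff_pdx (n := 1) hd).differentiable (by simp)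
  have hdy : Differentiable ℝ (pdy d) := (contDiff_pdy (n := 1) hd).differentiable (by simp)
  obtain ⟨h0, hx, hy, hxx, hxy, hyy⟩ := partials_eq_zero_of_isLittleO_sq (hd.sub hq) hjet
  rw [pdx_sub (hd.differentiable (by simp)) (by fun_prop), pdx_sumSq] at hx hxx hxy
  rw [pdy_sub (hd.differentiable (by simp)) (by fun_prop), pdy_sumSq] at hy hyy
  rw [pdx_sub hdx (by fun_prop)] at hxx
  rw [pdy_sub hdx (by fun_prop)] at hxy
  rw [pdy_sub hdy (by fun_prop)] at hyy
  exact ⟨by simpa using h0, by simpa using hx, by simpa using hy,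
    by simpa [pdx, sub_eq_zero] using hxx, by simpa [pdy] using hxy,
    by simpa [pdy, sub_eq_zero] using hyy⟩

lemma sumSq_pos (ha : 0 < a) (hb : 0 < b) {v : ℝ × ℝ} (hv : v ≠ 0) :
    0 < a * v.1 ^ 2 + b * v.2 ^ 2 := by
  by_cases h1 : v.1 = 0
  · have h2 : v.2 ≠ 0 := fun h2 => hv (Prod.ext h1 h2)
    positivity
  · positivity

lemma sq_norm_le_sumSq (p : ℝ × ℝ) : ‖p‖ ^ 2 ≤ p.1 ^ 2 + p.2 ^ 2 := by
  rw [Prod.norm_def]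
  rcases max_choice ‖p.1‖ ‖p.2‖ with h | h <;> rw [h, Real.norm_eq_abs, sq_abs]
  · exact le_add_of_nonneg_right (sq_nonneg _)
  · exact le_add_of_nonneg_left (sq_nonneg _)

lemma isolated_zero_of_hasJetAt0_sumSq (ha : 0 < a) (hb : 0 < b) (h0 : d 0 = 0)
    (hjet : HasJetAt0 d (fun p => b * p.2 ^ 2 + a * p.1 ^ 2) 2) :
    ∃ U ∈ nhds (0 : ℝ × ℝ), ∀ p ∈ U, (d p = 0 ↔ p = 0) := by
  have hc : 0 < min a b / 2 := half_pos (lt_min ha hb)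
  refine ⟨_, hjet.def hc, fun p hp => ⟨fun hdp => ?_, fun hp0 => hp0 ▸ h0⟩⟩
  by_contra hne
  have hpos : 0 < ‖p‖ ^ 2 := by positivity
  have hupper : b * p.2 ^ 2 + a * p.1 ^ 2 ≤ min a b / 2 * ‖p‖ ^ 2 := by
    simp only [mem_ofPred_eq, hdp, zero_sub, norm_neg, norm_pow, norm_norm] at hp
    exact (Real.le_norm_self _).trans hp
  have hlower : min a b * ‖p‖ ^ 2 ≤ b * p.2 ^ 2 + a * p.1 ^ 2 :=
    calc min a b * ‖p‖ ^ 2 ≤ min a b * (p.1 ^ 2 + p.2 ^ 2) := by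
          gcongr
          exact sq_norm_le_sumSq p
      _ = min a b * p.2 ^ 2 + min a b * p.1 ^ 2 := by ring
      _ ≤ b * p.2 ^ 2 + a * p.1 ^ 2 := by
          gcongr
          exacts [min_le_right a b, min_le_left a b]
  nlinarith

end QuadraticJet

/-! ### Topological equivalence -/

section Equivalence

variable {M R M' R' : ℝ} {A B A' B' : ℂ → ℝ} {ω Ω : ℝ × ℝ → ℝ × ℝ → ℝ} {E E' : ℂ ≃L[ℝ] ℝ × ℝ}
  {U U' : Set ℂ}

/-- In the linear coordinate `E`, the solutions of `ω = 0` over `U` are the directions of the web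
with slopes `A` and `B`, together with all directions at the origin. -/
def IsWebOn (ω : ℝ × ℝ → ℝ × ℝ → ℝ) (E : ℂ ≃L[ℝ] ℝ × ℝ) (A B : ℂ → ℝ) (U : Set ℂ) : Prop :=
  ∀ z ∈ U, ∀ v, v ≠ 0 → (ω (E z) (E v) = 0 ↔ z = 0 ∨ IsHorizDir A z v ∨ IsVertDir B z v)

lemma IsWebOn.mono (h : IsWebOn ω E A B U') (hU : U ⊆ U') : IsWebOn ω E A B U :=
  fun z hz => h z (hU hz)

lemma IsWebOn.exists_isWebCurve (h : IsWebOn ω E A B U) {γ : ℝ → ℝ × ℝ} {I : Set ℝ}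
    (hγ : IsIntegralCurveOnBDE ω γ I) (hU : ∀ t ∈ I, E.symm (γ t) ∈ U) :
    ∃ γ', IsWebCurve A B (fun t => E.symm (γ t)) γ' I := by
  obtain ⟨-, dγ, hcont, hdγ⟩ := hγ
  have hne : ∀ t ∈ I, E.symm (dγ t) ≠ 0 := fun t ht => by simpa using (hdγ t ht).2.1
  refine ⟨fun t => E.symm (dγ t), fun t ht => ?_, E.symm.continuous.comp_continuousOn hcont, hne,
    fun t ht => (h _ (hU t ht) _ (hne t ht)).1 (by simpa using (hdγ t ht).2.2)⟩
  exact (E.symm : ℝ × ℝ →L[ℝ] ℂ).hasFDerivAt.comp_hasDerivAt t (hdγ t ht).1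

lemma IsWebOn.isIntegralCurveOnBDE (h : IsWebOn ω E A B U) {γ γ' : ℝ → ℂ} {a b : ℝ}
    (hγ : IsWebCurve A B γ γ' (Ioo a b)) (hU : ∀ t ∈ Ioo a b, γ t ∈ U) :
    IsIntegralCurveOnBDE ω (fun t => E (γ t)) (Ioo a b) := by
  refine ⟨⟨a, b, rfl⟩, fun t => E (γ' t), E.continuous.comp_continuousOn hγ.cont, fun t ht => ?_⟩
  exact ⟨(E : ℂ →L[ℝ] ℝ × ℝ).hasFDerivAt.comp_hasDerivAt t (hγ.der t ht),
    by simpa using hγ.ne t ht, (h _ (hU t ht) _ (hγ.ne t ht)).2 (hγ.dir t ht)⟩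

lemma isIntegralCurveOnBDE_empty (ω : ℝ × ℝ → ℝ × ℝ → ℝ) :
    IsIntegralCurveOnBDE ω (fun _ => 0) (∅ : Set ℝ) :=
  ⟨⟨0, 0, by simp⟩, fun _ => 0, by simp, by simp⟩

lemma isSmallSlopePair_zero : IsSmallSlopePair 0 1 (fun _ => 0) (fun _ => 0) := by
  constructor <;> constructor <;> simp

lemma straighten_zero_slopes (z : ℂ) : straighten (fun _ => 0) (fun _ => 0) z = z := by
  simpa [sub_eq_zero] using norm_straighten_sub_le_sq isSmallSlopePair_zero z

lemma exists_isWebCurve_image_eq (g : IsSmallSlopePair M R A B)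
    (g' : IsSmallSlopePair M' R' A' B') {k : ℂ → ℂ}
    (hk : ∀ z, straighten A' B' (k z) = straighten A B z) {γ γ' : ℝ → ℂ} {a b C : ℝ} (hab : a < b)
    (hγ : IsWebCurve A B γ γ' (Ioo a b)) (hC : ∀ t ∈ Ioo a b, ‖γ t‖ ≤ C) :
    ∃ (σ σ' : ℝ → ℂ) (a' b' : ℝ), IsWebCurve A' B' σ σ' (Ioo a' b') ∧
      k '' (γ '' Ioo a b) = σ '' Ioo a' b' := by
  obtain ⟨σ, σ', a', b', -, hσ, himage⟩ := (hγ.isModelArc_image g hab hC).isRealized g'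
  refine ⟨σ, σ', a', b', hσ, (injective_straighten g').image_injective ?_⟩
  simp only [himage, image_image, hk]

lemma exists_isIntegralCurveOnBDE_image_eq (g : IsSmallSlopePair M R A B)
    (g' : IsSmallSlopePair M' R' A' B') (hω : IsWebOn ω E A B U) (hΩ : IsWebOn Ω E' A' B' U')
    {C : ℝ} (hC : ∀ z ∈ U, ‖z‖ ≤ C) {k : ℂ → ℂ}
    (hk : ∀ z, straighten A' B' (k z) = straighten A B z) (hU : MapsTo k U U') {γ : ℝ → ℝ × ℝ}
    {I : Set ℝ} (hγ : IsIntegralCurveOnBDE ω γ I) (hγU : ∀ t ∈ I, E.symm (γ t) ∈ U) :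
    ∃ σ J, IsIntegralCurveOnBDE Ω σ J ∧
      (fun p => E' (k (E.symm p))) '' (γ '' I) = σ '' J := by
  obtain ⟨γ', hweb⟩ := hω.exists_isWebCurve hγ hγU
  obtain ⟨⟨a, b, rfl⟩, -⟩ := hγ
  rcases le_or_gt b a with hba | hab
  · exact ⟨_, _, isIntegralCurveOnBDE_empty Ω, by simp [Ioo_eq_empty hba.not_gt]⟩
  obtain ⟨σ, σ', a', b', hσ, himage⟩ :=
    exists_isWebCurve_image_eq g g' hk hab hweb fun t ht => hC _ (hγU t ht)
  rw [image_image] at himage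
  have hσU : ∀ t ∈ Ioo a' b', σ t ∈ U' := by
    rw [← forall_mem_image, ← himage, forall_mem_image]
    exact fun t ht => hU (hγU t ht)
  refine ⟨_, _, hΩ.isIntegralCurveOnBDE hσ hσU, ?_⟩
  rw [image_image, ← image_image E' σ, ← himage, image_image]

lemma topEquivAt0_of_homeomorph (H : ℂ ≃ₜ ℂ) (H0 : H 0 = 0) {r : ℝ} (hr : 0 < r)
    (hto : ∀ γ I, IsIntegralCurveOnBDE ω γ I → (∀ t ∈ I, E.symm (γ t) ∈ Metric.ball 0 r) →
      ∃ σ J, IsIntegralCurveOnBDE Ω σ J ∧ (fun p => E' (H (E.symm p))) '' (γ '' I) = σ '' J)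
    (hfrom : ∀ σ J, IsIntegralCurveOnBDE Ω σ J →
      (∀ t ∈ J, E'.symm (σ t) ∈ H.symm ⁻¹' Metric.ball 0 r) →
      ∃ γ I, IsIntegralCurveOnBDE ω γ I ∧ (fun p => E (H.symm (E'.symm p))) '' (σ '' J) = γ '' I) :
    TopEquivAt0 ω Ω := by
  have H0' : H.symm 0 = 0 := H.symm_apply_eq.2 H0.symm
  refine ⟨E.symm ⁻¹' Metric.ball 0 r, E'.symm ⁻¹' (H.symm ⁻¹' Metric.ball 0 r),
    fun p => E' (H (E.symm p)), fun p => E (H.symm (E'.symm p)),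
    Metric.isOpen_ball.preimage E.symm.continuous,
    (Metric.isOpen_ball.preimage H.symm.continuous).preimage E'.symm.continuous,
    by simp [hr], by simp [H0', hr], by simp [H0],
    (E'.continuous.comp (H.continuous.comp E.symm.continuous)).continuousOn,
    (E.continuous.comp (H.symm.continuous.comp E'.symm.continuous)).continuousOn,
    ⟨fun p hp => by simpa using hp, fun p _ q _ hpq => by simpa using hpq, fun p hp => ?_⟩,
    ⟨fun p _ => by simp, fun p _ => by simp⟩, hto, hfrom⟩
  exact ⟨E (H.symm (E'.symm p)), by simpa using hp, by simp⟩

lemma IsWebOn.topEquivAt0 (g : IsSmallSlopePair M R A B) {r : ℝ} (hr : 0 < r)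
    (hω : IsWebOn ω E A B (Metric.ball 0 r))
    (hΩ : IsWebOn Ω E' (fun _ => 0) (fun _ => 0) univ) : TopEquivAt0 ω Ω := by
  obtain ⟨H, hH⟩ := exists_homeomorph_eq_straighten g
  have hbound : ∀ z ∈ H.symm ⁻¹' Metric.ball 0 r, ‖z‖ ≤ 2 * r := fun z hz => by
    have hlt : ‖H.symm z‖ < r := by simpa using hz
    have hdist := norm_straighten_sub_le g (H.symm z)
    rw [← hH, H.apply_symm_apply] at hdist
    linarith [norm_sub_norm_le z (H.symm z), norm_nonneg (H.symm z)]
  refine topEquivAt0_of_homeomorph (E := E) (E' := E') H (by rw [hH, straighten_zero]) hr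
    (fun γ I hγ hγU => ?_) fun σ J hσ hσU => ?_
  · exact exists_isIntegralCurveOnBDE_image_eq g isSmallSlopePair_zero hω hΩ
      (fun z hz => (mem_ball_zero_iff.1 hz).le) (fun z => by rw [straighten_zero_slopes, hH])
      (mapsTo_univ _ _) hγ hγU
  · exact exists_isIntegralCurveOnBDE_image_eq isSmallSlopePair_zero g
      (hΩ.mono (subset_univ _)) hω hbound
      (fun z => by rw [straighten_zero_slopes, ← hH, H.apply_symm_apply])
      (mapsTo_preimage _ _) hσ hσU

lemma isHorizDir_or_isVertDir_zero_iff {z v : ℂ} (hz : z ≠ 0) (hv : v ≠ 0) :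
    IsHorizDir (fun _ => 0) z v ∨ IsVertDir (fun _ => 0) z v ↔ (z * v ^ 2).im = 0 := by
  simp only [IsHorizDir, IsVertDir, Complex.ofReal_zero, zero_mul, add_zero, one_pow, mul_one]
  refine ⟨?_, fun him => ?_⟩
  · rintro (⟨k, -, h⟩ | ⟨k, -, h⟩) <;> simp [h]
  · have hreal := eq_ofReal_re_of_im_eq_zero him
    have hne : (z * v ^ 2).re ≠ 0 := fun h0 =>
      mul_ne_zero hz (pow_ne_zero 2 hv) (by rw [hreal, h0, Complex.ofReal_zero])
    rcases hne.lt_or_gt with hneg | hpos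
    · exact .inr ⟨-(z * v ^ 2).re, neg_pos.2 hneg, by rwa [Complex.ofReal_neg, neg_neg]⟩
    · exact .inl ⟨(z * v ^ 2).re, hpos, hreal⟩

lemma isWebOn_star : IsWebOn (BDE (fun p => p.2) (fun p => -p.1) (fun p => -p.2))
    Complex.equivRealProdCLM (fun _ => 0) (fun _ => 0) univ := by
  intro z _ v hv
  have hform : BDE (fun p => p.2) (fun p => -p.1) (fun p => -p.2) (Complex.equivRealProdCLM z)
      (Complex.equivRealProdCLM v) = -(z * v ^ 2).im := by
    simp only [BDE, Complex.equivRealProdCLM_apply, pow_two, Complex.mul_re, Complex.mul_im]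
    ring
  rw [hform, neg_eq_zero]
  rcases eq_or_ne z 0 with rfl | hz
  · simp
  · simp only [hz, false_or, isHorizDir_or_isVertDir_zero_iff hz hv]

end Equivalence

section Umbilic

/-- Linear coordinates in which the asymptotic BDE `2x dy² + 4y dxdy - 6x dx²` of the elliptic cubic
becomes `-6 Im (z dz²)`. -/
def umbilicCoord : ℂ ≃L[ℝ] ℝ × ℝ := LinearEquiv.toContinuousLinearEquiv
  { toFun := fun z => (-z.im, √3 * z.re)
    invFun := fun p => ⟨p.2 / √3, -p.1⟩
    map_add' := fun z w => by ext <;> simp <;> ring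
    map_smul' := fun c z => by ext <;> simp; ring
    left_inv := fun z => by apply Complex.ext <;> simp
    right_inv := fun p => by
      ext <;> simp
      field_simp }

lemma umbilicCoord_apply (z : ℂ) : umbilicCoord z = (-z.im, √3 * z.re) := rfl

variable {f : ℝ × ℝ → ℝ}

/-- The trace-free part, as a complex coefficient of `dz²`, of the perturbation of the asymptotic
BDE caused by the terms of `f` beyond the cubic jet. -/
def umbilicPert (f : ℝ × ℝ → ℝ) (z : ℂ) : ℂ :=
  fyy (cubicRem f) (umbilicCoord z) • (1 / 4 : ℂ) +
    fxx (cubicRem f) (umbilicCoord z) • (-1 / 12 : ℂ) +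
    fxy (cubicRem f) (umbilicCoord z) • ((√3 / 6 : ℝ) * Complex.I)

/-- The trace part, as a coefficient of `‖dz‖²`, of the perturbation of the asymptotic BDE caused by
the terms of `f` beyond the cubic jet. -/
def umbilicNormPert (f : ℝ × ℝ → ℝ) (z : ℂ) : ℝ :=
  fyy (cubicRem f) (umbilicCoord z) * (1 / 4) + fxx (cubicRem f) (umbilicCoord z) * (1 / 12)

lemma asymBDE_umbilicCoord (hf : ContDiff ℝ 2 f) (z v : ℂ) :
    asymBDE f (umbilicCoord z) (umbilicCoord v) =
      6 * perturbedForm (umbilicPert f) (umbilicNormPert f) z v := by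
  have hnorm : ‖v‖ ^ 2 = v.re ^ 2 + v.im ^ 2 := by
    rw [← Complex.normSq_eq_norm_sq, Complex.normSq_apply]
    ring
  have hre : (umbilicPert f z).re = fyy (cubicRem f) (umbilicCoord z) / 4 -
      fxx (cubicRem f) (umbilicCoord z) / 12 := by
    simp [umbilicPert]
    ring
  have him : (umbilicPert f z).im = √3 / 6 * fxy (cubicRem f) (umbilicCoord z) := by
    simp [umbilicPert]
    ring
  simp only [asymBDE, BDE, fxx_eq hf, fxy_eq hf, fyy_eq hf, perturbedForm, umbilicNormPert, hnorm,
    pow_two, Complex.mul_re, Complex.mul_im, hre, him]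
  generalize fyy (cubicRem f) (umbilicCoord z) = a
  simp only [umbilicCoord_apply]
  linear_combination (2 * (-z.im) + a) * v.re * v.re * sqrt_three_mul_self
    - 4 * z.re * v.re * v.im * sqrt_three_mul_self

lemma exists_isQuadraticallyFlat_umbilicPert (hf : ContDiff ℝ 4 f)
    (hjet : HasJetAt0 f ellipticCubic 3) :
    ∃ r L, IsQuadraticallyFlat r L (umbilicPert f) ∧
      IsQuadraticallyFlat r L fun z => (umbilicNormPert f z : ℂ) := by
  obtain ⟨hxx, hxy, hyy⟩ := hasZeroOneJet_cubicRem hf hjet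
  have hxx' := hxx.comp_clm (umbilicCoord : ℂ →L[ℝ] ℝ × ℝ)
  have hxy' := hxy.comp_clm (umbilicCoord : ℂ →L[ℝ] ℝ × ℝ)
  have hyy' := hyy.comp_clm (umbilicCoord : ℂ →L[ℝ] ℝ × ℝ)
  obtain ⟨r₁, L₁, hflat₁⟩ := HasZeroOneJet.exists_isQuadraticallyFlat (G := umbilicPert f)
    (((hyy'.smul_const _).add (hxx'.smul_const _)).add (hxy'.smul_const _))
  have hnorm : HasZeroOneJet fun z => (umbilicNormPert f z : ℂ) := by
    convert! (hyy'.smul_const (1 / 4 : ℂ)).add (hxx'.smul_const (1 / 12 : ℂ)) using 2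
    simp [umbilicNormPert]
  obtain ⟨r₂, L₂, hflat₂⟩ := hnorm.exists_isQuadraticallyFlat
  have hr : 0 < min r₁ r₂ := lt_min hflat₁.pos hflat₂.pos
  exact ⟨min r₁ r₂, max L₁ L₂, hflat₁.mono hr (min_le_left _ _) (le_max_left _ _),
    hflat₂.mono hr (min_le_right _ _) (le_max_right _ _)⟩

lemma asymBDE_zero (hf : ContDiff ℝ 4 f) (hjet : HasJetAt0 f ellipticCubic 3) (v : ℝ × ℝ) :
    asymBDE f 0 v = 0 := by
  have hf2 : ContDiff ℝ 2 f := hf.of_le (by norm_num)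
  obtain ⟨hxx, hxy, hyy⟩ := hasZeroOneJet_cubicRem hf hjet
  simp [asymBDE, BDE, fxx_eq hf2, fxy_eq hf2, fyy_eq hf2, hxx.zero, hxy.zero, hyy.zero]

lemma topEquivAt0_star (hf : ContDiff ℝ 4 f) (hjet : HasJetAt0 f ellipticCubic 3) :
    TopEquivAt0 (asymBDE f) (BDE (fun p => p.2) (fun p => -p.1) (fun p => -p.2)) := by
  obtain ⟨r, L, hflat, hflat'⟩ := exists_isQuadraticallyFlat_umbilicPert hf hjet
  obtain ⟨M, R, A, B, g, hdir⟩ := exists_isSmallSlopePair hflat hflat'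
  refine IsWebOn.topEquivAt0 (E := umbilicCoord) g (half_pos g.horiz.pos) (fun z hz v hv => ?_)
    isWebOn_star
  rcases eq_or_ne z 0 with rfl | hz0
  · simp [asymBDE_zero hf hjet]
  · rw [asymBDE_umbilicCoord (hf.of_le (by norm_num)), ← hdir z hz0 (by simpa using hz) v hv]
    simp [hz0]

end Umbilic

lemma hasJetAt0_three_of_four {f : ℝ × ℝ → ℝ} {α β : ℝ} (hjet : HasJetAt0 f
      (fun p => p.1 * p.2 ^ 2 - p.1 ^ 3 + α * p.1 ^ 3 * p.2 + β * p.2 ^ 4) 4) :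
    HasJetAt0 f ellipticCubic 3 := by
  have hquartic : (fun p : ℝ × ℝ => α * p.1 ^ 3 * p.2 + β * p.2 ^ 4) =O[nhds 0]
      fun p => ‖p‖ ^ 4 := by
    have hfst : (fun p : ℝ × ℝ => p.1) =O[nhds 0] fun p => ‖p‖ :=
      isBigO_fst_prod'.norm_right
    have hsnd : (fun p : ℝ × ℝ => p.2) =O[nhds 0] fun p => ‖p‖ :=
      isBigO_snd_prod'.norm_right
    exact (((hfst.pow 3).const_mul_left α).mul hsnd).add ((hsnd.pow 4).const_mul_left β)
  have hlt : (fun p : ℝ × ℝ => ‖p‖ ^ 4) =o[nhds 0] fun p => ‖p‖ ^ 3 :=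
    (isLittleO_pow_pow (by norm_num : 3 < 4)).comp_tendsto tendsto_norm_zero
  refine ((isLittleO_pow_of_succ hjet).add (hquartic.trans_isLittleO hlt)).congr_left fun p => ?_
  rw [ellipticCubic]
  ring

end StarBDE

open StarBDE in
theorem stmt8_general (f : ℝ × ℝ → ℝ) (hf : ContDiff ℝ 4 f)
    (hjet : HasJetAt0 f (fun p => p.1 * p.2 ^ 2 - p.1 ^ 3) 3) :
    bdeDiscr f 0 = 0 ∧
    (pdx (bdeDiscr f) 0, pdy (bdeDiscr f) 0) = (0, 0) ∧
    HasJetAt0 (bdeDiscr f) (fun p => 4 * p.2 ^ 2 + 12 * p.1 ^ 2) 2 ∧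
    (∀ v : ℝ × ℝ, v ≠ 0 →
      pdx (pdx (bdeDiscr f)) 0 * v.1 ^ 2 + 2 * pdy (pdx (bdeDiscr f)) 0 * v.1 * v.2 +
        pdy (pdy (bdeDiscr f)) 0 * v.2 ^ 2 > 0) ∧
    (∃ U ∈ nhds (0 : ℝ × ℝ), ∀ p ∈ U, (bdeDiscr f p = 0 ↔ p = 0)) ∧
    TopEquivAt0 (asymBDE f) (BDE (fun p => p.2) (fun p => -p.1) (fun p => -p.2)) := by
  have hdiscr := hasJetAt0_bdeDiscr hf hjet
  obtain ⟨h0, hx, hy, hxx, hxy, hyy⟩ :=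
    partials_eq_of_hasJetAt0_sumSq (contDiff_bdeDiscr (n := 2) hf) hdiscr
  refine ⟨h0, by rw [hx, hy], hdiscr, fun v hv => ?_,
    isolated_zero_of_hasJetAt0_sumSq (by norm_num) (by norm_num) h0 hdiscr,
    topEquivAt0_star hf hjet⟩
  rw [hxx, hxy, hyy, mul_zero, zero_mul, zero_mul, add_zero]
  exact sumSq_pos (by norm_num) (by norm_num) hv

/-- class `Π^f_1` (three real root directions): for smooth `f` with
`j⁴f(0) = xy² − x³ + αx³y + βy⁴`, the discriminant `δ` vanishes to first order
at `0`, `j²δ(0) = 4y² + 12x²` (so `Hess δ(0)` is positive definite and the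
origin is an isolated point of the parabolic set), and the asymptotic BDE of
`f` is topologically equivalent at `0` to the star BDE
`y dy² − 2x dxdy − y dx² = 0`. -/
theorem stmt8 (α β : ℝ) (f : ℝ × ℝ → ℝ) (hf : ContDiff ℝ (⊤ : ℕ∞) f)
    (hjet : HasJetAt0 f
      (fun p => p.1 * p.2 ^ 2 - p.1 ^ 3 + α * p.1 ^ 3 * p.2 + β * p.2 ^ 4) 4) :
    bdeDiscr f 0 = 0 ∧
    (pdx (bdeDiscr f) 0, pdy (bdeDiscr f) 0) = (0, 0) ∧
    HasJetAt0 (bdeDiscr f) (fun p => 4 * p.2 ^ 2 + 12 * p.1 ^ 2) 2 ∧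
    -- the Hessian of δ at 0 is positive definite
    (∀ v : ℝ × ℝ, v ≠ 0 →
      pdx (pdx (bdeDiscr f)) 0 * v.1 ^ 2 + 2 * pdy (pdx (bdeDiscr f)) 0 * v.1 * v.2 +
        pdy (pdy (bdeDiscr f)) 0 * v.2 ^ 2 > 0) ∧
    -- the origin is an isolated point of the parabolic set
    (∃ U ∈ nhds (0 : ℝ × ℝ), ∀ p ∈ U, (bdeDiscr f p = 0 ↔ p = 0)) ∧
    TopEquivAt0 (asymBDE f)
      (BDE (fun p => p.2) (fun p => -p.1) (fun p => -p.2)) :=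
  stmt8_general f (contDiff_infty.1 hf 4) (StarBDE.hasJetAt0_three_of_four hjet)
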